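/- arXiv:2111.08949 — 6 statements merged into one kernel-verified Lean document; each statement's English description precedes it below -/
import Mathlib

section
/- Let k ∈ ℕ and let λ_1, …, λ_k be positive integers, and set B = B(λ_1, …, λ_k). Then χ(ℝ^n_∞, B) = (d(ℤ, B)^{−1} + o(1))^n as n → ∞; that is, lim_{n→∞} χ(ℝ^n_∞, B)^{1/n} = d(ℤ, B)^{−1}. -/
open Set Filter

/-- The set `A` (in the metric space `β`) contains an isometric copy of the
metric (sub)space `M` (a subset of the metric space `α`). -/
def HasCopy {α β : Type*} [MetricSpace α] [MetricSpace β] (M : Set α) (A : Set β) : Prop :=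
  ∃ f : α → β, (∀ x ∈ M, ∀ y ∈ M, dist (f x) (f y) = dist x y) ∧ f '' M ⊆ A

/-- The chromatic number of `ℝ^n` with the max-norm metric and forbidden subspace `M`:
the least number of colours such that some colouring has no monochromatic copy of `M`. -/
noncomputable def chrom {α : Type*} [MetricSpace α] (M : Set α) (n : ℕ) : ℕ :=
  sInf {N : ℕ | ∃ c : (Fin n → ℝ) → Fin N, ∀ i : Fin N, ¬ HasCopy M {x | c x = i}}

/-- The integer baton `B(λ₁,…,λ_k)`: the set of partial sums `σ₀,…,σ_k`. -/
def batonZ (lam : ℕ → ℤ) (k : ℕ) : Set ℤ :=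
  (fun r => ∑ j ∈ Finset.range r, lam j) '' Set.Iic k

/-- `A ⊆ ℤ` is `S`-tr-free: it contains no translate of `S` and no translate of `-S`. -/
def TrFreeZ (S A : Set ℤ) : Prop :=
  ∀ x : ℤ, ¬ ((fun s => s + x) '' S ⊆ A) ∧ ¬ ((fun s => -s + x) '' S ⊆ A)

/-- The upper density of a set of integers. -/
noncomputable def upperDensity (A : Set ℤ) : ℝ :=
  Filter.limsup
    (fun N : ℕ => ((A ∩ Set.Icc (-(N : ℤ)) (N : ℤ)).ncard : ℝ) / (2 * N + 1)) Filter.atTop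

/-- `d(ℤ, S)`: the supremum of upper densities of `S`-tr-free subsets of `ℤ`. -/
noncomputable def densZ (S : Set ℤ) : ℝ :=
  sSup (upperDensity '' {A : Set ℤ | TrFreeZ S A})


/-- strict order used in the chain decomposition -/
def prec {n : ℕ} (a b : Fin (n + 1) → ℤ) : Prop :=
  a 0 < b 0 ∧ ∀ i, |a i - b i| ≤ b 0 - a 0

theorem prec_trans {n : ℕ} {a b c : Fin (n + 1) → ℤ} (h1 : prec a b) (h2 : prec b c) :
    prec a c := by
  refine ⟨h1.1.trans h2.1, fun i => ?_⟩
  have e1 := h1.2 i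
  have e2 := h2.2 i
  rw [abs_le] at *
  constructor <;> linarith [e1.1, e1.2, e2.1, e2.2]

theorem dist_of_prec {n : ℕ} {a b : Fin (n + 1) → ℤ} (h : prec a b) :
    dist a b = |((a 0 : ℤ) : ℝ) - b 0| := by
  apply le_antisymm
  · rw [dist_pi_le_iff (abs_nonneg _)]
    intro i
    rw [Int.dist_eq]
    have := h.2 i
    have h0 : |a 0 - b 0| = b 0 - a 0 := by
      rw [abs_sub_comm]; exact abs_of_pos (by linarith [h.1])
    rw [← h0] at this
    exact_mod_cast this
  · have := dist_le_pi_dist a b 0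
    rwa [Int.dist_eq] at this

theorem dist_tail {n : ℕ} {a b : Fin (n + 1) → ℤ} (h1 : ¬ prec a b) (h2 : ¬ prec b a) :
    dist a b = dist (Fin.tail a) (Fin.tail b) := by
  have key : |a 0 - b 0| ≤ 0 ∨ ∃ i : Fin n, |a 0 - b 0| ≤ |a i.succ - b i.succ| := by
    by_contra hcon
    push Not at hcon
    obtain ⟨hc0, hc⟩ := hcon
    have hne : a 0 ≠ b 0 := by
      intro h; simp [h] at hc0
    rcases lt_or_gt_of_ne hne with h | h
    · apply h1
      have e : |a 0 - b 0| = b 0 - a 0 := by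
        rw [abs_sub_comm]; exact abs_of_pos (by linarith)
      refine ⟨h, fun i => ?_⟩
      refine Fin.cases e.le (fun i => ?_) i
      rw [← e]; exact (hc i).le
    · apply h2
      have e : |a 0 - b 0| = a 0 - b 0 := abs_of_pos (by linarith)
      refine ⟨h, fun i => ?_⟩
      rw [abs_sub_comm]
      refine Fin.cases e.le (fun i => ?_) i
      rw [← e]; exact (hc i).le
  apply le_antisymm
  · rw [dist_pi_le_iff dist_nonneg]
    intro i
    have hs : ∀ i : Fin n, dist (a i.succ) (b i.succ) ≤ dist (Fin.tail a) (Fin.tail b) :=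
      fun i => dist_le_pi_dist (Fin.tail a) (Fin.tail b) i
    refine Fin.cases ?_ hs i
    rcases key with h | ⟨i, h⟩
    · have : a 0 = b 0 := by
        have := abs_nonpos_iff.mp h; linarith
      rw [this, dist_self]; exact dist_nonneg
    · refine le_trans ?_ (hs i)
      rw [Int.dist_eq, Int.dist_eq]
      exact_mod_cast h
  · rw [dist_pi_le_iff dist_nonneg]
    intro i
    exact dist_le_pi_dist a b i.succ

open Classical in
/-- chains of `A` with top element `a` -/
noncomputable def chainsTo {n : ℕ} (A : Finset (Fin (n + 1) → ℤ)) (a : Fin (n + 1) → ℤ) :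
    Finset (Finset (Fin (n + 1) → ℤ)) :=
  A.powerset.filter fun C => (∀ c ∈ C, ∀ c' ∈ C, c ≠ c' → prec c c' ∨ prec c' c) ∧
    a ∈ C ∧ ∀ c ∈ C, c = a ∨ prec c a

/-- height of `a` in `A` -/
noncomputable def ht {n : ℕ} (A : Finset (Fin (n + 1) → ℤ)) (a : Fin (n + 1) → ℤ) : ℕ :=
  (chainsTo A a).sup Finset.card

theorem singleton_mem_chainsTo {n : ℕ} {A : Finset (Fin (n + 1) → ℤ)} {a : Fin (n + 1) → ℤ}
    (ha : a ∈ A) : {a} ∈ chainsTo A a := by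
  classical
  simp [chainsTo, ha]

theorem ht_pos {n : ℕ} {A : Finset (Fin (n + 1) → ℤ)} {a : Fin (n + 1) → ℤ}
    (ha : a ∈ A) : 1 ≤ ht A a := by
  have := Finset.le_sup (f := Finset.card) (singleton_mem_chainsTo ha)
  simpa [ht] using this

theorem ht_lt {n : ℕ} {A : Finset (Fin (n + 1) → ℤ)} {a b : Fin (n + 1) → ℤ}
    (ha : a ∈ A) (hb : b ∈ A) (h : prec a b) : ht A a < ht A b := by
  classical
  obtain ⟨C, hC, hCc⟩ := Finset.exists_mem_eq_sup (chainsTo A a)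
    ⟨_, singleton_mem_chainsTo ha⟩ Finset.card
  have hC' := hC
  simp only [chainsTo, Finset.mem_filter, Finset.mem_powerset] at hC'
  obtain ⟨hCA, hch, haC, htop⟩ := hC'
  have hall : ∀ c ∈ C, prec c b := by
    intro c hc
    rcases htop c hc with rfl | h'
    · exact h
    · exact prec_trans h' h
  have hbC : b ∉ C := fun hb' => lt_irrefl _ (hall b hb').1
  have hmem : insert b C ∈ chainsTo A b := by
    simp only [chainsTo, Finset.mem_filter, Finset.mem_powerset]
    refine ⟨?_, ?_, Finset.mem_insert_self _ _, ?_⟩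
    · intro x hx
      rcases Finset.mem_insert.mp hx with rfl | hx
      · exact hb
      · exact hCA hx
    · intro c hc c' hc' hne
      rcases Finset.mem_insert.mp hc with h1 | h1 <;> rcases Finset.mem_insert.mp hc' with h2 | h2
      · exact absurd (h1.trans h2.symm) hne
      · exact Or.inr (h1 ▸ hall _ h2)
      · exact Or.inl (h2 ▸ hall _ h1)
      · exact hch c h1 c' h2 hne
    · intro c hc
      rcases Finset.mem_insert.mp hc with rfl | hc
      · exact Or.inl rfl
      · exact Or.inr (hall _ hc)
  have := Finset.le_sup (f := Finset.card) hmem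
  rw [Finset.card_insert_of_notMem hbC] at this
  unfold ht
  rw [hCc]
  omega

theorem HasCopy.mono' {α β : Type*} [MetricSpace α] [MetricSpace β] {M : Set α} {A A' : Set β}
    (h : HasCopy M A) (hs : A ⊆ A') : HasCopy M A' := by
  obtain ⟨f, h1, h2⟩ := h
  exact ⟨f, h1, h2.trans hs⟩

theorem ht_le {n : ℕ} {S : Set ℤ} {I : Finset ℤ} {M : ℕ}
    (hM : ∀ F : Finset ℤ, F ⊆ I → TrFreeZ S (F : Set ℤ) → F.card ≤ M)
    {A : Finset (Fin (n + 1) → ℤ)} (hA : ∀ a ∈ A, ∀ i, a i ∈ I)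
    (hfree : ¬ HasCopy S (A : Set (Fin (n + 1) → ℤ))) (a : Fin (n + 1) → ℤ) : ht A a ≤ M := by
  classical
  unfold ht
  apply Finset.sup_le
  intro C hC
  simp only [chainsTo, Finset.mem_filter, Finset.mem_powerset] at hC
  obtain ⟨hCA, hch, -, -⟩ := hC
  have hdist : ∀ c ∈ C, ∀ c' ∈ C, dist c c' = |((c 0 : ℤ) : ℝ) - c' 0| := by
    intro c hc c' hc'
    by_cases hne : c = c'
    · subst hne; simp
    · rcases hch c hc c' hc' hne with h | h
      · exact dist_of_prec h
      · rw [dist_comm, dist_of_prec h, abs_sub_comm]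
  have hinj : Set.InjOn (fun c : Fin (n + 1) → ℤ => c 0) (C : Set (Fin (n + 1) → ℤ)) := by
    intro c hc c' hc' h
    have := hdist c hc c' hc'
    simp only at h
    rw [h, sub_self, abs_zero] at this
    exact dist_eq_zero.mp this
  rw [← Finset.card_image_of_injOn hinj]
  apply hM
  · intro x hx
    obtain ⟨c, hc, rfl⟩ := Finset.mem_image.mp hx
    exact hA c (hCA hc) 0
  · have main : ∀ e : ℤ → ℤ, (∀ s t, |e s - e t| = |s - t|) →
        ¬ (e '' S ⊆ ((C.image fun c => c 0 : Finset ℤ) : Set ℤ)) := by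
      intro e he hsub
      have hch : ∀ s : ℤ, ∃ c : Fin (n + 1) → ℤ, s ∈ S → c ∈ C ∧ c 0 = e s := by
        intro s
        by_cases hs : s ∈ S
        · have := hsub ⟨s, hs, rfl⟩
          obtain ⟨c, hc, h⟩ := Finset.mem_image.mp (Finset.mem_coe.mp this)
          exact ⟨c, fun _ => ⟨hc, h⟩⟩
        · exact ⟨0, fun h => absurd h hs⟩
      choose f hf using hch
      apply hfree
      refine ⟨f, ?_, ?_⟩
      · intro s hs t ht
        rw [hdist _ (hf s hs).1 _ (hf t ht).1, (hf s hs).2, (hf t ht).2, Int.dist_eq]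
        exact_mod_cast he s t
      · rintro _ ⟨s, hs, rfl⟩
        exact hCA (hf s hs).1
    intro x
    refine ⟨main _ ?_, main _ ?_⟩
    · intro s t; congr 1; ring
    · intro s t; rw [abs_sub_comm s t]; congr 1; ring

theorem card_le_pow {S : Set ℤ} {I : Finset ℤ} {M : ℕ}
    (hM : ∀ F : Finset ℤ, F ⊆ I → TrFreeZ S (F : Set ℤ) → F.card ≤ M) (n : ℕ) :
    ∀ A : Finset (Fin n → ℤ), (∀ a ∈ A, ∀ i, a i ∈ I) →
      ¬ HasCopy S (A : Set (Fin n → ℤ)) → A.card ≤ M ^ n := by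
  classical
  induction n with
  | zero =>
    intro A _ _
    simpa using Finset.card_le_one_of_subsingleton A
  | succ n ih =>
    intro A hA hfree
    have hlev : ∀ j ∈ Finset.Icc 1 M, (A.filter fun a => ht A a = j).card ≤ M ^ n := by
      intro j _
      set G := A.filter fun a => ht A a = j with hG
      have hdist : ∀ a ∈ G, ∀ b ∈ G, dist a b = dist (Fin.tail a) (Fin.tail b) := by
        intro a ha b hb
        rw [hG, Finset.mem_filter] at ha hb
        apply dist_tail
        · intro h
          have := ht_lt ha.1 hb.1 h
          omega
        · intro h
          have := ht_lt hb.1 ha.1 h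
          omega
      have hinj : Set.InjOn (fun a : Fin (n + 1) → ℤ => (Fin.tail a : Fin n → ℤ))
          (G : Set (Fin (n + 1) → ℤ)) := by
        intro a ha b hb h
        have := hdist a ha b hb
        simp only at h
        rw [h, dist_self] at this
        exact dist_eq_zero.mp this
      rw [← Finset.card_image_of_injOn hinj]
      apply ih
      · intro y hy i
        obtain ⟨a, ha, rfl⟩ := Finset.mem_image.mp hy
        exact hA a (Finset.mem_filter.mp ha).1 i.succ
      · rintro ⟨f, hf1, hf2⟩
        have hch : ∀ s : ℤ, ∃ c : Fin (n + 1) → ℤ, s ∈ S → c ∈ G ∧ (Fin.tail c : Fin n → ℤ) = f s := by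
          intro s
          by_cases hs : s ∈ S
          · have := hf2 ⟨s, hs, rfl⟩
            obtain ⟨c, hc, h⟩ := Finset.mem_image.mp (Finset.mem_coe.mp this)
            exact ⟨c, fun _ => ⟨hc, h⟩⟩
          · exact ⟨0, fun h => absurd h hs⟩
        choose g hg using hch
        apply hfree
        refine ⟨g, ?_, ?_⟩
        · intro s hs t ht
          rw [hdist _ (hg s hs).1 _ (hg t ht).1, (hg s hs).2, (hg t ht).2]
          exact hf1 s hs t ht
        · rintro _ ⟨s, hs, rfl⟩
          exact (Finset.mem_filter.mp (hg s hs).1).1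
    have hmaps : ∀ a ∈ A, ht A a ∈ Finset.Icc 1 M := fun a ha =>
      Finset.mem_Icc.mpr ⟨ht_pos ha, ht_le hM hA hfree a⟩
    rw [Finset.card_eq_sum_card_fiberwise hmaps]
    calc _ ≤ ∑ j ∈ Finset.Icc 1 M, M ^ n := Finset.sum_le_sum hlev
      _ = M ^ (n + 1) := by simp [pow_succ, mul_comm]

/-- lower bound on the number of colours -/
theorem colours_lower {S : Set ℤ} {I : Finset ℤ} {M : ℕ}
    (hM : ∀ F : Finset ℤ, F ⊆ I → TrFreeZ S (F : Set ℤ) → F.card ≤ M) (n N : ℕ)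
    (c : (Fin n → ℝ) → Fin N)
    (hc : ∀ i : Fin N, ¬ HasCopy ((fun z : ℤ => (z : ℝ)) '' S) {x | c x = i}) :
    I.card ^ n ≤ N * M ^ n := by
  classical
  let Q : Finset (Fin n → ℤ) := Fintype.piFinset fun _ => I
  have hQ : Q.card = I.card ^ n := by simp [Q, Fintype.card_piFinset]
  rw [← hQ, Finset.card_eq_sum_card_fiberwise
    (f := fun a : Fin n → ℤ => c (fun i => (a i : ℝ))) (t := Finset.univ) (fun _ _ => Finset.mem_univ _)]
  calc _ ≤ ∑ j : Fin N, M ^ n := by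
        apply Finset.sum_le_sum
        intro j _
        apply card_le_pow hM
        · intro a ha i
          exact Fintype.mem_piFinset.mp (Finset.mem_filter.mp ha).1 i
        · rintro ⟨f, hf1, hf2⟩
          apply hc j
          refine ⟨fun r i => (f ⌊r⌋ i : ℝ), ?_, ?_⟩
          · rintro _ ⟨s, hs, rfl⟩ _ ⟨t, ht, rfl⟩
            have := hf1 s hs t ht
            simp only [Int.floor_intCast]
            rw [Int.dist_cast_real, ← this]
            rw [dist_pi_def, dist_pi_def]
            congr 2
          · rintro _ ⟨_, ⟨s, hs, rfl⟩, rfl⟩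
            have := hf2 ⟨s, hs, rfl⟩
            simpa using (Finset.mem_filter.mp (Finset.mem_coe.mp this)).2
    _ = N * M ^ n := by simp

/-- the periodic extension of a set of integers -/
def perExt (F : Set ℤ) (P : ℤ) : Set ℤ := {x | ∃ f ∈ F, ∃ i : ℤ, x = f + P * i}

theorem trFree_perExt {S F : Set ℤ} {D a b P : ℤ} (h0 : (0 : ℤ) ∈ S)
    (hS : ∀ s ∈ S, 0 ≤ s ∧ s ≤ D) (hF : F ⊆ Set.Icc a b) (hP : b - a + D < P)
    (hfree : TrFreeZ S F) : TrFreeZ S (perExt F P) := by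
  have main : ∀ e : ℤ → ℤ, (∀ s ∈ S, |e s - e 0| ≤ D) → e '' S ⊆ perExt F P →
      ∃ w : ℤ, ∀ s ∈ S, e s - w ∈ F := by
    intro e he hsub
    obtain ⟨f0, hf0, i0, h0e⟩ := hsub ⟨0, h0, rfl⟩
    refine ⟨P * i0, fun s hs => ?_⟩
    obtain ⟨f, hf, i, hi⟩ := hsub ⟨s, hs, rfl⟩
    have h1 := he s hs
    have h2 := hF hf0
    have h3 := hF hf
    rw [abs_le] at h1
    have hii : i = i0 := by
      simp only [Set.mem_Icc] at h2 h3
      by_contra hne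
      rcases lt_or_gt_of_ne hne with h | h
      · nlinarith [h1.1, h1.2]
      · nlinarith [h1.1, h1.2]
    subst hii
    rw [hi]
    simpa using hf
  intro x
  constructor
  · intro hsub
    obtain ⟨w, hw⟩ := main _ (by
      intro s hs
      have := hS s hs
      rw [abs_le]; constructor <;> linarith) hsub
    apply (hfree (x - w)).1
    rintro _ ⟨s, hs, rfl⟩
    have := hw s hs
    simp only at this ⊢
    convert this using 1; ring
  · intro hsub
    obtain ⟨w, hw⟩ := main _ (by
      intro s hs
      have := hS s hs
      rw [abs_le]; constructor <;> linarith) hsub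
    apply (hfree (x - w)).2
    rintro _ ⟨s, hs, rfl⟩
    have := hw s hs
    simp only at this ⊢
    convert this using 1; ring

theorem ratio_le_one (A : Set ℤ) (N : ℕ) :
    ((A ∩ Set.Icc (-(N : ℤ)) (N : ℤ)).ncard : ℝ) / (2 * N + 1) ≤ 1 := by
  have h : (A ∩ Set.Icc (-(N : ℤ)) (N : ℤ)).ncard ≤ 2 * N + 1 := by
    calc _ ≤ (Set.Icc (-(N : ℤ)) (N : ℤ)).ncard :=
          Set.ncard_le_ncard Set.inter_subset_right (Set.finite_Icc _ _)
      _ = 2 * N + 1 := by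
          rw [← Finset.coe_Icc, Set.ncard_coe_finset, Int.card_Icc]
          omega
  rw [div_le_one (by positivity)]
  exact_mod_cast h

theorem ratio_nonneg (A : Set ℤ) (N : ℕ) :
    0 ≤ ((A ∩ Set.Icc (-(N : ℤ)) (N : ℤ)).ncard : ℝ) / (2 * N + 1) := by positivity

theorem ratio_bdd (A : Set ℤ) : Filter.IsBoundedUnder (· ≤ ·) Filter.atTop
    (fun N : ℕ => ((A ∩ Set.Icc (-(N : ℤ)) (N : ℤ)).ncard : ℝ) / (2 * N + 1)) :=
  Filter.isBoundedUnder_of ⟨1, ratio_le_one A⟩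

theorem ratio_cobdd (A : Set ℤ) : Filter.IsCoboundedUnder (· ≤ ·) Filter.atTop
    (fun N : ℕ => ((A ∩ Set.Icc (-(N : ℤ)) (N : ℤ)).ncard : ℝ) / (2 * N + 1)) :=
  Filter.IsBoundedUnder.isCoboundedUnder_le (Filter.isBoundedUnder_of ⟨0, ratio_nonneg A⟩)

theorem upperDensity_le_one (A : Set ℤ) : upperDensity A ≤ 1 :=
  Filter.limsup_le_of_le (ratio_cobdd A) (Filter.Eventually.of_forall (ratio_le_one A))

theorem densZ_bdd (S : Set ℤ) : BddAbove (upperDensity '' {A : Set ℤ | TrFreeZ S A}) :=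
  ⟨1, by rintro _ ⟨A, _, rfl⟩; exact upperDensity_le_one A⟩

/-- finite tr-free sets give a lower bound for the density -/
theorem card_le_densZ {S : Set ℤ} {D : ℤ} (h0 : (0 : ℤ) ∈ S) 
    (hS : ∀ s ∈ S, 0 ≤ s ∧ s ≤ D) (t : ℕ) (F : Finset ℤ)
    (hF : F ⊆ Finset.Icc (-(t : ℤ)) (t - D)) (hfree : TrFreeZ S (F : Set ℤ)) :
    (F.card : ℝ) ≤ densZ S * (2 * t + 1) := by
  have hD : 0 ≤ D := (hS 0 h0).2
  have hE : TrFreeZ S (perExt F (2 * t + 1)) :=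
    trFree_perExt h0 hS (a := -t) (b := t - D) (by
      intro x hx; simpa using hF hx) (by linarith) hfree
  have h1 : (F.card : ℝ) / (2 * t + 1) ≤ upperDensity (perExt F (2 * t + 1)) := by
    apply Filter.le_limsup_of_frequently_le _ (ratio_bdd _)
    rw [Filter.frequently_atTop]
    intro a
    refine ⟨t + (2 * t + 1) * a, by nlinarith, ?_⟩
    have hcard : F.card * (2 * a + 1) ≤ ((perExt (F : Set ℤ) (2 * t + 1)) ∩
        Set.Icc (-((t + (2 * t + 1) * a : ℕ) : ℤ)) ((t + (2 * t + 1) * a : ℕ) : ℤ)).ncard := by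
      have e1 : F.card * (2 * a + 1) = (F ×ˢ Finset.Icc (-(a : ℤ)) a).card := by
        rw [Finset.card_product, Int.card_Icc]; congr 1; omega
      have hinj : Set.InjOn (fun p : ℤ × ℤ => p.1 + (2 * t + 1) * p.2)
          ((F ×ˢ Finset.Icc (-(a : ℤ)) a : Finset (ℤ × ℤ)) : Set (ℤ × ℤ)) := by
        rintro ⟨f, i⟩ hp ⟨f', i'⟩ hp' h
        simp only [Finset.coe_product, Set.mem_prod, Finset.mem_coe] at hp hp' h
        have g1 := Finset.mem_Icc.mp (hF hp.1)
        have g2 := Finset.mem_Icc.mp (hF hp'.1)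
        have hi : i = i' := by
          by_contra hne
          rcases lt_or_gt_of_ne hne with hh | hh
          · nlinarith [g1.1, g1.2, g2.1, g2.2]
          · nlinarith [g1.1, g1.2, g2.1, g2.2]
        subst hi
        simp at h
        rw [h]
      rw [e1, ← Finset.card_image_of_injOn hinj, ← Set.ncard_coe_finset]
      apply Set.ncard_le_ncard _ ((Set.finite_Icc _ _).inter_of_right _)
      intro x hx
      obtain ⟨⟨f, i⟩, hp, rfl⟩ := Finset.mem_image.mp (Finset.mem_coe.mp hx)
      rw [Finset.mem_product] at hp
      have g1 := Finset.mem_Icc.mp (hF hp.1)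
      have g2 := Finset.mem_Icc.mp hp.2
      refine ⟨⟨f, hp.1, i, rfl⟩, ?_⟩
      simp only [Set.mem_Icc] at *
      push_cast
      constructor <;> nlinarith [g1.1, g1.2, g2.1, g2.2]
    rw [div_le_div_iff₀ (by positivity) (by positivity)]
    have hc : (F.card : ℝ) * (2 * a + 1) ≤ (((perExt (F : Set ℤ) (2 * t + 1)) ∩
        Set.Icc (-((t + (2 * t + 1) * a : ℕ) : ℤ)) ((t + (2 * t + 1) * a : ℕ) : ℤ)).ncard : ℝ) := by
      exact_mod_cast hcard
    have ht : (0 : ℝ) ≤ 2 * t + 1 := by positivity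
    have := mul_le_mul_of_nonneg_right hc ht
    refine le_trans (le_of_eq ?_) this
    push_cast; ring
  have h2 : upperDensity (perExt F (2 * t + 1)) ≤ densZ S :=
    le_csSup (densZ_bdd S) ⟨_, hE, rfl⟩
  have := h1.trans h2
  rwa [div_le_iff₀ (by positivity)] at this

theorem trFree_singleton {S : Set ℤ} {D : ℤ} (h0 : (0 : ℤ) ∈ S) (hDS : D ∈ S) (hD : 0 < D) (z : ℤ) :
    TrFreeZ S {z} := by
  intro x
  constructor <;> intro h
  · have h1 := h ⟨0, h0, rfl⟩
    have h2 := h ⟨D, hDS, rfl⟩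
    simp at h1 h2
    omega
  · have h1 := h ⟨0, h0, rfl⟩
    have h2 := h ⟨D, hDS, rfl⟩
    simp at h1 h2
    omega

theorem densZ_pos {S : Set ℤ} {D : ℤ} (h0 : (0 : ℤ) ∈ S) (hDS : D ∈ S) (hD : 0 < D)
    (hS : ∀ s ∈ S, 0 ≤ s ∧ s ≤ D) : 0 < densZ S := by
  have := card_le_densZ h0 hS D.toNat {0} (by
    intro x hx
    simp at hx
    subst hx
    simp [hD.le]) (by simpa using trFree_singleton h0 hDS hD 0)
  by_contra hneg
  push Not at hneg
  have h1 : (0 : ℝ) ≤ 2 * (D.toNat : ℝ) + 1 := by positivity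
  have h2 := mul_nonpos_of_nonpos_of_nonneg hneg h1
  simp at this
  linarith

/-- good finite tr-free sets exist -/
theorem exists_good {S : Set ℤ} {D : ℤ} (hD : 0 ≤ D) {c : ℝ} (hc : 0 < c) (hcd : c < densZ S) :
    ∃ (N : ℕ) (F : Finset ℤ), F ⊆ Finset.Icc (-(N : ℤ)) N ∧ TrFreeZ S (F : Set ℤ) ∧
      c * (2 * N + 1 + D) < F.card := by
  classical
  obtain ⟨c', h1, h2⟩ := exists_between hcd
  have hne : (upperDensity '' {A : Set ℤ | TrFreeZ S A}).Nonempty := by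
    by_contra hne
    rw [Set.not_nonempty_iff_eq_empty] at hne
    rw [densZ, hne, Real.sSup_empty] at hcd
    linarith
  obtain ⟨_, ⟨A, hA, rfl⟩, hA2⟩ := exists_lt_of_lt_csSup hne h2
  have hfr := Filter.frequently_lt_of_lt_limsup (ratio_cobdd A) hA2
  obtain ⟨K, hK⟩ := exists_nat_gt (c * D / (c' - c))
  obtain ⟨N, hN, hlt⟩ := (Filter.frequently_atTop.mp hfr) K
  refine ⟨N, (Finset.Icc (-(N : ℤ)) N).filter (· ∈ A), Finset.filter_subset _ _, ?_, ?_⟩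
  · intro x
    constructor <;> intro h
    · exact (hA x).1 (h.trans (by intro y hy; simp at hy; exact hy.2))
    · exact (hA x).2 (h.trans (by intro y hy; simp at hy; exact hy.2))
  · have e : (A ∩ Set.Icc (-(N : ℤ)) (N : ℤ)).ncard =
        ((Finset.Icc (-(N : ℤ)) N).filter (· ∈ A)).card := by
      rw [← Set.ncard_coe_finset]
      congr 1
      ext y; simp only [Set.mem_inter_iff, Set.mem_Icc, Finset.coe_filter, Finset.mem_Icc, Set.mem_setOf_eq]; tauto
    rw [e, lt_div_iff₀ (by positivity)] at hlt
    rw [div_lt_iff₀ (by linarith)] at hK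
    have hNK : (K : ℝ) ≤ N := by exact_mod_cast hN
    refine lt_trans ?_ hlt
    nlinarith

/-- one greedy step -/
theorem greedy_step {G : Type*} [AddCommGroup G] [Fintype G] [DecidableEq G] (T U : Finset G) :
    ∃ g : G, U.card * T.card ≤ Fintype.card G * (U.filter fun u => u - g ∈ T).card := by
  by_contra hcon
  push Not at hcon
  have hsum : ∑ g : G, (U.filter fun u => u - g ∈ T).card = U.card * T.card := by
    simp_rw [Finset.card_filter]
    rw [Finset.sum_comm]
    have : ∀ u ∈ U, (∑ g : G, if u - g ∈ T then 1 else 0) = T.card := by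
      intro u _
      rw [← Finset.card_filter]
      apply Finset.card_bij (fun g _ => u - g)
      · intro g hg; exact (Finset.mem_filter.mp hg).2
      · intro g _ g' _ h; exact sub_right_injective h
      · intro t ht
        exact ⟨u - t, by simp [ht], by simp⟩
    rw [Finset.sum_congr rfl this, Finset.sum_const, smul_eq_mul]
  have h2 : ∑ g : G, Fintype.card G * (U.filter fun u => u - g ∈ T).card <
      ∑ _g : G, U.card * T.card :=
    Finset.sum_lt_sum_of_nonempty ⟨0, Finset.mem_univ _⟩ (fun g _ => hcon g)
  rw [← Finset.mul_sum, hsum, Finset.sum_const, smul_eq_mul, Finset.card_univ] at h2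
  exact lt_irrefl _ h2

theorem greedy {G : Type*} [AddCommGroup G] [Fintype G] [DecidableEq G] (T : Finset G) (r : ℕ) :
    ∃ X : Fin r → G, (((Finset.univ : Finset G).filter fun u => ∀ j, u - X j ∉ T).card : ℝ) ≤
      Fintype.card G * (1 - (T.card : ℝ) / Fintype.card G) ^ r := by
  induction r with
  | zero =>
    refine ⟨fun j => 0, ?_⟩
    simp
  | succ r ih =>
    obtain ⟨X, hX⟩ := ih
    set U := (Finset.univ : Finset G).filter fun u => ∀ j, u - X j ∉ T with hU
    obtain ⟨g, hg⟩ := greedy_step T U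
    refine ⟨Fin.snoc X g, ?_⟩
    have hsub : ((Finset.univ : Finset G).filter fun u => ∀ j, u - (Fin.snoc X g : Fin (r + 1) → G) j ∉ T)
        ⊆ U.filter fun u => ¬ (u - g ∈ T) := by
      intro u hu
      simp only [Finset.mem_filter, Finset.mem_univ, true_and, hU] at hu ⊢
      refine ⟨fun j => ?_, ?_⟩
      · simpa using hu j.castSucc
      · simpa using hu (Fin.last r)
    have hcard := Finset.card_le_card hsub
    have hsplit := Finset.card_filter_add_card_filter_not (s := U) (fun u => u - g ∈ T)
    have hGpos : (0 : ℝ) < Fintype.card G := by exact_mod_cast Fintype.card_pos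
    have hg' : (U.card : ℝ) * T.card ≤ Fintype.card G * ((U.filter fun u => u - g ∈ T).card : ℝ) := by
      exact_mod_cast hg
    have hg2 : (U.card : ℝ) * ((T.card : ℝ) / Fintype.card G) ≤ ((U.filter fun u => u - g ∈ T).card : ℝ) := by
      rw [← mul_div_assoc, div_le_iff₀ hGpos]; linarith
    have hT : (T.card : ℝ) / Fintype.card G ≤ 1 := by
      rw [div_le_one hGpos]; exact_mod_cast Finset.card_le_univ T
    have hs' : ((U.filter fun u => u - g ∈ T).card : ℝ) + ((U.filter fun u => ¬ (u - g ∈ T)).card : ℝ)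
        = U.card := by exact_mod_cast hsplit
    have hc' : (((Finset.univ : Finset G).filter fun u =>
        ∀ j, u - (Fin.snoc X g : Fin (r + 1) → G) j ∉ T).card : ℝ)
        ≤ ((U.filter fun u => ¬ (u - g ∈ T)).card : ℝ) := by exact_mod_cast hcard
    calc _ ≤ (U.card : ℝ) * (1 - (T.card : ℝ) / Fintype.card G) := by linarith
      _ ≤ (Fintype.card G * (1 - (T.card : ℝ) / Fintype.card G) ^ r) *
          (1 - (T.card : ℝ) / Fintype.card G) := by
          apply mul_le_mul_of_nonneg_right hX; linarith
      _ = _ := by ring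

theorem exists_cover {G : Type*} [AddCommGroup G] [Fintype G] [DecidableEq G] (T : Finset G)
    (hT : T.Nonempty) :
    ∃ r : ℕ, (r : ℝ) ≤ (Fintype.card G / T.card : ℝ) * Real.log (Fintype.card G) + 1 ∧
      ∃ X : Fin r → G, ∀ u, ∃ j, u - X j ∈ T := by
  have hGpos : (0 : ℝ) < Fintype.card G := by exact_mod_cast Fintype.card_pos
  have hG1 : (1 : ℝ) ≤ Fintype.card G := by exact_mod_cast Fintype.card_pos
  have hTpos : (0 : ℝ) < T.card := by exact_mod_cast hT.card_pos
  have hTle : (T.card : ℝ) / Fintype.card G ≤ 1 := by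
      rw [div_le_one hGpos]; exact_mod_cast Finset.card_le_univ T
  set y := (Fintype.card G / T.card : ℝ) * Real.log (Fintype.card G) with hy
  have hy0 : 0 ≤ y := mul_nonneg (by positivity) (Real.log_nonneg hG1)
  refine ⟨⌊y⌋₊ + 1, by push_cast; linarith [Nat.floor_le hy0], ?_⟩
  obtain ⟨X, hX⟩ := greedy T (⌊y⌋₊ + 1)
  refine ⟨X, ?_⟩
  have hlt : (Fintype.card G : ℝ) * (1 - (T.card : ℝ) / Fintype.card G) ^ (⌊y⌋₊ + 1) < 1 := by
    have h1 : (1 - (T.card : ℝ) / Fintype.card G) ≤ Real.exp (-((T.card : ℝ) / Fintype.card G)) :=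
      Real.one_sub_le_exp_neg _
    have h2 := pow_le_pow_left₀ (by linarith) h1 (⌊y⌋₊ + 1)
    rw [← Real.exp_nat_mul] at h2
    have h3 : ((⌊y⌋₊ + 1 : ℕ) : ℝ) * (-((T.card : ℝ) / Fintype.card G)) <
        - Real.log (Fintype.card G) := by
      have h4 : y < ((⌊y⌋₊ + 1 : ℕ) : ℝ) := by push_cast; exact Nat.lt_floor_add_one y
      have h5 : y * ((T.card : ℝ) / Fintype.card G) = Real.log (Fintype.card G) := by
        rw [hy]; field_simp
      have h6 := mul_lt_mul_of_pos_right h4 (div_pos hTpos hGpos)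
      linarith
    have h7 := Real.exp_lt_exp.mpr h3
    rw [Real.exp_neg, Real.exp_log hGpos] at h7
    calc _ < (Fintype.card G : ℝ) * (Fintype.card G : ℝ)⁻¹ :=
          mul_lt_mul_of_pos_left (lt_of_le_of_lt h2 h7) hGpos
      _ = 1 := mul_inv_cancel₀ hGpos.ne'
  have h0 := lt_of_le_of_lt hX hlt
  have h0' : ((Finset.univ : Finset G).filter fun u => ∀ j, u - X j ∉ T).card = 0 := by
    have : ((Finset.univ : Finset G).filter fun u => ∀ j, u - X j ∉ T).card < 1 := by
      exact_mod_cast h0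
    omega
  intro u
  by_contra hu
  push Not at hu
  have : u ∈ ((Finset.univ : Finset G).filter fun u => ∀ j, u - X j ∉ T) := by simpa using hu
  rw [Finset.card_eq_zero] at h0'
  rw [h0'] at this
  simp at this

/-- a copy of `S` in `ℝ^n` is a translate of `±S` in some coordinate -/
theorem copy_coord {S : Set ℤ} {D : ℤ} (h0 : (0 : ℤ) ∈ S) (hDS : D ∈ S) (hD : 0 < D)
    (hS : ∀ s ∈ S, 0 ≤ s ∧ s ≤ D) {n : ℕ} (f : ℝ → (Fin n → ℝ))
    (hf : ∀ x ∈ (fun z : ℤ => (z : ℝ)) '' S, ∀ y ∈ (fun z : ℤ => (z : ℝ)) '' S,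
      dist (f x) (f y) = dist x y) :
    ∃ i : Fin n, (∀ s ∈ S, f s i = f 0 i + s) ∨ (∀ s ∈ S, f s i = f 0 i - s) := by
  have hd : ∀ s ∈ S, ∀ t ∈ S, ∀ i, |f s i - f t i| ≤ |(s : ℝ) - t| := by
    intro s hs t ht i
    have h1 := hf _ ⟨s, hs, rfl⟩ _ ⟨t, ht, rfl⟩
    have h2 := dist_le_pi_dist (f s) (f t) i
    simp only at h1
    rw [h1] at h2
    simpa [Real.dist_eq] using h2
  have hDr : (0 : ℝ) < D := by exact_mod_cast hD
  have hex : ∃ i, (D : ℝ) ≤ |f D i - f 0 i| := by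
    by_contra hcon
    push Not at hcon
    have h1 := hf _ ⟨D, hDS, rfl⟩ _ ⟨0, h0, rfl⟩
    simp only [Int.cast_zero] at h1
    have h2 : dist (f D) (f 0) < D := by
      rw [dist_pi_lt_iff hDr]
      intro i
      rw [Real.dist_eq]; exact hcon i
    rw [h1, Real.dist_eq, sub_zero, abs_of_pos hDr] at h2
    exact lt_irrefl _ h2
  obtain ⟨i, hi⟩ := hex
  refine ⟨i, ?_⟩
  have key : ∀ s ∈ S, |f s i - f 0 i| ≤ s ∧ |f D i - f s i| ≤ D - s := by
    intro s hs
    have hb := hS s hs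
    have hs0 : (0 : ℝ) ≤ s := by exact_mod_cast hb.1
    have hsD : (s : ℝ) ≤ D := by exact_mod_cast hb.2
    have e1 := hd s hs 0 h0 i
    have e2 := hd D hDS s hs i
    rw [Int.cast_zero, sub_zero, abs_of_nonneg hs0] at e1
    rw [abs_of_nonneg (by linarith : (0 : ℝ) ≤ D - s)] at e2
    exact ⟨e1, e2⟩
  rcases le_abs.mp hi with h | h
  · left
    intro s hs
    obtain ⟨k1, k2⟩ := key s hs
    rw [abs_le] at k1 k2
    linarith [k1.1, k1.2, k2.1, k2.2]
  · right
    intro s hs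
    obtain ⟨k1, k2⟩ := key s hs
    rw [abs_le] at k1 k2
    linarith [k1.1, k1.2, k2.1, k2.2]

/-- upper bound on the number of colours -/
theorem colours_upper {S : Set ℤ} {D : ℤ} (h0 : (0 : ℤ) ∈ S) (hDS : D ∈ S) (hD : 0 < D)
    (hS : ∀ s ∈ S, 0 ≤ s ∧ s ≤ D) (N : ℕ) (F : Finset ℤ)
    (hF : F ⊆ Finset.Icc (-(N : ℤ)) N) (hfree : TrFreeZ S (F : Set ℤ)) (hne : F.Nonempty)
    (P : ℕ) (hP : (P : ℤ) = 2 * N + 1 + D) (n : ℕ) :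
    ∃ r : ℕ, (r : ℝ) ≤ ((P : ℝ) / F.card) ^ n * (n * Real.log P) + 1 ∧
      ∃ c : (Fin n → ℝ) → Fin r,
        ∀ i : Fin r, ¬ HasCopy ((fun z : ℤ => (z : ℝ)) '' S) {x | c x = i} := by
  classical
  have hPpos : 0 < P := by omega
  haveI : NeZero P := ⟨hPpos.ne'⟩
  have hE : TrFreeZ S (perExt F P) :=
    trFree_perExt h0 hS (a := -N) (b := N) (by
      intro x hx; simpa using hF hx) (by linarith) hfree
  let Fb : Finset (ZMod P) := F.image (fun z : ℤ => (z : ZMod P))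
  have hFb : Fb.card = F.card := by
    apply Finset.card_image_of_injOn
    intro a ha b hb h
    have ga := Finset.mem_Icc.mp (hF ha)
    have gb := Finset.mem_Icc.mp (hF hb)
    simp only at h
    rw [ZMod.intCast_eq_intCast_iff_dvd_sub] at h
    obtain ⟨q, hq⟩ := h
    have hq0 : q = 0 := by
      by_contra hne
      rcases lt_or_gt_of_ne hne with hh | hh
      · nlinarith [ga.1, ga.2, gb.1, gb.2]
      · nlinarith [ga.1, ga.2, gb.1, gb.2]
    subst hq0
    linarith
  have hmem : ∀ v : ℤ, (v : ZMod P) ∈ Fb → v ∈ perExt (F : Set ℤ) P := by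
    intro v hv
    obtain ⟨f, hf, h⟩ := Finset.mem_image.mp hv
    rw [ZMod.intCast_eq_intCast_iff_dvd_sub] at h
    obtain ⟨q, hq⟩ := h
    exact ⟨f, hf, q, by linarith⟩
  let T : Finset (Fin n → ZMod P) := Fintype.piFinset fun _ => Fb
  have hTne : T.Nonempty := by
    rw [Fintype.piFinset_nonempty]
    intro _
    exact hne.image _
  obtain ⟨r, hr, X, hX⟩ := exists_cover T hTne
  have hTc : T.card = F.card ^ n := by simp [T, Fintype.card_piFinset, hFb]
  have hGc : Fintype.card (Fin n → ZMod P) = P ^ n := by simp [ZMod.card]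
  rw [hTc, hGc] at hr
  push_cast at hr
  rw [Real.log_pow, ← div_pow] at hr
  refine ⟨r, hr, ?_⟩
  choose J hJ using hX
  refine ⟨fun x => J (fun i => (⌊x i⌋ : ZMod P)), ?_⟩
  rintro j ⟨f, hf1, hf2⟩
  obtain ⟨i, hi⟩ := copy_coord h0 hDS hD hS f hf1
  obtain ⟨w, hw⟩ := ZMod.intCast_surjective (X j i)
  have hin : ∀ s ∈ S, ⌊f s i⌋ - w ∈ perExt (F : Set ℤ) P := by
    intro s hs
    apply hmem
    have h1 := hf2 ⟨_, ⟨s, hs, rfl⟩, rfl⟩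
    simp only [Set.mem_setOf_eq] at h1
    have h2 := hJ (fun i => (⌊f s i⌋ : ZMod P))
    rw [h1] at h2
    have h3 := Fintype.mem_piFinset.mp h2 i
    push_cast
    rw [hw]
    exact h3
  rcases hi with hi | hi
  · apply (hE (⌊f 0 i⌋ - w)).1
    rintro _ ⟨s, hs, rfl⟩
    have := hin s hs
    rw [hi s hs, Int.floor_add_intCast] at this
    convert this using 1
    ring
  · apply (hE (⌊f 0 i⌋ - w)).2
    rintro _ ⟨s, hs, rfl⟩
    have := hin s hs
    rw [hi s hs, Int.floor_sub_intCast] at this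
    convert this using 1
    ring

theorem main_abs {S : Set ℤ} {D : ℤ} (h0 : (0 : ℤ) ∈ S) (hDS : D ∈ S) (hD : 0 < D)
    (hS : ∀ s ∈ S, 0 ≤ s ∧ s ≤ D) :
    Tendsto (fun n : ℕ => (chrom ((fun z : ℤ => (z : ℝ)) '' S) n : ℝ) ^ (1 / (n : ℝ)))
      atTop (nhds (densZ S)⁻¹) := by
  classical
  have hd := densZ_pos h0 hDS hD hS
  set d := densZ S with hdd
  have hup : ∀ c : ℝ, 0 < c → c < d → ∃ q L : ℝ, 0 < q ∧ q < c⁻¹ ∧ 0 ≤ L ∧ ∀ n : ℕ, 1 ≤ n →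
      (∃ N : ℕ, ∃ c : (Fin n → ℝ) → Fin N,
        ∀ i : Fin N, ¬ HasCopy ((fun z : ℤ => (z : ℝ)) '' S) {x | c x = i}) ∧
      (chrom ((fun z : ℤ => (z : ℝ)) '' S) n : ℝ) ≤ q ^ n * (n * L) := by
    intro c hc hcd
    obtain ⟨N, F, hF, hfree, hcard⟩ := exists_good hD.le hc hcd
    have hDr : (0 : ℝ) < D := by exact_mod_cast hD
    have hFpos : (0 : ℝ) < F.card := lt_trans (by positivity) hcard
    have hne : F.Nonempty := Finset.card_pos.mp (by exact_mod_cast hFpos)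
    obtain ⟨P, hP⟩ : ∃ P : ℕ, (P : ℤ) = 2 * N + 1 + D := ⟨(2 * N + 1 + D).toNat, by omega⟩
    have hPr : (P : ℝ) = 2 * N + 1 + D := by exact_mod_cast hP
    have hP1 : (1 : ℝ) ≤ P := by rw [hPr]; have : (0 : ℝ) ≤ N := by positivity
                                 linarith
    have hFP : (F.card : ℝ) ≤ P := by
      have h := Finset.card_le_card hF
      rw [Int.card_Icc] at h
      have : F.card ≤ P := by omega
      exact_mod_cast this
    have hq1 : 1 ≤ (P : ℝ) / F.card := by rwa [one_le_div hFpos]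
    have hL := Real.log_nonneg hP1
    refine ⟨P / F.card, Real.log P + 1, by linarith, ?_, by linarith, ?_⟩
    · rw [← hPr] at hcard
      rw [div_lt_iff₀ hFpos, inv_mul_eq_div, lt_div_iff₀ hc]
      linarith
    · intro n hn
      obtain ⟨r, hr, col, hcol⟩ := colours_upper h0 hDS hD hS N F hF hfree hne P hP n
      refine ⟨⟨r, col, hcol⟩, ?_⟩
      have h1 : chrom ((fun z : ℤ => (z : ℝ)) '' S) n ≤ r := Nat.sInf_le ⟨col, hcol⟩
      have h2 : (chrom ((fun z : ℤ => (z : ℝ)) '' S) n : ℝ) ≤ r := by exact_mod_cast h1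
      have h3 : (1 : ℝ) ≤ ((P : ℝ) / F.card) ^ n := one_le_pow₀ hq1
      have h4 : (1 : ℝ) ≤ n := by exact_mod_cast hn
      have h5 : 1 ≤ ((P : ℝ) / F.card) ^ n * n := by nlinarith
      calc _ ≤ (r : ℝ) := h2
        _ ≤ _ := hr
        _ ≤ ((P : ℝ) / F.card) ^ n * (n * Real.log P) + ((P : ℝ) / F.card) ^ n * n := by linarith
        _ = _ := by ring
  have hlow : ∀ n : ℕ, 1 ≤ n →
      d⁻¹ ≤ (chrom ((fun z : ℤ => (z : ℝ)) '' S) n : ℝ) ^ (1 / (n : ℝ)) := by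
    intro n hn
    obtain ⟨q, L, -, -, -, h⟩ := hup (d / 2) (by linarith) (by linarith)
    have hmem : chrom ((fun z : ℤ => (z : ℝ)) '' S) n ∈ {N : ℕ | ∃ c : (Fin n → ℝ) → Fin N,
        ∀ i : Fin N, ¬ HasCopy ((fun z : ℤ => (z : ℝ)) '' S) {x | c x = i}} := by
      obtain ⟨r, hr⟩ := (h n hn).1
      exact Nat.sInf_mem ⟨r, hr⟩
    generalize chrom ((fun z : ℤ => (z : ℝ)) '' S) n = X at hmem ⊢
    obtain ⟨col, hcol⟩ := hmem
    have hn0 : (n : ℝ) ≠ 0 := by positivity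
    -- for each t
    have ht : ∀ t : ℕ, D ≤ t → ((2 * t + 1 : ℝ) - D) / (2 * t + 1) ≤ d * (X : ℝ) ^ (1 / (n : ℝ)) := by
      intro t htD
      set I := Finset.Icc (-(t : ℤ)) (t - D) with hI
      let M := (I.powerset.filter fun F : Finset ℤ => TrFreeZ S (F : Set ℤ)).sup Finset.card
      have hM : ∀ F : Finset ℤ, F ⊆ I → TrFreeZ S (F : Set ℤ) → F.card ≤ M := by
        intro F hF hfree
        exact Finset.le_sup (f := Finset.card) (by simp [hF, hfree])
      have hMd : (M : ℝ) ≤ d * (2 * t + 1) := by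
        have hne : (I.powerset.filter fun F : Finset ℤ => TrFreeZ S (F : Set ℤ)).Nonempty :=
          ⟨{0}, by simp [hI, htD, trFree_singleton h0 hDS hD]⟩
        obtain ⟨F, hF, hFM⟩ := Finset.exists_mem_eq_sup _ hne Finset.card
        simp only [Finset.mem_filter, Finset.mem_powerset] at hF
        have := card_le_densZ h0 hS t F hF.1 hF.2
        have e : M = F.card := hFM
        rw [e]; exact this
      have hcount := colours_lower hM n X col hcol
      have hIc : (I.card : ℝ) = (2 * t + 1 : ℝ) - D := by
        have : (I.card : ℤ) = 2 * t + 1 - D := by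
          rw [hI, Int.card_Icc]; omega
        exact_mod_cast this
      have hcr : (I.card : ℝ) ^ n ≤ X * (M : ℝ) ^ n := by exact_mod_cast hcount
      have hroot : (I.card : ℝ) ≤ (X : ℝ) ^ (1 / (n : ℝ)) * M := by
        apply le_of_pow_le_pow_left₀ (n := n) (by omega) (by positivity)
        rw [mul_pow, one_div, Real.rpow_inv_natCast_pow (by positivity) (by omega)]
        exact hcr
      rw [div_le_iff₀ (by positivity), ← hIc]
      calc (I.card : ℝ) ≤ (X : ℝ) ^ (1 / (n : ℝ)) * M := hroot
        _ ≤ (X : ℝ) ^ (1 / (n : ℝ)) * (d * (2 * t + 1)) :=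
          mul_le_mul_of_nonneg_left hMd (by positivity)
        _ = _ := by ring
    have hlim : Tendsto (fun t : ℕ => ((2 * t + 1 : ℝ) - D) / (2 * t + 1)) atTop (nhds 1) := by
      have h1 : Tendsto (fun t : ℕ => (2 * t + 1 : ℝ)) atTop atTop := by
        apply Filter.tendsto_atTop_add_const_right
        exact Filter.Tendsto.const_mul_atTop (by norm_num) tendsto_natCast_atTop_atTop
      have h2 : Tendsto (fun t : ℕ => 1 - (D : ℝ) / (2 * t + 1)) atTop (nhds (1 - 0)) :=
        tendsto_const_nhds.sub (h1.const_div_atTop _)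
      rw [sub_zero] at h2
      refine h2.congr (fun t => ?_)
      have : (2 * t + 1 : ℝ) ≠ 0 := by positivity
      field_simp
    have h1 : 1 ≤ d * (X : ℝ) ^ (1 / (n : ℝ)) := by
      apply le_of_tendsto hlim
      filter_upwards [eventually_ge_atTop D.toNat] with t htt
      exact ht t (by omega)
    rw [inv_le_iff_one_le_mul₀ hd]
    linarith
  rw [tendsto_order]
  constructor
  · intro a ha
    filter_upwards [eventually_ge_atTop 1] with n hn
    exact lt_of_lt_of_le ha (hlow n hn)
  · intro b hb
    have hb0 : 0 < b := lt_trans (inv_pos.mpr hd) hb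
    obtain ⟨q, L, hq, hqb, hL, h⟩ : ∃ q L : ℝ, 0 < q ∧ q < b ∧ 0 ≤ L ∧ ∀ n : ℕ, 1 ≤ n →
        (chrom ((fun z : ℤ => (z : ℝ)) '' S) n : ℝ) ≤ q ^ n * (n * L) := by
      obtain ⟨q, L, h1, h2, h3, h4⟩ := hup b⁻¹ (inv_pos.mpr hb0) (inv_lt_of_inv_lt₀ hd hb)
      rw [inv_inv] at h2
      exact ⟨q, L, h1, h2, h3, fun n hn => (h4 n hn).2⟩
    have hlim : Tendsto (fun n : ℕ => q * ((n : ℝ) ^ (1 / (n : ℝ)) * (L + 1) ^ (1 / (n : ℝ))))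
        atTop (nhds (q * (1 * 1))) := by
      apply Tendsto.const_mul
      apply Tendsto.mul
      · exact tendsto_rpow_div.comp tendsto_natCast_atTop_atTop
      · have h1 : Tendsto (fun n : ℕ => 1 / (n : ℝ)) atTop (nhds 0) :=
          tendsto_const_div_atTop_nhds_zero_nat 1
        have h2 := (tendsto_const_nhds (x := L + 1)).rpow h1 (Or.inl (by positivity))
        simpa using h2
    rw [mul_one, mul_one] at hlim
    filter_upwards [hlim.eventually_lt_const hqb, eventually_ge_atTop 1] with n hn hn1
    refine lt_of_le_of_lt ?_ hn
    have hn0 : n ≠ 0 := by omega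
    calc _ ≤ (q ^ n * (n * (L + 1))) ^ (1 / (n : ℝ)) := by
          apply Real.rpow_le_rpow (by positivity) _ (by positivity)
          refine (h n hn1).trans ?_
          gcongr
          linarith
      _ = _ := by
          rw [Real.mul_rpow (by positivity) (by positivity), Real.mul_rpow (by positivity) (by positivity)]
          congr 1
          rw [one_div, Real.pow_rpow_inv_natCast hq.le hn0]

/-- For an integer baton `B`, `χ(ℝ^n_∞, B) = (d(ℤ,B)⁻¹ + o(1))^n`, i.e.
`χ(ℝ^n_∞, B)^(1/n) → d(ℤ,B)⁻¹` as `n → ∞`. -/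
theorem chi_int_baton (k : ℕ) (hk : 0 < k) (lam : ℕ → ℤ) (hlam : ∀ j < k, 0 < lam j) :
    Tendsto
      (fun n : ℕ => (chrom ((fun z : ℤ => (z : ℝ)) '' batonZ lam k) n : ℝ) ^ (1 / (n : ℝ)))
      atTop (nhds (densZ (batonZ lam k))⁻¹) := by
  have hmono : ∀ r ≤ k, 0 ≤ ∑ j ∈ Finset.range r, lam j ∧
      ∑ j ∈ Finset.range r, lam j ≤ ∑ j ∈ Finset.range k, lam j := by
    intro r hr
    constructor
    · apply Finset.sum_nonneg
      intro j hj
      exact (hlam j (by have := Finset.mem_range.mp hj; omega)).le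
    · apply Finset.sum_le_sum_of_subset_of_nonneg
      · intro j hj
        simp only [Finset.mem_range] at *
        omega
      · intro j hj _
        exact (hlam j (Finset.mem_range.mp hj)).le
  refine main_abs (D := ∑ j ∈ Finset.range k, lam j) ⟨0, by simp, by simp⟩ ⟨k, by simp, rfl⟩ ?_ ?_
  · apply Finset.sum_pos
    · intro j hj
      exact hlam j (Finset.mem_range.mp hj)
    · exact ⟨0, Finset.mem_range.mpr hk⟩
  · rintro _ ⟨r, hr, rfl⟩
    exact hmono r hr
end

section
/- Let k ∈ ℕ and let λ_1, …, λ_k be positive real numbers that are linearly independent over ℤ (no nontrivial integer linear combination of them equals zero). Then lim_{n→∞} χ(ℝ^n_∞, B(λ_1,…,λ_k))^{1/n} = (k+1)/k; that is, χ(ℝ^n_∞, B(λ_1,…,λ_k)) = ((k+1)/k + o(1))^n. -/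
open Set Filter

/-- The baton `B(λ₁,…,λ_k)`: the set of partial sums `σ₀,…,σ_k` of `λ₁,…,λ_k`. -/
noncomputable def baton (lam : ℕ → ℝ) (k : ℕ) : Set ℝ :=
  (fun r => ∑ j ∈ Finset.range r, lam j) '' Set.Iic k


namespace BatonAux

/-- Partial sums. -/
noncomputable def sg (lam : ℕ → ℝ) (r : ℕ) : ℝ := ∑ j ∈ Finset.range r, lam j

lemma sg_succ (lam : ℕ → ℝ) (r : ℕ) : sg lam (r + 1) = sg lam r + lam r := by
  simp [sg, Finset.sum_range_succ]

lemma sg_lt (lam : ℕ → ℝ) (k : ℕ) (hpos : ∀ j < k, 0 < lam j) (a b : ℕ) (hab : a < b)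
    (hb : b ≤ k) : sg lam a < sg lam b := by
  induction b with
  | zero => omega
  | succ b ih =>
    rw [sg_succ]
    have h1 := hpos b (by omega)
    rcases Nat.lt_succ_iff_lt_or_eq.mp hab with h | h
    · have := ih h (by omega)
      linarith
    · subst h; linarith

/-- The point of the grid associated with a word. -/
noncomputable def pt (lam : ℕ → ℝ) {n k : ℕ} (w : Fin n → Fin (k + 1)) : Fin n → ℝ :=
  fun i => sg lam (w i)

/-- `w` is the right end of a chain realising the first `j` edges in coordinate `i`. -/
def Good (lam : ℕ → ℝ) {n k : ℕ} (S : Finset (Fin n → Fin (k + 1))) :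
    ℕ → (Fin n → Fin (k + 1)) → Fin n → Prop
  | 0, w, i => w ∈ S ∧ (w i : ℕ) = 0
  | j + 1, w, i => w ∈ S ∧ (w i : ℕ) = j + 1 ∧
      ∃ u, Good lam S j u i ∧ dist (pt lam u) (pt lam w) ≤ lam j

lemma good_chain (lam : ℕ → ℝ) {n k : ℕ} (S : Finset (Fin n → Fin (k + 1))) (i : Fin n)
    (j : ℕ) : ∀ w, Good lam S j w i → ∃ x : ℕ → (Fin n → Fin (k + 1)), x j = w ∧
      (∀ m ≤ j, x m ∈ S ∧ (x m i : ℕ) = m) ∧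
      ∀ m < j, dist (pt lam (x m)) (pt lam (x (m + 1))) ≤ lam m := by
  induction j with
  | zero =>
    rintro w ⟨h1, h2⟩
    refine ⟨fun _ => w, rfl, ?_, ?_⟩
    · intro m hm
      obtain rfl : m = 0 := by omega
      exact ⟨h1, h2⟩
    · intro m hm; omega
  | succ j ih =>
    rintro w ⟨h1, h2, u, hu, hd⟩
    obtain ⟨x, hx, hx1, hx2⟩ := ih u hu
    refine ⟨Function.update x (j + 1) w, by simp, ?_, ?_⟩
    · intro m hm
      by_cases h : m = j + 1
      · subst h; simp [h1, h2]
      · rw [Function.update_of_ne h]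
        exact hx1 m (by omega)
    · intro m hm
      rw [Function.update_of_ne (by omega : m ≠ j + 1)]
      by_cases h : m = j
      · subst h; simpa [hx] using hd
      · rw [Function.update_of_ne (by omega : m + 1 ≠ j + 1)]
        exact hx2 m (by omega)

lemma chain_dist {n : ℕ} (lam : ℕ → ℝ) (y : ℕ → (Fin n → ℝ)) (k : ℕ)
    (h : ∀ m < k, dist (y m) (y (m + 1)) ≤ lam m) (a b : ℕ) (hab : a ≤ b) (hb : b ≤ k) :
    dist (y a) (y b) ≤ sg lam b - sg lam a := by
  induction b, hab using Nat.le_induction with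
  | base => simp
  | succ b hab ih =>
    have h1 := ih (by omega)
    have h2 := h b (by omega)
    have h3 := dist_triangle (y a) (y b) (y (b + 1))
    rw [sg_succ]; linarith

lemma chain_copy {n : ℕ} (lam : ℕ → ℝ) (k : ℕ) (hpos : ∀ j < k, 0 < lam j)
    (y : ℕ → (Fin n → ℝ)) (i : Fin n) (hi : ∀ m ≤ k, y m i = sg lam m)
    (h : ∀ m < k, dist (y m) (y (m + 1)) ≤ lam m) (A : Set (Fin n → ℝ))
    (hA : ∀ m ≤ k, y m ∈ A) : HasCopy (baton lam k) A := by
  have hinj : InjOn (sg lam) (Set.Iic k) := by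
    intro a ha b hb hab
    rcases lt_trichotomy a b with h' | h' | h'
    · exact absurd hab (sg_lt lam k hpos a b h' hb).ne
    · exact h'
    · exact absurd hab (sg_lt lam k hpos b a h' ha).ne'
  have hinv : ∀ a ≤ k, Function.invFunOn (sg lam) (Set.Iic k) (sg lam a) = a :=
    fun a ha => hinj.leftInvOn_invFunOn (show a ∈ Set.Iic k from ha)
  have key : ∀ a b, a ≤ b → b ≤ k → dist (y a) (y b) = dist (sg lam a) (sg lam b) := by
    intro a b hab hb
    apply le_antisymm
    · rw [dist_comm (sg lam a), Real.dist_eq]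
      exact (chain_dist lam y k h a b hab hb).trans (le_abs_self _)
    · have := dist_le_pi_dist (y a) (y b) i
      rwa [hi a (by omega), hi b hb] at this
  refine ⟨fun t => y (Function.invFunOn (sg lam) (Set.Iic k) t), ?_, ?_⟩
  · rintro _ ⟨a, ha, rfl⟩ _ ⟨b, hb, rfl⟩
    change dist (y (Function.invFunOn (sg lam) (Set.Iic k) (sg lam a)))
      (y (Function.invFunOn (sg lam) (Set.Iic k) (sg lam b))) = dist (sg lam a) (sg lam b)
    rw [hinv a ha, hinv b hb]
    rcases le_total a b with hab | hab
    · exact key a b hab hb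
    · rw [dist_comm, dist_comm (sg lam a)]
      exact key b a hab ha
  · rintro _ ⟨_, ⟨a, ha, rfl⟩, rfl⟩
    change y (Function.invFunOn (sg lam) (Set.Iic k) (sg lam a)) ∈ A
    rw [hinv a ha]
    exact hA a ha

/-- A subset of the grid without a copy of the baton has at most `k ^ n` points. -/
lemma card_le {n : ℕ} (lam : ℕ → ℝ) (k : ℕ) (hk : 0 < k) (hpos : ∀ j < k, 0 < lam j)
    (A : Set (Fin n → ℝ)) (S : Finset (Fin n → Fin (k + 1))) (hS : ∀ w ∈ S, pt lam w ∈ A)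
    (hA : ¬ HasCopy (baton lam k) A) : S.card ≤ k ^ n := by
  classical
  have hno : ∀ w i, ¬ Good lam S k w i := by
    intro w i hw
    obtain ⟨x, -, h1, h2⟩ := good_chain lam S i k w hw
    exact hA (chain_copy lam k hpos (fun m => pt lam (x m)) i
      (fun m hm => by simp [pt, (h1 m hm).2]) h2 A (fun m hm => hS _ (h1 m hm).1))
  let code : (Fin n → Fin (k + 1)) → Fin n → ℕ := fun w i =>
    if Good lam S (w i) w i then (w i : ℕ) else (w i : ℕ) - 1
  have hcode : ∀ w i, code w i < k := by
    intro w i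
    have := (w i).2
    by_cases h : Good lam S (w i) w i
    · simp only [code, if_pos h]
      rcases Nat.lt_or_ge (w i) k with h' | h'
      · exact h'
      · have h'' : (w i : ℕ) = k := by omega
        rw [h''] at h
        exact absurd h (hno w i)
    · simp only [code, if_neg h]; omega
  let F : (Fin n → Fin (k + 1)) → (Fin n → Fin k) := fun w i => ⟨code w i, hcode w i⟩
  have hF : Set.InjOn F S := by
    intro x hx y hy hxy
    have hc : ∀ i, code x i = code y i := fun i => by
      have := congrArg Fin.val (congrFun hxy i)
      simpa [F] using this
    -- one-sided facts
    have hg0 : ∀ w ∈ S, ∀ i, (w i : ℕ) = 0 → Good lam S (w i) w i := by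
      intro w hw i h
      rw [h]; exact ⟨hw, h⟩
    by_contra hne
    let D : Finset (Fin n) := Finset.univ.filter (fun i => x i ≠ y i)
    have hD : D.Nonempty := by
      obtain ⟨i, hi⟩ := Function.ne_iff.mp hne
      exact ⟨i, by simp [D, hi]⟩
    obtain ⟨i, hiD, hmax⟩ := Finset.exists_max_image D
      (fun i => dist (pt lam x i) (pt lam y i)) hD
    have hdist : dist (pt lam x) (pt lam y) ≤ dist (pt lam x i) (pt lam y i) := by
      refine (dist_pi_le_iff dist_nonneg).mpr fun l => ?_
      by_cases hl : x l = y l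
      · simp [pt, hl]
      · exact hmax l (by simp [D, hl])
    have hlam : ∀ r < k, dist (sg lam r) (sg lam (r + 1)) = lam r := by
      intro r hr
      rw [sg_succ, dist_comm, Real.dist_eq, add_sub_cancel_left, abs_of_pos (hpos r hr)]
    -- main step
    have main : ∀ u v : Fin n → Fin (k + 1), u ∈ S → v ∈ S → code u i = code v i →
        (u i : ℕ) < v i → dist (pt lam u) (pt lam v) ≤ dist (pt lam u i) (pt lam v i) →
        False := by
      intro u v hu hv huv hlt hd
      have hvk := (v i).2
      have hvb : ¬ Good lam S (v i) v i := by
        intro hvg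
        simp only [code, if_pos hvg] at huv
        split_ifs at huv <;> omega
      simp only [code, if_neg hvb] at huv
      have hug : Good lam S (u i) u i := by
        by_contra hug
        rw [if_neg hug] at huv
        have : (u i : ℕ) ≠ 0 := fun h0 => hug (hg0 u hu i h0)
        omega
      rw [if_pos hug] at huv
      have hv' : (v i : ℕ) = (u i : ℕ) + 1 := by omega
      apply hvb
      rw [hv']
      refine ⟨hv, hv', u, hug, ?_⟩
      refine hd.trans ?_
      simp only [pt]
      rw [hv', hlam _ (by omega)]
    have hiD' : x i ≠ y i := by simpa [D] using hiD
    have hiD'' : (x i : ℕ) ≠ y i := fun h => hiD' (Fin.ext h)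
    rcases Nat.lt_or_gt_of_ne hiD'' with h | h
    · exact main x y hx hy (hc i) h hdist
    · refine main y x hy hx (hc i).symm h ?_
      rw [dist_comm, dist_comm (pt lam y i)]; exact hdist
  have := Finset.card_le_card_of_injOn (t := Finset.univ) F (fun _ _ => Finset.mem_coe.mpr (Finset.mem_univ _)) hF
  simpa using this

lemma lower {n N : ℕ} (lam : ℕ → ℝ) (k : ℕ) (hk : 0 < k) (hpos : ∀ j < k, 0 < lam j)
    (c : (Fin n → ℝ) → Fin N) (hc : ∀ i : Fin N, ¬ HasCopy (baton lam k) {x | c x = i}) :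
    (k + 1) ^ n ≤ N * k ^ n := by
  classical
  have h := Finset.card_eq_sum_card_fiberwise (s := (Finset.univ : Finset (Fin n → Fin (k + 1))))
    (t := (Finset.univ : Finset (Fin N))) (f := fun w => c (pt lam w)) (fun _ _ => Finset.mem_coe.mpr (Finset.mem_univ _))
  have h2 : ∀ i ∈ (Finset.univ : Finset (Fin N)),
      (Finset.univ.filter (fun w : Fin n → Fin (k + 1) => c (pt lam w) = i)).card ≤ k ^ n := by
    intro i _
    refine card_le lam k hk hpos {x | c x = i} _ ?_ (hc i)
    intro w hw
    simpa using hw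
  have h3 := Finset.sum_le_sum h2
  rw [← h] at h3
  simpa using h3

/-- A `ℚ`-linear functional equal to one on every `lam j`. -/
lemma exists_functional (k : ℕ) (lam : ℕ → ℝ)
    (hindep : ∀ a : ℕ → ℤ,
      ∑ j ∈ Finset.range k, (a j : ℝ) * lam j = 0 → ∀ j < k, a j = 0) :
    ∃ g : ℝ →ₗ[ℚ] ℚ, ∀ j < k, g (lam j) = 1 := by
  have h1 : LinearIndependent ℤ (fun j : Fin k => lam j) := by
    rw [Fintype.linearIndependent_iff]
    intro a ha j
    have := hindep (fun m => if h : m < k then a ⟨m, h⟩ else 0) ?_ j j.2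
    · simpa using this
    · rw [Finset.sum_range]
      simpa using ha
  have h2 : LinearIndependent ℚ (fun j : Fin k => lam j) :=
    (LinearIndependent.iff_fractionRing ℤ ℚ).mp h1
  let b := Module.Basis.span h2
  obtain ⟨g, hg⟩ := LinearMap.exists_extend (b.constr ℚ (fun _ => (1 : ℚ)))
  refine ⟨g, fun j hj => ?_⟩
  have h3 := LinearMap.congr_fun hg (b ⟨j, hj⟩)
  rw [Module.Basis.constr_basis] at h3
  have h4 : ((b ⟨j, hj⟩ : Submodule.span ℚ (Set.range fun j : Fin k => lam j)) : ℝ) = lam j := by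
    simp [b, Module.Basis.span_apply]
  simpa [h4] using h3

/-- If the copy sits in a set, then some coordinate is a translate of the baton or its mirror. -/
lemma copy_coord {n : ℕ} (lam : ℕ → ℝ) (k : ℕ) (hk : 0 < k) (hpos : ∀ j < k, 0 < lam j)
    (A : Set (Fin n → ℝ)) (h : HasCopy (baton lam k) A) :
    ∃ y : ℕ → (Fin n → ℝ), (∀ m ≤ k, y m ∈ A) ∧ ∃ i : Fin n,
      (∀ m ≤ k, y m i = y 0 i + sg lam m) ∨ (∀ m ≤ k, y m i = y 0 i - sg lam m) := by
  obtain ⟨f, hf, hfA⟩ := h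
  have hmem : ∀ m ≤ k, sg lam m ∈ baton lam k := fun m hm => ⟨m, hm, rfl⟩
  have hs0 : sg lam 0 = 0 := by simp [sg]
  have hk0 : 0 < sg lam k := by
    have := sg_lt lam k hpos 0 k hk le_rfl
    rwa [hs0] at this
  have hd : ∀ a ≤ k, ∀ b ≤ k, ∀ i, |f (sg lam a) i - f (sg lam b) i| ≤ |sg lam a - sg lam b| := by
    intro a ha b hb i
    have := dist_le_pi_dist (f (sg lam a)) (f (sg lam b)) i
    rwa [hf _ (hmem a ha) _ (hmem b hb), Real.dist_eq, Real.dist_eq] at this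
  have hle : ∀ m ≤ k, 0 ≤ sg lam m ∧ sg lam m ≤ sg lam k := by
    intro m hm
    constructor
    · rcases Nat.eq_zero_or_pos m with h | h
      · rw [h, hs0]
      · have := sg_lt lam k hpos 0 m h hm
        rw [hs0] at this; exact this.le
    · rcases Nat.lt_or_eq_of_le hm with h | h
      · exact (sg_lt lam k hpos m k h le_rfl).le
      · rw [h]
  refine ⟨fun m => f (sg lam m), fun m hm => hfA ⟨_, hmem m hm, rfl⟩, ?_⟩
  have hex : ∃ i, sg lam k ≤ |f (sg lam k) i - f (sg lam 0) i| := by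
    by_contra hcon
    push Not at hcon
    have h1 : dist (f (sg lam k)) (f (sg lam 0)) < sg lam k :=
      (dist_pi_lt_iff hk0).mpr fun i => by rw [Real.dist_eq]; exact hcon i
    rw [hf _ (hmem k le_rfl) _ (hmem 0 (by omega)), Real.dist_eq, hs0, sub_zero,
      abs_of_pos hk0] at h1
    exact lt_irrefl _ h1
  obtain ⟨i, hi⟩ := hex
  refine ⟨i, ?_⟩
  have hb : ∀ m ≤ k, |f (sg lam m) i - f (sg lam 0) i| ≤ sg lam m ∧
      |f (sg lam k) i - f (sg lam m) i| ≤ sg lam k - sg lam m := by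
    intro m hm
    have h1 := hd m hm 0 (by omega) i
    have h2 := hd k le_rfl m hm i
    rw [hs0, sub_zero, abs_of_nonneg (hle m hm).1] at h1
    rw [abs_of_nonneg (sub_nonneg.mpr (hle m hm).2)] at h2
    rw [hs0]
    exact ⟨h1, h2⟩
  rcases le_abs.mp hi with hi | hi
  · left
    intro m hm
    obtain ⟨h1, h2⟩ := hb m hm
    rw [abs_le] at h1 h2
    change f (sg lam m) i = f (sg lam 0) i + sg lam m
    linarith
  · right
    intro m hm
    obtain ⟨h1, h2⟩ := hb m hm
    rw [abs_le] at h1 h2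
    change f (sg lam m) i = f (sg lam 0) i - sg lam m
    linarith

/-- Union bound: a small family of words such that every word is avoided by one of them. -/
lemma cover (n k t : ℕ)
    (ht : (k + 1) ^ n * ((k + 1) ^ n - k ^ n) ^ t < ((k + 1) ^ n) ^ t) :
    ∃ V : Fin t → (Fin n → ZMod (k + 1)), ∀ w : Fin n → ZMod (k + 1), ∃ s, ∀ i, V s i ≠ w i := by
  classical
  by_contra hcon
  push Not at hcon
  let av : (Fin n → ZMod (k + 1)) → Finset (Fin n → ZMod (k + 1)) := fun w =>
    Fintype.piFinset (fun i => Finset.univ.erase (w i))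
  have hav : ∀ w, (av w).card = k ^ n := by
    intro w
    simp [av, Fintype.card_piFinset, ZMod.card]
  have hsub : (Finset.univ : Finset (Fin t → (Fin n → ZMod (k + 1)))) ⊆
      Finset.univ.biUnion (fun w => Fintype.piFinset (fun _ : Fin t => (av w)ᶜ)) := by
    intro V _
    obtain ⟨w, hw⟩ := hcon V
    simp only [Finset.mem_biUnion, Finset.mem_univ, true_and, Fintype.mem_piFinset,
      Finset.mem_compl]
    refine ⟨w, fun s hs => ?_⟩
    obtain ⟨i, hi⟩ := hw s
    simp only [av, Fintype.mem_piFinset, Finset.mem_erase, Finset.mem_univ, and_true] at hs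
    exact hs i hi
  have h1 := (Finset.card_le_card hsub).trans Finset.card_biUnion_le
  simp only [Fintype.card_piFinset, Finset.card_compl, hav, Finset.card_univ, Finset.prod_const,
    Finset.sum_const, Fintype.card_pi, ZMod.card, Fintype.card_fin, smul_eq_mul] at h1
  omega

lemma upper_color (n t : ℕ) (k : ℕ) (hk : 0 < k) (lam : ℕ → ℝ)
    (hpos : ∀ j < k, 0 < lam j)
    (hindep : ∀ a : ℕ → ℤ,
      ∑ j ∈ Finset.range k, (a j : ℝ) * lam j = 0 → ∀ j < k, a j = 0)
    (ht : (k + 1) ^ n * ((k + 1) ^ n - k ^ n) ^ t < ((k + 1) ^ n) ^ t) :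
    ∃ c : (Fin n → ℝ) → Fin t, ∀ i : Fin t, ¬ HasCopy (baton lam k) {x | c x = i} := by
  obtain ⟨g, hg⟩ := exists_functional k lam hindep
  obtain ⟨V, hV⟩ := cover n k t ht
  have hgs : ∀ m ≤ k, g (sg lam m) = m := by
    intro m hm
    induction m with
    | zero => simp [sg]
    | succ m ih => rw [sg_succ, map_add, ih (by omega), hg m (by omega)]; push_cast; ring
  let ψ : ℝ → ZMod (k + 1) := fun x => ((⌊g x⌋ : ℤ) : ZMod (k + 1))
  have hψ1 : ∀ x, ∀ m ≤ k, ψ (x + sg lam m) = ψ x + m := by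
    intro x m hm
    simp [ψ, map_add, hgs m hm]
  have hψ2 : ∀ x, ∀ m ≤ k, ψ (x - sg lam m) = ψ x - m := by
    intro x m hm
    simp [ψ, map_sub, hgs m hm]
  choose c hc using fun x : Fin n → ℝ => hV (fun i => ψ (x i))
  refine ⟨c, fun s hs => ?_⟩
  obtain ⟨y, hy, i, h⟩ := copy_coord lam k hk hpos _ hs
  have hne : ∀ m ≤ k, V s i ≠ ψ (y m i) := by
    intro m hm
    have := hc (y m) i
    rwa [show c (y m) = s from hy m hm] at this
  have hval : ∀ z : ZMod (k + 1), ∃ m ≤ k, (m : ZMod (k + 1)) = z := fun z =>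
    ⟨z.val, Nat.lt_succ_iff.mp (ZMod.val_lt z), ZMod.natCast_zmod_val z⟩
  rcases h with h | h
  · obtain ⟨m, hm, hz⟩ := hval (V s i - ψ (y 0 i))
    apply hne m hm
    rw [h m hm, hψ1 _ m hm, hz]; ring
  · obtain ⟨m, hm, hz⟩ := hval (ψ (y 0 i) - V s i)
    apply hne m hm
    rw [h m hm, hψ2 _ m hm, hz]; ring

lemma exists_t (n k : ℕ) (hk : 0 < k) : ∃ t : ℕ,
    (k + 1) ^ n * ((k + 1) ^ n - k ^ n) ^ t < ((k + 1) ^ n) ^ t ∧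
    (t : ℝ) ≤ (n * Real.log (k + 1) + 1) * (((k : ℝ) + 1) / k) ^ n := by
  have hk' : (0 : ℝ) < k := by exact_mod_cast hk
  have hL : 0 ≤ Real.log ((k : ℝ) + 1) := Real.log_nonneg (by linarith)
  set q : ℝ := (((k : ℝ) + 1) / k) ^ n with hq
  have hq1 : 1 ≤ q := one_le_pow₀ (by rw [le_div_iff₀ hk']; linarith)
  set y : ℝ := n * Real.log (k + 1) * q with hy
  have hy0 : 0 ≤ y := by positivity
  refine ⟨⌊y⌋₊ + 1, ?_, ?_⟩
  · set t := ⌊y⌋₊ + 1 with htdef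
    have hyt : y < t := by rw [htdef]; push_cast; exact Nat.lt_floor_add_one y
    have hle : k ^ n ≤ (k + 1) ^ n := Nat.pow_le_pow_left (by omega) n
    rw [← Nat.cast_lt (α := ℝ)]
    push_cast [Nat.cast_sub hle]
    set K : ℝ := ((k : ℝ) + 1) ^ n with hK
    have hK0 : 0 < K := by positivity
    have hKq : (k : ℝ) ^ n = K * q⁻¹ := by
      rw [hq, hK, div_pow]; field_simp
    have h1 : K - (k : ℝ) ^ n = K * (1 - q⁻¹) := by rw [hKq]; ring
    rw [h1, mul_pow]
    have hqi : q⁻¹ ≤ 1 := inv_le_one_of_one_le₀ hq1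
    have h2 : (1 - q⁻¹) ^ t ≤ Real.exp (-(q⁻¹ * t)) := by
      have : (1 - q⁻¹) ^ t ≤ (Real.exp (-q⁻¹)) ^ t :=
        pow_le_pow_left₀ (by linarith) (Real.one_sub_le_exp_neg _) t
      rwa [← Real.exp_nat_mul, show (t : ℝ) * -q⁻¹ = -(q⁻¹ * t) by ring] at this
    have h3 : K = Real.exp (n * Real.log (k + 1)) := by
      rw [Real.exp_nat_mul, Real.exp_log (by linarith)]
    have h4 : K * (1 - q⁻¹) ^ t < 1 := by
      calc K * (1 - q⁻¹) ^ t ≤ K * Real.exp (-(q⁻¹ * t)) := by gcongr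
        _ = Real.exp (n * Real.log (k + 1) - q⁻¹ * t) := by
            rw [h3, ← Real.exp_add]; ring_nf
        _ < 1 := by
            rw [Real.exp_lt_one_iff]
            have h5 : n * Real.log (k + 1) = q⁻¹ * y := by rw [hy]; field_simp
            rw [h5]
            have : q⁻¹ * y < q⁻¹ * t := by gcongr
            linarith
    calc K * (K ^ t * (1 - q⁻¹) ^ t) = K ^ t * (K * (1 - q⁻¹) ^ t) := by ring
      _ < K ^ t * 1 := by gcongr
      _ = K ^ t := mul_one _
  · push_cast
    have := Nat.floor_le hy0
    rw [add_mul, one_mul]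
    linarith

end BatonAux

/-- If `λ₁,…,λ_k` are positive reals that are linearly independent over `ℤ`, then
`χ(ℝ^n_∞, B(λ₁,…,λ_k))^(1/n) → (k+1)/k` as `n → ∞`. -/
theorem chi_lin_indep_baton (k : ℕ) (hk : 0 < k) (lam : ℕ → ℝ)
    (hpos : ∀ j < k, 0 < lam j)
    (hindep : ∀ a : ℕ → ℤ,
      ∑ j ∈ Finset.range k, (a j : ℝ) * lam j = 0 → ∀ j < k, a j = 0) :
    Tendsto (fun n : ℕ => (chrom (baton lam k) n : ℝ) ^ (1 / (n : ℝ)))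
      atTop (nhds (((k : ℝ) + 1) / k)) := by
  have hk' : (0 : ℝ) < k := by exact_mod_cast hk
  set L := Real.log ((k : ℝ) + 1) with hLdef
  have hL : 0 ≤ L := Real.log_nonneg (by linarith)
  have hbase : 0 ≤ ((k : ℝ) + 1) / k := by positivity
  have hup : ∀ n : ℕ, (chrom (baton lam k) n : ℝ) ≤ (n * L + 1) * (((k : ℝ) + 1) / k) ^ n := by
    intro n
    obtain ⟨t, ht, htb⟩ := BatonAux.exists_t n k hk
    refine le_trans ?_ htb
    exact_mod_cast Nat.sInf_le (BatonAux.upper_color n t k hk lam hpos hindep ht)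
  have hlow : ∀ n : ℕ, (((k : ℝ) + 1) / k) ^ n ≤ chrom (baton lam k) n := by
    intro n
    obtain ⟨t, ht, -⟩ := BatonAux.exists_t n k hk
    have hmem := Nat.sInf_mem (s := {N : ℕ | ∃ c : (Fin n → ℝ) → Fin N,
      ∀ i : Fin N, ¬ HasCopy (baton lam k) {x | c x = i}})
      ⟨t, BatonAux.upper_color n t k hk lam hpos hindep ht⟩
    obtain ⟨c, hc⟩ := hmem
    have h := BatonAux.lower lam k hk hpos c hc
    rw [div_pow, div_le_iff₀ (by positivity)]
    exact_mod_cast h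
  have hcomp : Tendsto (fun n : ℕ => ((n : ℝ) ^ (1 / (n : ℝ)) * (L + 1) ^ (1 / (n : ℝ))) *
      (((k : ℝ) + 1) / k)) atTop (nhds (((k : ℝ) + 1) / k)) := by
    have h1 : Tendsto (fun n : ℕ => (n : ℝ) ^ (1 / (n : ℝ))) atTop (nhds 1) :=
      tendsto_rpow_div.comp tendsto_natCast_atTop_atTop
    have h2 : Tendsto (fun n : ℕ => (L + 1) ^ (1 / (n : ℝ))) atTop (nhds 1) := by
      have h0 : Tendsto (fun n : ℕ => 1 / (n : ℝ)) atTop (nhds 0) :=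
        tendsto_one_div_atTop_nhds_zero_nat
      have h3 : ContinuousAt (fun x : ℝ => (L + 1) ^ x) 0 :=
        Real.continuousAt_const_rpow (by positivity)
      have := h3.tendsto.comp h0
      simpa [Function.comp_def] using this
    simpa using (h1.mul h2).mul_const (((k : ℝ) + 1) / k)
  refine tendsto_of_tendsto_of_tendsto_of_le_of_le' tendsto_const_nhds hcomp ?_ ?_
  · filter_upwards [eventually_gt_atTop 0] with n hn
    have := Real.rpow_le_rpow (by positivity) (hlow n) (by positivity : 0 ≤ 1 / (n : ℝ))
    rwa [one_div, Real.pow_rpow_inv_natCast hbase hn.ne', ← one_div] at this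
  · filter_upwards [eventually_gt_atTop 0] with n hn
    have hn1 : (1 : ℝ) ≤ n := by exact_mod_cast hn
    have h1 : (chrom (baton lam k) n : ℝ) ≤ (n * (L + 1)) * (((k : ℝ) + 1) / k) ^ n := by
      refine (hup n).trans ?_
      gcongr
      linarith
    have := Real.rpow_le_rpow (by positivity) h1 (by positivity : 0 ≤ 1 / (n : ℝ))
    rw [Real.mul_rpow (by positivity) (by positivity),
      Real.mul_rpow (by positivity) (by positivity)] at this
    rwa [show ((((k : ℝ) + 1) / k) ^ n) ^ (1 / (n : ℝ)) = ((k : ℝ) + 1) / k by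
      rw [one_div, Real.pow_rpow_inv_natCast hbase hn.ne']] at this
end

section
/- Let k ≥ 2 and m ≥ 1 be integers. Then for every ε > 0 there exists N such that for all n ≥ N: (1−ε)·((m−1)!·k^{m−1}/n^{m−1})·((k+1)/k)^n ≤ χ(ℝ^n_∞, B_k^m) ≤ (1+ε)·(ln k)·n·((k+1)/k)^n. In particular, lim_{n→∞} χ(ℝ^n_∞, B_k^m)^{1/n} = (k+1)/k. -/
open Set Filter

/-- `B_k^m = {0,1,…,k}^m ⊆ ℝ^m`, the `m`-fold Cartesian power of the baton
`B_k = {0,1,…,k}`, with the max metric. -/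
def box (m k : ℕ) : Set (Fin m → ℝ) :=
  {x | ∀ i, ∃ j : ℕ, j ≤ k ∧ x i = (j : ℝ)}

/-- The Sauer-type bound. -/
noncomputable def sauerBound (k m n : ℕ) : ℝ :=
  ∑ j ∈ Finset.range m, (n.choose j : ℝ) * ((k : ℝ) ^ n / (k : ℝ) ^ j)

lemma sauerBound_rec (k m n : ℕ) (hk : 1 ≤ k) :
    (k : ℝ) * sauerBound k (m + 1) n + sauerBound k m n = sauerBound k (m + 1) (n + 1) := by
  have hk0 : (k : ℝ) ≠ 0 := by positivity
  unfold sauerBound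
  rw [Finset.sum_range_succ' _ m, Finset.sum_range_succ' _ m, mul_add, Finset.mul_sum,
    add_right_comm, ← Finset.sum_add_distrib]
  congr 1
  · apply Finset.sum_congr rfl
    intro j _
    rw [Nat.choose_succ_succ]
    push_cast
    field_simp
    ring
  · simp
    ring

lemma dist_succ_eq {n : ℕ} {α : Type*} [PseudoMetricSpace α] (x y : Fin (n + 1) → α) :
    dist x y = max (dist (x 0) (y 0)) (dist (Fin.tail x) (Fin.tail y)) := by
  apply le_antisymm
  · rw [dist_pi_le_iff (le_max_of_le_left dist_nonneg)]
    intro i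
    refine Fin.cases ?_ (fun j => ?_) i
    · exact le_max_left _ _
    · exact le_max_of_le_right (dist_le_pi_dist (Fin.tail x) (Fin.tail y) j)
  · apply max_le (dist_le_pi_dist x y 0)
    rw [dist_pi_le_iff dist_nonneg]
    intro j
    exact dist_le_pi_dist x y j.succ

lemma one_le_dist_of_ne {n : ℕ} (x y : Fin n → ℕ) (h : x ≠ y) : 1 ≤ dist x y := by
  obtain ⟨i, hi⟩ := Function.ne_iff.1 h
  refine le_trans ?_ (dist_le_pi_dist x y i)
  rw [Nat.dist_eq]
  have : (1 : ℤ) ≤ |(x i : ℤ) - y i| := by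
    apply Int.one_le_abs
    omega
  exact_mod_cast this

lemma hasCopy_zero {n k : ℕ} (V : Finset (Fin n → ℕ)) (h : V.Nonempty) :
    HasCopy (box 0 k) (V : Set (Fin n → ℕ)) := by
  obtain ⟨x, hx⟩ := h
  refine ⟨fun _ => x, ?_, ?_⟩
  · intro a _ b _
    rw [Subsingleton.elim a b]; simp
  · rintro _ ⟨a, _, rfl⟩
    exact hx

open Classical in
lemma card_le_sauer (k : ℕ) (hk : 1 ≤ k) (n : ℕ) : ∀ (m : ℕ) (V : Finset (Fin n → ℕ)),
    (∀ x ∈ V, ∀ i, x i ≤ k) → ¬ HasCopy (box m k) (V : Set (Fin n → ℕ)) →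
    (V.card : ℝ) ≤ sauerBound k m n := by
  have zero_case : ∀ (n : ℕ) (V : Finset (Fin n → ℕ)),
      ¬ HasCopy (box 0 k) (V : Set (Fin n → ℕ)) → (V.card : ℝ) ≤ sauerBound k 0 n := by
    intro n V hV
    have : V = ∅ := by
      by_contra h
      exact hV (hasCopy_zero V (Finset.nonempty_iff_ne_empty.2 h))
    simp [this, sauerBound]
  induction n with
  | zero =>
    intro m V _ hV
    cases m with
    | zero => exact zero_case 0 V hV
    | succ m =>
      have h1 : (V.card : ℝ) ≤ 1 := by
        exact_mod_cast Finset.card_le_one_of_subsingleton V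
      refine h1.trans ?_
      unfold sauerBound
      rw [Finset.sum_range_succ']
      simp
  | succ n ih =>
    intro m V hVk hV
    cases m with
    | zero => exact zero_case _ V hV
    | succ m =>
      let ch : (Fin (n + 1) → ℕ) → Prop := fun x =>
        ∀ s ≤ x 0, (Fin.cons s (Fin.tail x) : Fin (n + 1) → ℕ) ∈ V
      let φ : (Fin (n + 1) → ℕ) → ℕ := fun x => if ch x then x 0 else x 0 - 1
      have hφ : ∀ x ∈ V, φ x ∈ Finset.range (k + 1) := by
        intro x hx
        have := hVk x hx 0
        simp only [φ, Finset.mem_range]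
        split_ifs <;> omega
      have ch0 : ∀ x ∈ V, ¬ ch x → 1 ≤ x 0 := by
        intro x hx hc
        by_contra h0
        apply hc
        intro s hs
        have : s = x 0 := by omega
        subst this
        have : (Fin.cons (x 0) (Fin.tail x) : Fin (n + 1) → ℕ) = x := Fin.cons_self_tail x
        rwa [this]
      have hinj : ∀ x ∈ V, ∀ y ∈ V, φ x = φ y → Fin.tail x = Fin.tail y → x = y := by
        have key : ∀ x ∈ V, ∀ y ∈ V, φ x = φ y → Fin.tail x = Fin.tail y → ch x → ch y := by
          intro x hx y hy h1 h2 hx'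
          by_contra hy'
          simp only [φ, if_pos hx', if_neg hy'] at h1
          have := ch0 y hy hy'
          apply hy'
          intro s hs
          by_cases hs' : s = y 0
          · subst hs'
            have : (Fin.cons (y 0) (Fin.tail y) : Fin (n + 1) → ℕ) = y := Fin.cons_self_tail y
            rwa [this]
          · rw [← h2]
            exact hx' s (by omega)
        intro x hx y hy h1 h2
        have h0 : x 0 = y 0 := by
          by_cases hx' : ch x
          · have hy' := key x hx y hy h1 h2 hx'
            simpa only [φ, if_pos hx', if_pos hy'] using h1
          · have hy' : ¬ ch y := fun h => hx' (key y hy x hx h1.symm h2.symm h)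
            simp only [φ, if_neg hx', if_neg hy'] at h1
            have := ch0 x hx hx'
            have := ch0 y hy hy'
            omega
        rw [← Fin.cons_self_tail x, ← Fin.cons_self_tail y, h0, h2]
      let L : ℕ → Finset (Fin (n + 1) → ℕ) := fun t => V.filter (fun x => φ x = t)
      have hcard : V.card = ∑ t ∈ Finset.range (k + 1), (L t).card :=
        Finset.card_eq_sum_card_fiberwise hφ
      have himg : ∀ t, ((L t).image Fin.tail).card = (L t).card := by
        intro t
        apply Finset.card_image_of_injOn
        intro x hx y hy hxy
        simp only [L, Finset.coe_filter, Set.mem_ofPred_eq] at hx hy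
        exact hinj x hx.1 y hy.1 (hx.2.trans hy.2.symm) hxy
      have himgk : ∀ t, ∀ y ∈ (L t).image Fin.tail, ∀ i, y i ≤ k := by
        intro t y hy i
        obtain ⟨x, hx, rfl⟩ := Finset.mem_image.1 hy
        exact hVk x (Finset.mem_filter.1 hx).1 i.succ
      have hlow : ∀ t ∈ Finset.range k, ((L t).card : ℝ) ≤ sauerBound k (m + 1) n := by
        intro t _
        rw [← himg t]
        apply ih (m + 1) _ (himgk t)
        rintro ⟨f, hf, hfV⟩
        apply hV
        have hlift : ∀ y : Fin n → ℕ, ∃ x : Fin (n + 1) → ℕ,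
            y ∈ (L t).image Fin.tail → x ∈ L t ∧ Fin.tail x = y := by
          intro y
          by_cases hy : y ∈ (L t).image Fin.tail
          · obtain ⟨x, hx, rfl⟩ := Finset.mem_image.1 hy
            exact ⟨x, fun _ => ⟨hx, rfl⟩⟩
          · exact ⟨0, fun h => absurd h hy⟩
        choose s hs using hlift
        have hmem : ∀ a ∈ box (m + 1) k, f a ∈ (L t).image Fin.tail := by
          intro a ha
          exact Finset.mem_coe.1 (hfV ⟨a, ha, rfl⟩)
        refine ⟨fun a => s (f a), ?_, ?_⟩
        · intro a ha b hb
          rw [← hf a ha b hb]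
          obtain ⟨ha1, ha2⟩ := hs _ (hmem a ha)
          obtain ⟨hb1, hb2⟩ := hs _ (hmem b hb)
          by_cases hab : f a = f b
          · simp [hab]
          · rw [dist_succ_eq, ha2, hb2]
            apply max_eq_right
            refine le_trans ?_ (one_le_dist_of_ne _ _ hab)
            have hr : ∀ x ∈ L t, x 0 = t ∨ x 0 = t + 1 := by
              intro x hx
              obtain ⟨hx1, hx2⟩ := Finset.mem_filter.1 hx
              by_cases hc : ch x
              · left
                simpa only [φ, if_pos hc] using hx2
              · right
                simp only [φ, if_neg hc] at hx2
                have := ch0 x hx1 hc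
                omega
            rw [Nat.dist_eq]
            change |((s (f a) 0 : ℕ) : ℝ) - ((s (f b) 0 : ℕ) : ℝ)| ≤ 1
            rcases hr _ ha1 with h | h <;> rcases hr _ hb1 with h' | h' <;> rw [h, h'] <;> simp
        · rintro _ ⟨a, ha, rfl⟩
          exact (Finset.mem_filter.1 (hs _ (hmem a ha)).1).1
      have htop : ((L k).card : ℝ) ≤ sauerBound k m n := by
        rw [← himg k]
        apply ih m _ (himgk k)
        rintro ⟨f, hf, hfV⟩
        apply hV
        have hmem : ∀ a ∈ box m k, ∀ s ≤ k, (Fin.cons s (f a) : Fin (n + 1) → ℕ) ∈ V := by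
          intro a ha s hs
          have h1 : f a ∈ (L k).image Fin.tail := Finset.mem_coe.1 (hfV ⟨a, ha, rfl⟩)
          obtain ⟨x, hx, hxa⟩ := Finset.mem_image.1 h1
          obtain ⟨hx1, hx2⟩ := Finset.mem_filter.1 hx
          have hxk := hVk x hx1 0
          by_cases hc : ch x
          · simp only [φ, if_pos hc] at hx2
            rw [← hxa]
            exact hc s (by omega)
          · simp only [φ, if_neg hc] at hx2
            omega
        have htail : ∀ a ∈ box (m + 1) k, Fin.tail a ∈ box m k := fun a ha i => ha i.succ
        refine ⟨fun a => Fin.cons ⌊a 0⌋₊ (f (Fin.tail a)), ?_, ?_⟩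
        · intro a ha b hb
          rw [dist_succ_eq, dist_succ_eq a b]
          simp only [Fin.cons_zero, Fin.tail_cons]
          rw [hf _ (htail a ha) _ (htail b hb)]
          obtain ⟨p, _, hp⟩ := ha 0
          obtain ⟨q, _, hq⟩ := hb 0
          rw [hp, hq, Nat.floor_natCast, Nat.floor_natCast, Nat.dist_eq, Real.dist_eq]
        · rintro _ ⟨a, ha, rfl⟩
          obtain ⟨p, hp1, hp⟩ := ha 0
          apply hmem _ (htail a ha)
          rw [hp, Nat.floor_natCast]
          exact hp1
      rw [← sauerBound_rec k m n hk, hcard, Finset.sum_range_succ]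
      push_cast
      refine add_le_add ?_ htop
      calc _ ≤ ∑ t ∈ Finset.range k, sauerBound k (m + 1) n := Finset.sum_le_sum hlow
        _ = _ := by simp

lemma lower_of_coloring (k m n N : ℕ) (hk : 1 ≤ k) (c : (Fin n → ℝ) → Fin N)
    (hc : ∀ i, ¬ HasCopy (box m k) {x | c x = i}) :
    ((k : ℝ) + 1) ^ n ≤ N * sauerBound k m n := by
  classical
  let A : Finset (Fin n → ℕ) := Fintype.piFinset (fun _ => Finset.range (k + 1))
  have hA : A.card = (k + 1) ^ n := by simp [A]
  let e : (Fin n → ℕ) → (Fin n → ℝ) := fun x i => (x i : ℝ)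
  have he : ∀ x y, dist (e x) (e y) = dist x y := by
    intro x y
    apply le_antisymm
    · rw [dist_pi_le_iff dist_nonneg]
      intro i
      exact dist_le_pi_dist x y i
    · rw [dist_pi_le_iff dist_nonneg]
      intro i
      exact dist_le_pi_dist (e x) (e y) i
  have h1 : A.card = ∑ i : Fin N, (A.filter (fun x => c (e x) = i)).card :=
    Finset.card_eq_sum_card_fiberwise (fun x _ => Finset.mem_coe.2 (Finset.mem_univ _))
  have h2 : ∀ i : Fin N, ((A.filter (fun x => c (e x) = i)).card : ℝ) ≤ sauerBound k m n := by
    intro i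
    apply card_le_sauer k hk
    · intro x hx j
      have := (Finset.mem_filter.1 hx).1
      simp only [A, Fintype.mem_piFinset, Finset.mem_range] at this
      have := this j
      omega
    · rintro ⟨f, hf, hfV⟩
      apply hc i
      refine ⟨fun a => e (f a), fun a ha b hb => by rw [he, hf a ha b hb], ?_⟩
      rintro _ ⟨a, ha, rfl⟩
      exact (Finset.mem_filter.1 (Finset.mem_coe.1 (hfV ⟨a, ha, rfl⟩))).2
  have h3 : ((k : ℝ) + 1) ^ n = (A.card : ℝ) := by rw [hA]; push_cast; rfl
  rw [h3, h1]
  push_cast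
  calc _ ≤ ∑ i : Fin N, sauerBound k m n := Finset.sum_le_sum (fun i _ => h2 i)
    _ = _ := by simp

lemma exists_good_translate (k n : ℕ) (U : Finset (Fin n → ZMod (k + 1))) :
    ∃ t : Fin n → ZMod (k + 1),
      ((U.filter (fun u => ¬ ∀ i, u i ≠ t i)).card : ℝ) ≤
        (1 - ((k : ℝ) / (k + 1)) ^ n) * U.card := by
  classical
  by_contra hcon
  rw [not_exists] at hcon
  have h := fun t => not_le.1 (hcon t)
  have hcount : ∀ u : Fin n → ZMod (k + 1),
      (Finset.univ.filter (fun t : Fin n → ZMod (k + 1) => ∀ i, u i ≠ t i)).card = k ^ n := by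
    intro u
    have : (Finset.univ.filter (fun t : Fin n → ZMod (k + 1) => ∀ i, u i ≠ t i)) =
        Fintype.piFinset (fun i => Finset.univ.erase (u i)) := by
      ext t
      simp [Fintype.mem_piFinset, eq_comm]
    rw [this, Fintype.card_piFinset]
    simp [Finset.card_erase_of_mem, ZMod.card]
  have hdc : ∑ t : Fin n → ZMod (k + 1), (U.filter (fun u => ∀ i, u i ≠ t i)).card =
      U.card * k ^ n := by
    have := Finset.sum_card_bipartiteAbove_eq_sum_card_bipartiteBelow (s := U)
      (t := (Finset.univ : Finset (Fin n → ZMod (k + 1)))) (fun u t => ∀ i, u i ≠ t i)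
    unfold Finset.bipartiteAbove Finset.bipartiteBelow at this
    rw [← this, Finset.sum_congr rfl (fun u _ => hcount u)]
    simp
  have hsplit : ∀ t : Fin n → ZMod (k + 1), ((U.filter (fun u => ∀ i, u i ≠ t i)).card : ℝ) <
      ((k : ℝ) / (k + 1)) ^ n * U.card := by
    intro t
    have h1 := Finset.card_filter_add_card_filter_not (s := U) (fun u => ∀ i, u i ≠ t i)
    have h2 : ((U.filter (fun u => ∀ i, u i ≠ t i)).card : ℝ) +
      (U.filter (fun u => ¬ ∀ i, u i ≠ t i)).card = U.card := by exact_mod_cast h1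
    have := h t
    linarith
  have hlt := Finset.sum_lt_sum_of_nonempty
    (Finset.univ_nonempty (α := Fin n → ZMod (k + 1))) (fun t _ => hsplit t)
  have hdc' : ∑ t : Fin n → ZMod (k + 1), ((U.filter (fun u => ∀ i, u i ≠ t i)).card : ℝ) =
      U.card * (k : ℝ) ^ n := by exact_mod_cast hdc
  rw [hdc'] at hlt
  simp only [Finset.sum_const, Finset.card_univ, Fintype.card_pi, ZMod.card, Finset.prod_const,
    Fintype.card_fin, nsmul_eq_mul] at hlt
  push_cast at hlt
  rw [div_pow] at hlt
  have hpos : ((k : ℝ) + 1) ^ n ≠ 0 := by positivity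
  have : ((k : ℝ) + 1) ^ n * ((k : ℝ) ^ n / ((k : ℝ) + 1) ^ n * U.card) = U.card * (k : ℝ) ^ n := by
    field_simp
  rw [this] at hlt
  exact lt_irrefl _ hlt

lemma greedy_s2 (k n : ℕ) (N : ℕ) : ∃ T U : Finset (Fin n → ZMod (k + 1)), T.card ≤ N ∧
    (∀ u, u ∉ U → ∃ t ∈ T, ∀ i, u i ≠ t i) ∧
    (U.card : ℝ) ≤ (1 - ((k : ℝ) / (k + 1)) ^ n) ^ N * ((k : ℝ) + 1) ^ n := by
  classical
  have hp : 0 ≤ 1 - ((k : ℝ) / (k + 1)) ^ n := by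
    have : ((k : ℝ) / (k + 1)) ^ n ≤ 1 := by
      apply pow_le_one₀ (by positivity)
      rw [div_le_one (by positivity)]
      linarith
    linarith
  induction N with
  | zero =>
    refine ⟨∅, Finset.univ, by simp, fun u hu => absurd (Finset.mem_univ u) hu, ?_⟩
    simp [ZMod.card]
  | succ N ih =>
    obtain ⟨T, U, hT, hU, hc⟩ := ih
    obtain ⟨t, ht⟩ := exists_good_translate k n U
    refine ⟨insert t T, U.filter (fun u => ¬ ∀ i, u i ≠ t i), ?_, ?_, ?_⟩
    · exact (Finset.card_insert_le _ _).trans (by omega)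
    · intro u hu
      by_cases h : u ∈ U
      · refine ⟨t, Finset.mem_insert_self _ _, ?_⟩
        by_contra h'
        exact hu (Finset.mem_filter.2 ⟨h, h'⟩)
      · obtain ⟨s, hs, hs'⟩ := hU u h
        exact ⟨s, Finset.mem_insert_of_mem hs, hs'⟩
    · refine ht.trans ?_
      rw [pow_succ' _ N, mul_assoc]
      exact mul_le_mul_of_nonneg_left hc hp

lemma exists_cover_s2 (k n : ℕ) (hk : 1 ≤ k) : ∃ T : Finset (Fin n → ZMod (k + 1)),
    (∀ u : Fin n → ZMod (k + 1), ∃ t ∈ T, ∀ i, u i ≠ t i) ∧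
    (T.card : ℝ) ≤ (n * Real.log k + 2) * (((k : ℝ) + 1) / k) ^ n := by
  classical
  have hk0 : (0 : ℝ) < k := by exact_mod_cast hk
  set r : ℝ := (((k : ℝ) + 1) / k) ^ n with hr
  have hr1 : 1 ≤ r := by
    apply one_le_pow₀
    rw [le_div_iff₀ hk0]; linarith
  have hpr : ((k : ℝ) / (k + 1)) ^ n = r⁻¹ := by
    rw [hr, ← inv_pow, inv_div]
  have hlog : 0 ≤ Real.log k := Real.log_nonneg (by exact_mod_cast hk)
  let N : ℕ := ⌈n * Real.log k * r⌉₊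
  have hN1 : n * Real.log k * r ≤ N := Nat.le_ceil _
  have hN2 : (N : ℝ) < n * Real.log k * r + 1 := Nat.ceil_lt_add_one (by positivity)
  obtain ⟨T, U, hT, hU, hc⟩ := greedy_s2 k n N
  have hUr : (U.card : ℝ) ≤ r := by
    refine hc.trans ?_
    rw [hpr]
    have h0 : 0 ≤ 1 - r⁻¹ := by
      have := inv_le_one_of_one_le₀ hr1
      linarith
    have h1 : 1 - r⁻¹ ≤ Real.exp (-r⁻¹) := by
      have := Real.add_one_le_exp (-r⁻¹)
      linarith
    have h2 : (1 - r⁻¹) ^ N ≤ Real.exp (-(n * Real.log k)) := by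
      refine (pow_le_pow_left₀ h0 h1 N).trans ?_
      rw [← Real.exp_nat_mul]
      apply Real.exp_le_exp.2
      have : n * Real.log k ≤ N * r⁻¹ := by
        rw [← div_eq_mul_inv, le_div_iff₀ (by positivity)]
        exact hN1
      linarith
    have h3 : Real.exp (-(n * Real.log k)) = ((k : ℝ) ^ n)⁻¹ := by
      rw [Real.exp_neg, Real.exp_nat_mul, Real.exp_log hk0]
    rw [h3] at h2
    calc _ ≤ ((k : ℝ) ^ n)⁻¹ * ((k : ℝ) + 1) ^ n :=
          mul_le_mul_of_nonneg_right h2 (by positivity)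
      _ = r := by rw [hr, div_pow]; field_simp
  refine ⟨T ∪ U.image (fun u => u + 1), ?_, ?_⟩
  · intro u
    by_cases h : u ∈ U
    · refine ⟨u + 1, Finset.mem_union_right _ (Finset.mem_image_of_mem _ h), ?_⟩
      intro i hi
      have : Fact (1 < k + 1) := ⟨by omega⟩
      simp at hi
    · obtain ⟨t, ht, h'⟩ := hU u h
      exact ⟨t, Finset.mem_union_left _ ht, h'⟩
  · have h1 : ((T ∪ U.image (fun u => u + 1)).card : ℝ) ≤ N + U.card := by
      have := (Finset.card_union_le T (U.image (fun u => u + 1))).trans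
        (add_le_add hT Finset.card_image_le)
      exact_mod_cast this
    nlinarith

lemma all_residues (k : ℕ) (z : ℤ) (t : ZMod (k + 1)) : ∃ j : ℕ, j ≤ k ∧
    ((z + j : ℤ) : ZMod (k + 1)) = t := by
  refine ⟨(t - (z : ZMod (k + 1))).val, ?_, ?_⟩
  · have := ZMod.val_lt (t - (z : ZMod (k + 1)))
    omega
  · push_cast
    rw [ZMod.natCast_zmod_val]
    ring

lemma no_copy (k m n : ℕ) (hk : 1 ≤ k) (hm : 1 ≤ m) (t : Fin n → ZMod (k + 1))
    (A : Set (Fin n → ℝ)) (hA : ∀ x ∈ A, ∀ i, ((⌊x i⌋ : ℤ) : ZMod (k + 1)) ≠ t i) :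
    ¬ HasCopy (box m k) A := by
  rintro ⟨f, hf, hfA⟩
  let p : ℕ → (Fin m → ℝ) := fun j _ => (j : ℝ)
  have hp : ∀ j ≤ k, p j ∈ box m k := fun j hj i => ⟨j, hj, rfl⟩
  have : Nonempty (Fin m) := ⟨⟨0, hm⟩⟩
  have hd : ∀ a ≤ k, ∀ b ≤ k, dist (f (p a)) (f (p b)) = |(a : ℝ) - b| := by
    intro a ha b hb
    rw [hf _ (hp a ha) _ (hp b hb)]
    exact dist_pi_const (a : ℝ) (b : ℝ)
  have hkd : dist (f (p 0)) (f (p k)) = k := by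
    rw [hd 0 (by omega) k le_rfl]
    simp
  have hex : ∃ i, (k : ℝ) ≤ dist (f (p 0) i) (f (p k) i) := by
    by_contra! h
    have := (dist_pi_lt_iff (by exact_mod_cast hk : (0 : ℝ) < k)).2 h
    linarith
  obtain ⟨i, hi⟩ := hex
  have hle : ∀ a ≤ k, ∀ b ≤ k, |f (p a) i - f (p b) i| ≤ |(a : ℝ) - b| := by
    intro a ha b hb
    rw [← hd a ha b hb]
    exact dist_le_pi_dist (f (p a)) (f (p b)) i
  have hmem : ∀ j ≤ k, f (p j) ∈ A := fun j hj => hfA ⟨_, hp j hj, rfl⟩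
  have h1 : ∀ j ≤ k, |f (p 0) i - f (p j) i| ≤ j ∧ |f (p j) i - f (p k) i| ≤ k - j := by
    intro j hj
    have hjk : (j : ℝ) ≤ k := by exact_mod_cast hj
    constructor
    · have := hle 0 (by omega) j hj
      simpa using this
    · have := hle j hj k le_rfl
      rwa [abs_sub_comm (j : ℝ), abs_of_nonneg (by linarith : (0 : ℝ) ≤ k - j)] at this
  rw [Real.dist_eq] at hi
  rcases le_abs.1 hi with h | h
  · -- decreasing
    have heq : ∀ j ≤ k, f (p (k - j)) i = f (p k) i + (j : ℕ) := by
      intro j hj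
      obtain ⟨ha, hb⟩ := h1 (k - j) (by omega)
      rw [Nat.cast_sub hj] at ha hb
      have := (abs_le.1 ha).2
      have := (abs_le.1 hb).2
      linarith
    obtain ⟨j, hj, hjt⟩ := all_residues k ⌊f (p k) i⌋ (t i)
    apply hA _ (hmem (k - j) (by omega)) i
    rw [heq j hj, Int.floor_add_natCast, hjt]
  · have heq : ∀ j ≤ k, f (p j) i = f (p 0) i + (j : ℕ) := by
      intro j hj
      obtain ⟨ha, hb⟩ := h1 j hj
      have := (abs_le.1 ha).1
      have := (abs_le.1 hb).1
      linarith
    obtain ⟨j, hj, hjt⟩ := all_residues k ⌊f (p 0) i⌋ (t i)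
    apply hA _ (hmem j hj) i
    rw [heq j hj, Int.floor_add_natCast, hjt]

lemma exists_coloring (k m n : ℕ) (hk : 1 ≤ k) (hm : 1 ≤ m) : ∃ N : ℕ,
    (N : ℝ) ≤ (n * Real.log k + 2) * (((k : ℝ) + 1) / k) ^ n ∧
    N ∈ {N : ℕ | ∃ c : (Fin n → ℝ) → Fin N, ∀ i : Fin N, ¬ HasCopy (box m k) {x | c x = i}} := by
  obtain ⟨T, hT, hTc⟩ := exists_cover_s2 k n hk
  refine ⟨T.card, hTc, ?_⟩
  choose g hgT hg using hT
  let e := T.equivFin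
  let q : (Fin n → ℝ) → (Fin n → ZMod (k + 1)) := fun x i => ((⌊x i⌋ : ℤ) : ZMod (k + 1))
  refine ⟨fun x => e ⟨g (q x), hgT _⟩, ?_⟩
  intro i
  apply no_copy k m n hk hm (e.symm i : Fin n → ZMod (k + 1))
  intro x hx j
  have hx' : e ⟨g (q x), hgT _⟩ = i := hx
  rw [← hx', Equiv.symm_apply_apply]
  exact hg (q x) j

lemma chrom_upper (k m n : ℕ) (hk : 1 ≤ k) (hm : 1 ≤ m) :
    (chrom (box m k) n : ℝ) ≤ (n * Real.log k + 2) * (((k : ℝ) + 1) / k) ^ n := by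
  obtain ⟨N, h1, h2⟩ := exists_coloring k m n hk hm
  have : chrom (box m k) n ≤ N := Nat.sInf_le h2
  exact le_trans (by exact_mod_cast this) h1

lemma chrom_lower (k m n : ℕ) (hk : 1 ≤ k) (hm : 1 ≤ m) :
    ((k : ℝ) + 1) ^ n ≤ chrom (box m k) n * sauerBound k m n := by
  obtain ⟨N, h1, h2⟩ := exists_coloring k m n hk hm
  obtain ⟨c, hc⟩ := Nat.sInf_mem ⟨N, h2⟩
  exact lower_of_coloring k m n _ hk c hc

lemma ratio_tendsto (k a : ℕ) (hk : 1 ≤ k) :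
    Tendsto (fun n : ℕ => ∑ j ∈ Finset.range (a + 1),
      ((n : ℝ) ^ j / ((Nat.factorial j : ℝ) * (k : ℝ) ^ j)) *
        ((Nat.factorial a : ℝ) * (k : ℝ) ^ a / (n : ℝ) ^ a)) atTop (nhds 1) := by
  have hk0 : (0 : ℝ) < k := by exact_mod_cast hk
  have h1 : (1 : ℝ) = ∑ j ∈ Finset.range (a + 1), if j = a then (1 : ℝ) else 0 := by simp
  rw [h1]
  apply tendsto_finsetSum
  intro j hj
  by_cases hja : j = a
  · subst hja
    rw [if_pos rfl]
    apply tendsto_const_nhds.congr'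
    filter_upwards [Filter.eventually_gt_atTop 0] with n hn
    have hn' : (0 : ℝ) < n := by exact_mod_cast hn
    have : (Nat.factorial j : ℝ) ≠ 0 := by positivity
    field_simp
  · rw [if_neg hja]
    have hlt : j < a := by
      have := Finset.mem_range.1 hj
      omega
    have h2 := ((tendsto_pow_div_pow_atTop_zero (𝕜 := ℝ) hlt).comp
      (tendsto_natCast_atTop_atTop (R := ℝ))).const_mul
      (((Nat.factorial a : ℝ) * (k : ℝ) ^ a) / ((Nat.factorial j : ℝ) * (k : ℝ) ^ j))
    rw [mul_zero] at h2
    refine h2.congr (fun n => ?_)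
    simp only [Function.comp]
    ring

lemma sauerBound_le (k m n : ℕ) :
    sauerBound k m n ≤ (k : ℝ) ^ n *
      ∑ j ∈ Finset.range m, ((n : ℝ) ^ j / ((Nat.factorial j : ℝ) * (k : ℝ) ^ j)) := by
  unfold sauerBound
  rw [Finset.mul_sum]
  apply Finset.sum_le_sum
  intro j _
  have h := Nat.choose_le_pow_div (α := ℝ) j n
  calc _ ≤ ((n : ℝ) ^ j / (Nat.factorial j : ℝ)) * ((k : ℝ) ^ n / (k : ℝ) ^ j) :=
        mul_le_mul_of_nonneg_right h (by positivity)
    _ = _ := by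
        rw [← div_div]
        ring

lemma chrom_lower_eventually (k a : ℕ) (hk : 1 ≤ k) (ε : ℝ) (hε : 0 < ε) :
    ∀ᶠ n : ℕ in atTop,
      (1 - ε) * ((Nat.factorial (a + 1 - 1) : ℝ) * (k : ℝ) ^ (a + 1 - 1) /
        (n : ℝ) ^ (a + 1 - 1)) * (((k : ℝ) + 1) / k) ^ n ≤ (chrom (box (a + 1) k) n : ℝ) := by
  have hk0 : (0 : ℝ) < k := by exact_mod_cast hk
  simp only [Nat.add_sub_cancel]
  by_cases hε1 : 1 - ε ≤ 0
  · filter_upwards with n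
    refine le_trans ?_ (Nat.cast_nonneg _)
    rw [mul_assoc]
    exact mul_nonpos_of_nonpos_of_nonneg hε1 (by positivity)
  · rw [not_le] at hε1
    have ht := (ratio_tendsto k a hk).const_mul (1 - ε)
    have hev := ht.eventually (gt_mem_nhds (by linarith : (1 - ε) * 1 < 1))
    filter_upwards [hev] with n hn
    have h1 := chrom_lower k (a + 1) n hk (by omega)
    have h2 := sauerBound_le k (a + 1) n
    rw [← Finset.sum_mul] at hn
    set S := ∑ j ∈ Finset.range (a + 1), ((n : ℝ) ^ j / ((Nat.factorial j : ℝ) * (k : ℝ) ^ j))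
    set E := (Nat.factorial a : ℝ) * (k : ℝ) ^ a / (n : ℝ) ^ a
    have hE : 0 ≤ E := by positivity
    set C := (chrom (box (a + 1) k) n : ℝ)
    have hC : 0 ≤ C := Nat.cast_nonneg _
    have h3 : (((k : ℝ) + 1) / k) ^ n ≤ C * S := by
      rw [div_pow, div_le_iff₀ (by positivity)]
      calc _ ≤ C * sauerBound k (a + 1) n := h1
        _ ≤ C * ((k : ℝ) ^ n * S) := mul_le_mul_of_nonneg_left h2 hC
        _ = _ := by ring
    calc (1 - ε) * E * (((k : ℝ) + 1) / k) ^ n ≤ (1 - ε) * E * (C * S) :=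
          mul_le_mul_of_nonneg_left h3 (by positivity)
      _ = C * ((1 - ε) * (S * E)) := by ring
      _ ≤ C * 1 := mul_le_mul_of_nonneg_left hn.le hC
      _ = C := mul_one C

lemma chrom_upper_eventually (k m : ℕ) (hk : 2 ≤ k) (hm : 1 ≤ m) (ε : ℝ) (hε : 0 < ε) :
    ∀ᶠ n : ℕ in atTop, (chrom (box m k) n : ℝ) ≤
      (1 + ε) * Real.log k * (n : ℝ) * (((k : ℝ) + 1) / k) ^ n := by
  have hlog : 0 < Real.log k := Real.log_pos (by exact_mod_cast hk)
  have ht := (tendsto_natCast_atTop_atTop (R := ℝ)).const_mul_atTop (mul_pos hε hlog)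
  filter_upwards [ht.eventually_ge_atTop 2] with n hn
  refine (chrom_upper k m n (by omega) hm).trans ?_
  apply mul_le_mul_of_nonneg_right _ (by positivity)
  linarith

lemma root_tendsto (C b r : ℝ) (hC : 0 < C) (hr : 0 < r) :
    Tendsto (fun n : ℕ => (C * (n : ℝ) ^ b * r ^ n) ^ (1 / (n : ℝ))) atTop (nhds r) := by
  have h0 : Tendsto (fun n : ℕ => 1 / (n : ℝ)) atTop (nhds 0) := tendsto_one_div_atTop_nhds_zero_nat
  have h1 : Tendsto (fun n : ℕ => C ^ (1 / (n : ℝ))) atTop (nhds 1) := by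
    have := (Real.continuousAt_const_rpow (b := 0) hC.ne').tendsto.comp h0
    rwa [Real.rpow_zero] at this
  have h2 : Tendsto (fun n : ℕ => ((n : ℝ) ^ (1 / (n : ℝ))) ^ b) atTop (nhds 1) := by
    have := (tendsto_rpow_div.comp (tendsto_natCast_atTop_atTop (R := ℝ))).rpow_const
      (p := b) (Or.inl one_ne_zero)
    rwa [Real.one_rpow] at this
  have h3 := (h1.mul h2).mul_const r
  rw [one_mul, one_mul] at h3
  refine h3.congr' ?_
  filter_upwards [Filter.eventually_gt_atTop 0] with n hn
  have hn' : (0 : ℝ) < n := by exact_mod_cast hn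
  rw [Real.mul_rpow (by positivity) (by positivity), Real.mul_rpow hC.le (by positivity),
    ← Real.rpow_mul hn'.le, ← Real.rpow_mul hn'.le, ← Real.rpow_natCast r n,
    ← Real.rpow_mul hr.le, mul_comm b, mul_one_div_cancel hn'.ne', Real.rpow_one]

/-- For `k ≥ 2` and `m ≥ 1`:
`(1+o(1)) ((m-1)! k^(m-1) / n^(m-1)) ((k+1)/k)^n ≤ χ(ℝ^n_∞, B_k^m)
  ≤ (1+o(1)) (ln k) n ((k+1)/k)^n`,
and in particular `χ(ℝ^n_∞, B_k^m)^(1/n) → (k+1)/k`. -/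
theorem chi_box_power (k m : ℕ) (hk : 2 ≤ k) (hm : 1 ≤ m) :
    (∀ ε : ℝ, 0 < ε → ∃ N : ℕ, ∀ n : ℕ, N ≤ n →
      (1 - ε) * ((Nat.factorial (m - 1) : ℝ) * (k : ℝ) ^ (m - 1) / (n : ℝ) ^ (m - 1)) *
          (((k : ℝ) + 1) / k) ^ n ≤ (chrom (box m k) n : ℝ) ∧
      (chrom (box m k) n : ℝ) ≤ (1 + ε) * Real.log k * (n : ℝ) * (((k : ℝ) + 1) / k) ^ n) ∧
    Tendsto (fun n : ℕ => (chrom (box m k) n : ℝ) ^ (1 / (n : ℝ)))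
      atTop (nhds (((k : ℝ) + 1) / k)) := by
  obtain ⟨a, rfl⟩ : ∃ a, m = a + 1 := ⟨m - 1, by omega⟩
  have hmain : ∀ ε : ℝ, 0 < ε → ∃ N : ℕ, ∀ n : ℕ, N ≤ n →
      (1 - ε) * ((Nat.factorial (a + 1 - 1) : ℝ) * (k : ℝ) ^ (a + 1 - 1) /
          (n : ℝ) ^ (a + 1 - 1)) *
          (((k : ℝ) + 1) / k) ^ n ≤ (chrom (box (a + 1) k) n : ℝ) ∧
      (chrom (box (a + 1) k) n : ℝ) ≤
        (1 + ε) * Real.log k * (n : ℝ) * (((k : ℝ) + 1) / k) ^ n := by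
    intro ε hε
    have h1 := chrom_lower_eventually k a (by omega) ε hε
    have h2 := chrom_upper_eventually k (a + 1) hk hm ε hε
    exact Filter.eventually_atTop.1 (h1.and h2)
  refine ⟨hmain, ?_⟩
  have hk0 : (0 : ℝ) < k := by positivity
  have hlog : 0 < Real.log k := Real.log_pos (by exact_mod_cast hk)
  obtain ⟨N, hN⟩ := hmain (1 / 2) (by norm_num)
  have hlow := root_tendsto ((1 / 2) * ((Nat.factorial a : ℝ) * (k : ℝ) ^ a)) (-(a : ℝ))
    (((k : ℝ) + 1) / k) (by positivity) (by positivity)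
  have hup := root_tendsto ((3 / 2) * Real.log k) 1
    (((k : ℝ) + 1) / k) (by positivity) (by positivity)
  refine tendsto_of_tendsto_of_tendsto_of_le_of_le' hlow hup ?_ ?_
  · filter_upwards [Filter.eventually_ge_atTop N, Filter.eventually_gt_atTop 0] with n hn hn0
    have hn' : (0 : ℝ) < n := by exact_mod_cast hn0
    apply Real.rpow_le_rpow (by positivity) _ (by positivity)
    refine le_trans (le_of_eq ?_) (hN n hn).1
    rw [Real.rpow_neg hn'.le, Real.rpow_natCast, Nat.add_sub_cancel]
    ring
  · filter_upwards [Filter.eventually_ge_atTop N] with n hn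
    apply Real.rpow_le_rpow (by positivity) _ (by positivity)
    refine le_trans (hN n hn).2 (le_of_eq ?_)
    rw [Real.rpow_one]
    ring
end

section
/- Let k, m ∈ ℕ and let λ_1, …, λ_m be positive reals. Then lim_{n→∞} χ(ℝ^n_∞, B_k(λ_1) × ⋯ × B_k(λ_m))^{1/n} = (k+1)/k; that is, χ(ℝ^n_∞, B_k(λ_1) × ⋯ × B_k(λ_m)) = ((k+1)/k + o(1))^n. -/
open Set Filter

/-- The Cartesian product `B_k(λ₁) × ⋯ × B_k(λ_m)` of arithmetic progressions
`B_k(λ) = {0, λ, …, kλ}`, realised inside `ℝ^m` with the max metric. -/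
def gridAP (m k : ℕ) (lam : Fin m → ℝ) : Set (Fin m → ℝ) :=
  {x | ∀ i, ∃ j : ℕ, j ≤ k ∧ x i = (j : ℝ) * lam i}

section Lower

variable {m k : ℕ}

/-- the scalar attached to a letter -/
noncomputable def gphi (lam : Fin m → ℝ) (q : Fin m → Fin (k+1)) : ℝ := ∑ i, ((q i : ℕ) : ℝ) * lam i

/-- weights of the sub-grid -/
noncomputable def gW (lam : Fin m → ℝ) (J : Finset (Fin m)) (p : Fin m → Fin (k+1)) : Fin m → ℝ :=
  fun i => if i ∈ J then ((p i : ℕ) : ℝ) * lam i else 0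

def GEmb (lam : Fin m → ℝ) (J : Finset (Fin m)) {n : ℕ}
    (S : Finset (Fin n → (Fin m → Fin (k+1)))) : Prop :=
  ∃ f : (Fin m → Fin (k+1)) → (Fin n → (Fin m → Fin (k+1))),
    (∀ p, f p ∈ S) ∧ (∀ p q, (∀ i ∈ J, p i = q i) → f p = f q) ∧
    ∀ p q, dist (fun c => gphi lam (f p c)) (fun c => gphi lam (f q c)) =
      dist (gW lam J p) (gW lam J q)

/-- intersection of the first slices -/
def gP {Y : Type*} [DecidableEq Y] (A : ℕ → Finset Y) : ℕ → Finset Y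
  | 0 => A 0
  | (j+1) => gP A j ∩ A (j+1)

lemma gP_sub {Y : Type*} [DecidableEq Y] (A : ℕ → Finset Y) (j t : ℕ) (h : t ≤ j) :
    gP A j ⊆ A t := by
  induction j with
  | zero => obtain rfl : t = 0 := by omega
            exact subset_rfl
  | succ j ih =>
    rcases Nat.lt_or_ge t (j+1) with h' | h'
    · exact Finset.inter_subset_left.trans (ih (by omega))
    · obtain rfl : t = j+1 := by omega
      exact Finset.inter_subset_right

lemma gsum_le {Y : Type*} [DecidableEq Y] (A : ℕ → Finset Y) (j u : ℕ)
    (h : ∀ i < j, (gP A i ∪ A (i+1)).card ≤ u) :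
    ∑ t ∈ Finset.range (j+1), (A t).card ≤ j * u + (gP A j).card := by
  induction j with
  | zero => simp [gP]
  | succ j ih =>
    rw [Finset.sum_range_succ]
    have h1 := ih (fun i hi => h i (by omega))
    have h2 := h j (by omega)
    have h3 := Finset.card_union_add_card_inter (gP A j) (A (j+1))
    simp only [gP]
    nlinarith

lemma gdist_cons {n : ℕ} (a b : ℝ) (x y : Fin n → ℝ) :
    dist (Fin.cons a x : Fin (n+1) → ℝ) (Fin.cons b y) = max (dist a b) (dist x y) := by
  apply le_antisymm
  · rw [dist_pi_le_iff (by positivity)]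
    intro c
    refine Fin.cases ?_ (fun c => ?_) c
    · simp
    · simpa using Or.inr (dist_le_pi_dist x y c)
  · apply max_le
    · simpa using dist_le_pi_dist (Fin.cons a x : Fin (n+1) → ℝ) (Fin.cons b y) 0
    · rw [dist_pi_le_iff (by positivity)]
      intro c
      simpa using dist_le_pi_dist (Fin.cons a x : Fin (n+1) → ℝ) (Fin.cons b y) c.succ

lemma gphi_cons {n : ℕ} (lam : Fin m → ℝ) (q : Fin m → Fin (k+1))
    (x : Fin n → (Fin m → Fin (k+1))) :
    (fun c => gphi lam ((Fin.cons q x : Fin (n+1) → (Fin m → Fin (k+1))) c))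
      = (Fin.cons (gphi lam q) (fun c => gphi lam (x c)) : Fin (n+1) → ℝ) := by
  funext c
  refine Fin.cases ?_ (fun c => ?_) c <;> simp

lemma gphi_update (lam : Fin m → ℝ) (i : Fin m) (q : Fin m → Fin (k+1)) (s t : Fin (k+1)) :
    gphi lam (Function.update q i s) - gphi lam (Function.update q i t) = ((s:ℕ) - (t:ℕ) : ℝ) * lam i := by
  unfold gphi
  rw [← Finset.sum_sub_distrib, Finset.sum_eq_single i]
  · simp; ring
  · intro b _ hb
    simp [hb]
  · simp

lemma gslices {n : ℕ} (S : Finset (Fin (n+1) → (Fin m → Fin (k+1)))) :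
    S.card = ∑ q : Fin m → Fin (k+1), (Finset.univ.filter (fun y => (Fin.cons q y : Fin (n+1) → _) ∈ S)).card := by
  classical
  have h1 : S.card = ∑ x : Fin (n+1) → (Fin m → Fin (k+1)), if x ∈ S then 1 else 0 := by simp
  rw [h1, ← (Fin.consEquiv (fun _ : Fin (n+1) => (Fin m → Fin (k+1)))).sum_comp, Fintype.sum_prod_type]
  apply Finset.sum_congr rfl
  intro q _
  rw [Finset.card_filter]
  rfl

lemma gavg (i : Fin m) (g : (Fin m → Fin (k+1)) → ℕ) :
    ∑ q, ∑ t, g (Function.update q i t) = (k+1) * ∑ q, g q := by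
  classical
  have e := Equiv.funSplitAt i (Fin (k+1))
  have key : ∀ h : (Fin m → Fin (k+1)) → ℕ, ∑ q, h q =
      ∑ t, ∑ r, h ((Equiv.funSplitAt i (Fin (k+1))).symm (t, r)) := by
    intro h
    rw [← (Equiv.funSplitAt i (Fin (k+1))).symm.sum_comp, Fintype.sum_prod_type]
  rw [key, key g]
  have : ∀ (t s : Fin (k+1)) (r), Function.update ((Equiv.funSplitAt i (Fin (k+1))).symm (t, r)) i s
      = (Equiv.funSplitAt i (Fin (k+1))).symm (s, r) := by
    intro t s r
    funext j
    by_cases hj : j = i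
    · subst hj; simp
    · simp [hj]
  simp only [this]
  rw [Finset.sum_const]
  simp only [Finset.card_univ, Fintype.card_fin, smul_eq_mul]
  rw [Finset.sum_comm]

lemma gW_ge (lam : Fin m → ℝ) (hlam : ∀ i, 0 < lam i) (J : Finset (Fin m)) (i : Fin m) (hi : i ∈ J)
    (p q : Fin m → Fin (k+1)) (h : p i ≠ q i) : lam i ≤ dist (gW lam J p) (gW lam J q) := by
  refine le_trans ?_ (dist_le_pi_dist _ _ i)
  simp only [gW, hi, if_true, Real.dist_eq]
  rw [← sub_mul, abs_mul, abs_of_pos (hlam i)]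
  have : (1:ℝ) ≤ |((p i : ℕ):ℝ) - ((q i : ℕ) : ℝ)| := by
    have h' : ((p i : ℕ) : ℤ) - ((q i : ℕ) : ℤ) ≠ 0 := by
      intro h0; apply h; apply Fin.ext; omega
    have := Int.one_le_abs h'
    exact_mod_cast this
  nlinarith [hlam i]

lemma gW_insert (lam : Fin m → ℝ) (J : Finset (Fin m)) (i : Fin m) (hi : i ∉ J)
    (p q : Fin m → Fin (k+1)) : dist (gW lam (insert i J) p) (gW lam (insert i J) q) =
      max (dist (((p i : ℕ) : ℝ) * lam i) (((q i : ℕ) : ℝ) * lam i)) (dist (gW lam J p) (gW lam J q)) := by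
  apply le_antisymm
  · rw [dist_pi_le_iff (by positivity)]
    intro c
    by_cases hc : c = i
    · subst hc; simp [gW]
    · refine le_trans ?_ (le_max_right _ _)
      refine le_trans (le_of_eq ?_) (dist_le_pi_dist _ _ c)
      simp [gW, hc]
  · apply max_le
    · refine le_trans (le_of_eq ?_) (dist_le_pi_dist _ _ i)
      simp [gW]
    · rw [dist_pi_le_iff (by positivity)]
      intro c
      by_cases hc : c = i
      · subst hc; simp [gW, hi]
      · refine le_trans (le_of_eq ?_) (dist_le_pi_dist _ _ c)
        simp [gW, hc]

/-- Sauer–Shelah type bound. -/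
lemma gmain (hk : 0 < k) (lam : Fin m → ℝ) (hlam : ∀ i, 0 < lam i) (J : Finset (Fin m)) :
    ∀ (n : ℕ) (S : Finset (Fin n → (Fin m → Fin (k+1)))), ¬ GEmb lam J S →
      S.card * (k+1)^n ≤ (Fintype.card (Fin m → Fin (k+1)))^n * k^n * (n+1)^J.card := by
  classical
  induction J using Finset.induction_on_min_value lam with
  | empty =>
    intro n S h
    have : S = ∅ := by
      by_contra hS
      obtain ⟨s, hs⟩ := Finset.nonempty_iff_ne_empty.2 hS
      apply h
      refine ⟨fun _ => s, fun _ => hs, fun _ _ _ => rfl, fun p q => ?_⟩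
      have : gW lam ∅ p = gW lam ∅ q := by funext c; simp [gW]
      rw [this]; simp
    simp [this]
  | insert i J hi hmin ih =>
    intro n
    induction n with
    | zero =>
      intro S h
      have := Finset.card_le_univ S
      simp at this ⊢
      exact this
    | succ n ihn =>
      intro S h
      set Q := Fintype.card (Fin m → Fin (k+1)) with hQ
      set A : (Fin m → Fin (k+1)) → Finset (Fin n → (Fin m → Fin (k+1))) :=
        fun q => Finset.univ.filter (fun y => (Fin.cons q y : Fin (n+1) → _) ∈ S) with hA
      have hAm : ∀ q y, y ∈ A q → (Fin.cons q y : Fin (n+1) → _) ∈ S := by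
        intro q y hy; simpa [hA] using hy
      let B : (Fin m → Fin (k+1)) → ℕ → Finset (Fin n → (Fin m → Fin (k+1))) :=
        fun q t => A (Function.update q i (Fin.ofNat (k+1) t))
      have hcast : ∀ t, t ≤ k → ((Fin.ofNat (k+1) t : Fin (k+1)) : ℕ) = t := by
        intro t ht; simp [Fin.ofNat]; omega
      -- windows
      have hwin : ∀ q, ∀ j < k, ¬ GEmb lam (insert i J) (gP (B q) j ∪ B q (j+1)) := by
        rintro q j hj ⟨f, hf1, hf2, hf3⟩
        apply h
        have hex : ∀ y : Fin n → (Fin m → Fin (k+1)), ∃ t : ℕ, (t = j ∨ t = j+1) ∧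
            (y ∈ gP (B q) j ∪ B q (j+1) → y ∈ B q t) := by
          intro y
          by_cases hy : y ∈ gP (B q) j
          · exact ⟨j, Or.inl rfl, fun _ => gP_sub _ _ _ le_rfl hy⟩
          · refine ⟨j+1, Or.inr rfl, fun h => ?_⟩
            rcases Finset.mem_union.1 h with h | h
            · exact absurd h hy
            · exact h
        choose T hT1 hT2 using hex
        refine ⟨fun p => Fin.cons (Function.update q i (Fin.ofNat (k+1) (T (f p)))) (f p),
          fun p => hAm _ _ (hT2 _ (hf1 p)), fun p p' hp => ?_, fun p p' => ?_⟩
        · simp only [hf2 p p' hp]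
        · rw [gphi_cons, gphi_cons, gdist_cons, hf3, max_eq_right]
          by_cases hp : ∀ i' ∈ insert i J, p i' = p' i'
          · rw [hf2 p p' hp]; simp
          · push Not at hp
            obtain ⟨i', hi', hne⟩ := hp
            refine le_trans ?_ (gW_ge lam hlam _ i' hi' p p' hne)
            have h1 : lam i ≤ lam i' := by
              rcases Finset.mem_insert.1 hi' with rfl | h'
              · exact le_rfl
              · exact hmin _ h'
            refine le_trans ?_ h1
            rw [Real.dist_eq, gphi_update, hcast, hcast, abs_mul, abs_of_pos (hlam i)]
            · have : |((T (f p) : ℕ) : ℝ) - (T (f p') : ℕ)| ≤ 1 := by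
                rcases hT1 (f p) with h1 | h1 <;> rcases hT1 (f p') with h2 | h2 <;> rw [h1, h2] <;> simp
              nlinarith [hlam i]
            · rcases hT1 (f p') with h1 | h1 <;> omega
            · rcases hT1 (f p) with h1 | h1 <;> omega
      -- full lines
      have hfull : ∀ q, ¬ GEmb lam J (gP (B q) k) := by
        rintro q ⟨f, hf1, hf2, hf3⟩
        apply h
        refine ⟨fun p => Fin.cons (Function.update q i (p i)) (f p),
          fun p => hAm _ _ ?_, fun p p' hp => ?_, fun p p' => ?_⟩
        · have := gP_sub (B q) k (p i : ℕ) (by omega) (hf1 p)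
          simpa [B] using this
        · simp only [hp i (Finset.mem_insert_self _ _), hf2 p p' (fun a ha => hp a (Finset.mem_insert_of_mem ha))]
        · rw [gphi_cons, gphi_cons, gdist_cons, hf3, gW_insert _ _ _ hi]
          congr 1
          rw [Real.dist_eq, gphi_update, Real.dist_eq, sub_mul]
      have hline : ∀ q, (∑ t : Fin (k+1), (A (Function.update q i t)).card) * (k+1)^n ≤
          k * (Q^n * k^n * (n+1)^(J.card+1)) + Q^n * k^n * (n+1)^J.card := by
        intro q
        have e1 : ∑ t : Fin (k+1), (A (Function.update q i t)).card
            = ∑ t ∈ Finset.range (k+1), (B q t).card := by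
          rw [← Fin.sum_univ_eq_sum_range (fun t => (B q t).card)]
          apply Finset.sum_congr rfl
          intro t _
          simp [B]
        obtain ⟨j, hj, hmax⟩ := Finset.exists_max_image (Finset.range k)
          (fun j => (gP (B q) j ∪ B q (j+1)).card) ⟨0, by simpa using hk⟩
        have hj' := Finset.mem_range.1 hj
        have h1 := gsum_le (B q) k _ (fun i hi => hmax i (Finset.mem_range.2 hi))
        have h2 := ihn _ (hwin q j hj')
        rw [Finset.card_insert_of_notMem hi] at h2
        have h3 := ih n _ (hfull q)
        rw [e1]
        calc _ ≤ (k * (gP (B q) j ∪ B q (j+1)).card + (gP (B q) k).card) * (k+1)^n :=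
              Nat.mul_le_mul_right _ h1
          _ = k * ((gP (B q) j ∪ B q (j+1)).card * (k+1)^n) + (gP (B q) k).card * (k+1)^n := by ring
          _ ≤ _ := by gcongr
      have hS := gslices S
      have hav := gavg i (fun q => (A q).card)
      rw [Finset.card_insert_of_notMem hi]
      calc S.card * (k+1)^(n+1) = ((k+1) * ∑ q, (A q).card) * (k+1)^n := by rw [hS]; ring
        _ = ∑ q, ((∑ t, (A (Function.update q i t)).card) * (k+1)^n) := by
          rw [← hav, Finset.sum_mul]
        _ ≤ ∑ q : Fin m → Fin (k+1), (k * (Q^n * k^n * (n+1)^(J.card+1)) + Q^n * k^n * (n+1)^J.card) :=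
          Finset.sum_le_sum (fun q _ => hline q)
        _ = Q * (k * (Q^n * k^n * (n+1)^(J.card+1)) + Q^n * k^n * (n+1)^J.card) := by
          rw [Finset.sum_const, Finset.card_univ, smul_eq_mul]
        _ ≤ Q * (k * (Q^n * k^n * (n+1)^(J.card+1)) + k * (Q^n * k^n * (n+1)^J.card)) := by
          exact Nat.mul_le_mul_left _ (Nat.add_le_add_left (Nat.le_mul_of_pos_left _ hk) _)
        _ = Q^(n+1) * k^(n+1) * ((n+1)^J.card * (n+1+1)) := by ring
        _ ≤ Q^(n+1) * k^(n+1) * ((n+1+1)^J.card * (n+1+1)) := by gcongr; omega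
        _ = _ := by ring

lemma glower (hk : 0 < k) (lam : Fin m → ℝ) (hlam : ∀ i, 0 < lam i) (n N : ℕ)
    (c : (Fin n → ℝ) → Fin N) (hc : ∀ i : Fin N, ¬ HasCopy (gridAP m k lam) {x | c x = i}) :
    (k+1)^n ≤ N * (k^n * (n+1)^m) := by
  classical
  set Q := Fintype.card (Fin m → Fin (k+1)) with hQ
  let S : Fin N → Finset (Fin n → (Fin m → Fin (k+1))) :=
    fun i => Finset.univ.filter (fun y => c (fun a => gphi lam (y a)) = i)
  have hS : ∀ i, ¬ GEmb lam Finset.univ (S i) := by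
    rintro i ⟨f, hf1, hf2, hf3⟩
    apply hc i
    have hex : ∀ x : Fin m → ℝ, ∃ p : Fin m → Fin (k+1), x ∈ gridAP m k lam → gW lam Finset.univ p = x := by
      intro x
      by_cases hx : x ∈ gridAP m k lam
      · choose j hj1 hj2 using hx
        refine ⟨fun i => ⟨j i, by have := hj1 i; omega⟩, fun _ => ?_⟩
        funext i
        simp [gW, hj2]
      · exact ⟨fun _ => 0, fun h => absurd h hx⟩
    choose P hP using hex
    refine ⟨fun x a => gphi lam (f (P x) a), fun x hx y hy => ?_, ?_⟩
    · rw [hf3, hP x hx, hP y hy]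
    · rintro _ ⟨x, hx, rfl⟩
      simpa [S] using hf1 (P x)
  have hsum : ∑ i, (S i).card = Q^n := by
    have := Finset.card_eq_sum_card_fiberwise (s := (Finset.univ : Finset (Fin n → (Fin m → Fin (k+1)))))
      (t := (Finset.univ : Finset (Fin N))) (f := fun y => c (fun a => gphi lam (y a))) (fun _ _ => by simp)
    rw [← this, Finset.card_univ, Fintype.card_fun, Fintype.card_fin n]
  have hQ0 : 0 < Q := Fintype.card_pos
  have h1 : Q^n * (k+1)^n ≤ Q^n * (N * (k^n * (n+1)^m)) := by
    rw [← hsum, Finset.sum_mul, hsum]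
    calc _ ≤ ∑ i : Fin N, (Q^n * k^n * (n+1)^m) := by
            apply Finset.sum_le_sum
            intro i _
            have := gmain hk lam hlam Finset.univ n (S i) (hS i)
            rwa [Finset.card_univ, Fintype.card_fin] at this
      _ = _ := by rw [Finset.sum_const]; simp; ring
  exact Nat.le_of_mul_le_mul_left h1 (by positivity)

end Lower

section Upper

variable {k : ℕ}

lemma gcover_step (n : ℕ) (U : Finset (Fin n → ZMod (k+1))) :
    ∃ t : Fin n → ZMod (k+1), ((U.filter (fun z => ¬ ∀ c, z c ≠ t c)).card : ℝ)
      ≤ (1 - ((k:ℝ)/(k+1))^n) * U.card := by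
  classical
  by_contra hcon
  replace hcon := fun t => lt_of_not_ge (fun h => hcon ⟨t, h⟩)
  have hcnt : ∀ z : Fin n → ZMod (k+1),
      (Finset.univ.filter (fun t : Fin n → ZMod (k+1) => ∀ c, z c ≠ t c)).card = k^n := by
    intro z
    have : (Finset.univ.filter (fun t : Fin n → ZMod (k+1) => ∀ c, z c ≠ t c))
        = Fintype.piFinset (fun c => Finset.univ.erase (z c)) := by
      ext t; simp [eq_comm]
    rw [this, Fintype.card_piFinset]
    simp [Finset.card_erase_of_mem, ZMod.card]
  have hcard : (Finset.univ : Finset (Fin n → ZMod (k+1))).card = (k+1)^n := by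
    simp [ZMod.card]
  have hdc : ∑ t : Fin n → ZMod (k+1), (U.filter (fun z => ∀ c, z c ≠ t c)).card = U.card * k^n := by
    simp only [Finset.card_filter]
    rw [Finset.sum_comm]
    simp only [← Finset.card_filter]
    rw [Finset.sum_congr rfl (fun z _ => hcnt z)]
    simp
  have hsplit : ∀ t : Fin n → ZMod (k+1), ((U.filter (fun z => ∀ c, z c ≠ t c)).card : ℝ) <
      ((k:ℝ)/(k+1))^n * U.card := by
    intro t
    have h1 := hcon t
    have h2 := Finset.card_filter_add_card_filter_not (s := U) (fun z => ∀ c, z c ≠ t c)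
    have h3 : ((U.filter (fun z => ∀ c, z c ≠ t c)).card : ℝ) + ((U.filter (fun z => ¬ ∀ c, z c ≠ t c)).card : ℝ) = U.card := by
      exact_mod_cast h2
    linarith
  have hlt := Finset.sum_lt_sum_of_nonempty (s := (Finset.univ : Finset (Fin n → ZMod (k+1))))
    ⟨fun _ => 0, Finset.mem_univ _⟩ (fun t _ => hsplit t)
  rw [Finset.sum_const, hcard, ← Nat.cast_sum, hdc] at hlt
  have hk1 : ((k:ℝ)+1)^n ≠ 0 := by positivity
  have : ((k:ℝ)+1)^n * (((k:ℝ)/(k+1))^n * U.card) = U.card * (k:ℝ)^n := by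
    rw [div_pow]; field_simp
  simp only [nsmul_eq_mul] at hlt
  push_cast at hlt
  rw [this] at hlt
  exact lt_irrefl _ hlt

lemma gcover (n N : ℕ) : ∃ t : Fin N → (Fin n → ZMod (k+1)),
    ((Finset.univ.filter (fun z : Fin n → ZMod (k+1) => ∀ s, ¬ ∀ c, z c ≠ t s c)).card : ℝ)
      ≤ (1 - ((k:ℝ)/(k+1))^n)^N * (k+1)^n := by
  classical
  induction N with
  | zero => exact ⟨Fin.elim0, by simp [ZMod.card]⟩
  | succ N ih =>
    obtain ⟨t, ht⟩ := ih
    obtain ⟨t0, h0⟩ := gcover_step n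
      (Finset.univ.filter (fun z : Fin n → ZMod (k+1) => ∀ s, ¬ ∀ c, z c ≠ t s c))
    refine ⟨Fin.cons t0 t, ?_⟩
    rw [Finset.filter_filter] at h0
    have hp : (0:ℝ) ≤ 1 - ((k:ℝ)/(k+1))^n := by
      have : ((k:ℝ)/(k+1))^n ≤ 1 := by
        apply pow_le_one₀ (by positivity)
        rw [div_le_one (by positivity)]; linarith
      linarith
    calc _ = _ := ?_
      _ ≤ _ := h0
      _ ≤ (1 - ((k:ℝ)/(k+1))^n) * ((1 - ((k:ℝ)/(k+1))^n)^N * (k+1)^n) := by gcongr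
      _ = _ := by ring
    congr 2
    ext z
    simp only [Finset.mem_filter, Fin.forall_fin_succ (n := N), Fin.cons_zero, Fin.cons_succ]
    tauto

lemma gcover' (hk : 0 < k) (n : ℕ) : ∃ N : ℕ, (N : ℝ) ≤ (((k:ℝ)+1)/k)^n * (n * k + 1) ∧
    ∃ t : Fin N → (Fin n → ZMod (k+1)), ∀ z : Fin n → ZMod (k+1), ∃ s, ∀ c, z c ≠ t s c := by
  have hk' : (0:ℝ) < k := by exact_mod_cast hk
  set p : ℝ := ((k:ℝ)/(k+1))^n with hp
  have hp0 : 0 < p := by positivity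
  have hp1 : p ≤ 1 := by
    apply pow_le_one₀ (by positivity)
    rw [div_le_one (by positivity)]; linarith
  have hinv : (((k:ℝ)+1)/k)^n = p⁻¹ := by rw [hp, ← inv_pow, inv_div]
  refine ⟨⌊p⁻¹ * (n * k)⌋₊ + 1, ?_, ?_⟩
  · have h1 := Nat.floor_le (a := p⁻¹ * (n * k)) (by positivity)
    have h2 : 1 ≤ p⁻¹ := (one_le_inv₀ hp0).2 hp1
    rw [hinv]; push_cast; linarith
  · have hN := Nat.lt_floor_add_one (p⁻¹ * (n * k))
    generalize hNdef : ⌊p⁻¹ * (n * k)⌋₊ + 1 = N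
    obtain ⟨t, ht⟩ := gcover (k := k) n N
    refine ⟨t, ?_⟩
    have hN' : (n * k : ℝ) < N * p := by
      rw [inv_mul_lt_iff₀ hp0] at hN
      rw [← hNdef]; push_cast; linarith
    have h3 : (1 - p)^N ≤ Real.exp (-(N * p)) := by
      have := Real.add_one_le_exp (-p)
      calc (1-p)^N ≤ (Real.exp (-p))^N := by
            apply pow_le_pow_left₀ <;> linarith
        _ = _ := by rw [← Real.exp_nat_mul]; congr 1; ring
    have h4 : ((k:ℝ)+1)^n ≤ Real.exp (n * k) := by
      rw [Real.exp_nat_mul]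
      exact pow_le_pow_left₀ (by positivity) (Real.add_one_le_exp _) _
    have h5 : (1 - p)^N * ((k:ℝ)+1)^n < 1 := by
      calc _ ≤ Real.exp (-(N * p)) * Real.exp (n * k) := by gcongr
        _ = Real.exp (-(N*p) + n * k) := by rw [Real.exp_add]
        _ < 1 := by rw [Real.exp_lt_one_iff]; linarith
    have h6 := lt_of_le_of_lt ht h5
    have h7 : (Finset.univ.filter (fun z : Fin n → ZMod (k+1) => ∀ s, ¬ ∀ c, z c ≠ t s c)).card = 0 := by
      have : (Finset.univ.filter (fun z : Fin n → ZMod (k+1) => ∀ s, ¬ ∀ c, z c ≠ t s c)).card < 1 := by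
        exact_mod_cast h6
      omega
    intro z
    by_contra! hz
    rw [Finset.card_eq_zero] at h7
    have : z ∈ (Finset.univ.filter (fun z : Fin n → ZMod (k+1) => ∀ s, ¬ ∀ c, z c ≠ t s c)) := by
      simpa using hz
    rw [h7] at this
    simp at this

lemma gupper {m : ℕ} (hk : 0 < k) (hm : 0 < m) (lam : Fin m → ℝ) (hlam : ∀ i, 0 < lam i) (n N : ℕ)
    (t : Fin N → (Fin n → ZMod (k+1))) (ht : ∀ z : Fin n → ZMod (k+1), ∃ s, ∀ c, z c ≠ t s c) :
    ∃ c : (Fin n → ℝ) → Fin N, ∀ i : Fin N, ¬ HasCopy (gridAP m k lam) {x | c x = i} := by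
  classical
  have hk' : (0:ℝ) < k := by exact_mod_cast hk
  let i0 : Fin m := ⟨0, hm⟩
  set l := lam i0 with hl
  have hl0 : 0 < l := hlam i0
  choose g hg using ht
  refine ⟨fun x => g (fun a => ((⌊x a / l⌋ : ℤ) : ZMod (k+1))), ?_⟩
  rintro i ⟨f, hf1, hf2⟩
  let e : ℕ → (Fin m → ℝ) := fun j => Pi.single i0 ((j:ℝ) * l)
  have he : ∀ j ≤ k, e j ∈ gridAP m k lam := by
    intro j hj b
    by_cases hb : b = i0
    · exact ⟨j, hj, by subst hb; simp [e, hl]⟩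
    · exact ⟨0, by omega, by simp [e, hb]⟩
  have hd : ∀ a b : ℕ, dist (e a) (e b) = |(a:ℝ) - b| * l := by
    intro a b
    have h1 : |(a:ℝ) * l - b * l| = |(a:ℝ) - b| * l := by
      rw [← sub_mul, abs_mul, abs_of_pos hl0]
    apply le_antisymm
    · rw [dist_pi_le_iff (by positivity)]
      intro c
      by_cases hc : c = i0
      · subst hc; simp [e, Real.dist_eq, h1]
      · simp [e, hc]; positivity
    · refine le_trans (le_of_eq ?_) (dist_le_pi_dist _ _ i0)
      simp [e, Real.dist_eq, h1]
  have hdf : ∀ a ≤ k, ∀ b ≤ k, dist (f (e a)) (f (e b)) = |(a:ℝ) - b| * l := by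
    intro a ha b hb
    rw [hf1 _ (he a ha) _ (he b hb), hd]
  have hcol : ∀ j ≤ k, ∀ c, ((⌊f (e j) c / l⌋ : ℤ) : ZMod (k+1)) ≠ t i c := by
    intro j hj c
    have h1 := hf2 ⟨e j, he j hj, rfl⟩
    simp only [Set.mem_ofPred_eq] at h1
    have h2 := hg (fun a => ((⌊f (e j) a / l⌋ : ℤ) : ZMod (k+1))) c
    rw [h1] at h2
    exact h2
  obtain ⟨c, hc⟩ : ∃ c, (k:ℝ) * l ≤ dist (f (e 0) c) (f (e k) c) := by
    by_contra! hcon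
    have := (dist_pi_lt_iff (by positivity)).2 hcon
    rw [hdf 0 (by omega) k le_rfl] at this
    simp at this
  have hco : ∀ j ≤ k, |f (e j) c - f (e 0) c| ≤ j * l ∧ |f (e k) c - f (e j) c| ≤ (k - j) * l := by
    intro j hj
    have h1 := dist_le_pi_dist (f (e j)) (f (e 0)) c
    have h2 := dist_le_pi_dist (f (e k)) (f (e j)) c
    have hjk : (j:ℝ) ≤ k := by exact_mod_cast hj
    rw [hdf j hj 0 (by omega), Real.dist_eq] at h1
    rw [hdf k le_rfl j hj, Real.dist_eq] at h2
    rw [abs_of_nonneg (a := (k:ℝ) - j) (by linarith)] at h2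
    simp at h1
    exact ⟨h1, h2⟩
  rw [Real.dist_eq] at hc
  have hfin : ∃ ε : ℤ, (ε = 1 ∨ ε = -1) ∧ ∀ j ≤ k, f (e j) c = f (e 0) c + ((ε * (j:ℤ) : ℤ):ℝ) * l := by
    rcases le_abs'.1 hc with h | h
    · refine ⟨1, Or.inl rfl, fun j hj => ?_⟩
      obtain ⟨h1, h2⟩ := hco j hj
      rw [abs_le] at h1 h2
      push_cast
      linarith
    · refine ⟨-1, Or.inr rfl, fun j hj => ?_⟩
      obtain ⟨h1, h2⟩ := hco j hj
      rw [abs_le] at h1 h2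
      push_cast
      linarith
  obtain ⟨ε, hε, hj⟩ := hfin
  set z : ZMod (k+1) := ((⌊f (e 0) c / l⌋ : ℤ) : ZMod (k+1)) with hz
  set w : ZMod (k+1) := (ε : ZMod (k+1)) * (t i c - z) with hw
  have hwk : w.val ≤ k := by have := ZMod.val_lt w; omega
  apply hcol w.val hwk c
  rw [hj _ hwk, add_div, mul_div_assoc, div_self hl0.ne', mul_one, Int.floor_add_intCast]
  push_cast
  rw [← hz, ZMod.natCast_zmod_val, hw]
  rcases hε with rfl | rfl <;> push_cast <;> ring

end Upper

lemma glim : Tendsto (fun n : ℕ => ((n:ℝ)+1)^(1/(n:ℝ))) atTop (nhds 1) := by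
  have h := tendsto_rpow_div_mul_add 1 1 (-1) (by norm_num)
  have h2 : Tendsto (fun n : ℕ => (n:ℝ)+1) atTop atTop :=
    tendsto_atTop_add_const_right _ _ tendsto_natCast_atTop_atTop
  refine (h.comp h2).congr (fun n => ?_)
  simp

theorem chi_grid (k m : ℕ) (hk : 0 < k) (hm : 0 < m)
    (lam : Fin m → ℝ) (hlam : ∀ i, 0 < lam i) :
    Tendsto (fun n : ℕ => (chrom (gridAP m k lam) n : ℝ) ^ (1 / (n : ℝ)))
      atTop (nhds (((k : ℝ) + 1) / k)) := by
  have hk' : (0:ℝ) < k := by exact_mod_cast hk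
  set C : ℝ := ((k:ℝ)+1)/k with hC
  have hC0 : 0 < C := by positivity
  have hup : ∀ n : ℕ, (chrom (gridAP m k lam) n : ℝ) ≤ C^n * (n * k + 1) := by
    intro n
    obtain ⟨N, hN, t, ht⟩ := gcover' hk n
    have h1 : chrom (gridAP m k lam) n ≤ N := Nat.sInf_le (gupper hk hm lam hlam n N t ht)
    exact le_trans (by exact_mod_cast h1) hN
  have hlo : ∀ n : ℕ, C^n / ((n:ℝ)+1)^m ≤ (chrom (gridAP m k lam) n : ℝ) := by
    intro n
    obtain ⟨N, hN, t, ht⟩ := gcover' hk n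
    obtain ⟨c, hc⟩ := Nat.sInf_mem (s := {N : ℕ | ∃ c : (Fin n → ℝ) → Fin N,
      ∀ i : Fin N, ¬ HasCopy (gridAP m k lam) {x | c x = i}}) ⟨N, gupper hk hm lam hlam n N t ht⟩
    have h1 := glower hk lam hlam n _ c hc
    change (k+1)^n ≤ chrom (gridAP m k lam) n * (k^n * (n+1)^m) at h1
    have h2 : ((k:ℝ)+1)^n ≤ chrom (gridAP m k lam) n * ((k:ℝ)^n * ((n:ℝ)+1)^m) := by exact_mod_cast h1
    rw [hC, div_pow, div_div, div_le_iff₀ (by positivity)]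
    exact h2
  have hroot : ∀ n : ℕ, n ≠ 0 → (C^n)^(1/(n:ℝ)) = C := by
    intro n hn
    rw [one_div, Real.pow_rpow_inv_natCast hC0.le hn]
  have hsw : ∀ (n j : ℕ), (((n:ℝ)+1)^j)^(1/(n:ℝ)) = (((n:ℝ)+1)^(1/(n:ℝ)))^j := by
    intro n j
    rw [← Real.rpow_natCast, ← Real.rpow_natCast, ← Real.rpow_mul (by positivity),
      ← Real.rpow_mul (by positivity), mul_comm]
  have hL : Tendsto (fun n : ℕ => C / (((n:ℝ)+1)^(1/(n:ℝ)))^m) atTop (nhds C) := by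
    have := (tendsto_const_nhds (x := C)).div (glim.pow m) (by simp)
    rw [one_pow, div_one] at this
    exact this
  have hU : Tendsto (fun n : ℕ => C * (((n:ℝ)+1)^(1/(n:ℝ)))^2) atTop (nhds C) := by
    have := (tendsto_const_nhds (x := C)).mul (glim.pow 2)
    simpa using this
  refine tendsto_of_tendsto_of_tendsto_of_le_of_le' hL hU ?_ ?_
  · filter_upwards [eventually_ge_atTop 1] with n hn
    have := Real.rpow_le_rpow (z := 1/(n:ℝ)) (by positivity) (hlo n) (by positivity)
    rwa [Real.div_rpow (by positivity) (by positivity), hroot n (by omega), hsw] at this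
  · filter_upwards [eventually_ge_atTop (k+1)] with n hn
    have hn' : (k:ℝ) + 1 ≤ n := by exact_mod_cast hn
    have h1 : (chrom (gridAP m k lam) n : ℝ) ≤ C^n * ((n:ℝ)+1)^2 := by
      refine (hup n).trans ?_
      gcongr
      nlinarith
    have := Real.rpow_le_rpow (z := 1/(n:ℝ)) (by positivity) h1 (by positivity)
    rwa [Real.mul_rpow (by positivity) (by positivity), hroot n (by omega), hsw] at this
end

section
/- Let H be a hyperrectangle, i.e., the Cartesian product of finitely many two-point metric spaces (each two-point space having an arbitrary positive distance between its points), with the max metric on the product. Then lim_{n→∞} χ(ℝ^n_∞, H)^{1/n} = 2; that is, χ(ℝ^n_∞, H) = (2 + o(1))^n. -/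
open Set Filter

/-- Labels: an orientation and an integer vector. -/
abbrev Lab (m L : ℕ) := Bool × (Fin m → Fin L)

/-- The real value of a label. -/
noncomputable def labVal {m L : ℕ} (d : Fin m → ℝ) (s : Lab m L) : ℝ :=
  ∑ j, ((s.2 j : ℕ) : ℝ) * d j

/-- The class of a label in direction `p`. -/
def labCls {m L : ℕ} (p : Fin m) (s : Lab m L) : Fin m → Fin (L + 1) :=
  fun j => if j = p ∧ s.1 = false then (s.2 j).succ else (s.2 j).castSucc

lemma labCls_step {m L : ℕ} (d : Fin m → ℝ) (p : Fin m) (s t : Lab m L)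
    (h : labCls p s = labCls p t) (hs : s.1 = false) (ht : t.1 = true) :
    labVal d t = labVal d s + d p := by
  have key : ∀ j, ((t.2 j : ℕ) : ℝ) = ((s.2 j : ℕ) : ℝ) + if j = p then 1 else 0 := by
    intro j
    have hj := congrArg Fin.val (congrFun h j)
    by_cases hjp : j = p
    · simp [labCls, hs, ht, hjp] at hj ⊢
      rw [← hj]; push_cast; ring
    · simp [labCls, hjp] at hj ⊢
      omega
  unfold labVal
  simp only [key, add_mul, Finset.sum_add_distrib]
  simp

lemma labCls_eq {m L : ℕ} (d : Fin m → ℝ) (p : Fin m) (s t : Lab m L)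
    (h : labCls p s = labCls p t) :
    s = t ∨ (s.1 = false ∧ t.1 = true ∧ labVal d t = labVal d s + d p) ∨
      (s.1 = true ∧ t.1 = false ∧ labVal d s = labVal d t + d p) := by
  rcases hs : s.1 with _ | _ <;> rcases ht : t.1 with _ | _
  · left
    refine Prod.ext (hs.trans ht.symm) ?_
    funext j
    have hj := congrFun h j
    by_cases hjp : j = p
    · simpa [labCls, hs, ht, hjp] using hj
    · simpa [labCls, hjp] using hj
  · right; left
    exact ⟨rfl, rfl, labCls_step d p s t h hs ht⟩
  · right; right
    exact ⟨rfl, rfl, labCls_step d p t s h.symm ht hs⟩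
  · left
    refine Prod.ext (hs.trans ht.symm) ?_
    funext j
    have hj := congrFun h j
    simpa [labCls, hs, ht] using hj

/-- `y` lies in the oriented box of size `r` at `s`. -/
def InBox {m L : ℕ} (d : Fin m → ℝ) (r : ℝ) (s t : Lab m L) : Prop :=
  (s.1 = false → labVal d s ≤ labVal d t ∧ labVal d t ≤ labVal d s + r) ∧
  (s.1 = true → labVal d s - r ≤ labVal d t ∧ labVal d t ≤ labVal d s)

/-- The vertex set of the hyperrectangle. -/
def rect {m : ℕ} (d : Fin m → ℝ) : Set (Fin m → ℝ) := {x | ∀ i, x i = 0 ∨ x i = d i}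

/-- `x` is contained in an oriented copy of the `P`-faces, constant on `T`. -/
def Good {m L n : ℕ} (d : Fin m → ℝ) (A : Finset (Fin n → Lab m L)) (P : Finset (Fin m))
    (r : ℝ) (T : Finset (Fin n)) (x : Fin n → Lab m L) : Prop :=
  ∃ g : (Fin m → ℝ) → (Fin n → Lab m L),
    (∀ a, g a ∈ A) ∧ (∀ a, ∀ i ∈ T, g a i = x i) ∧ (∀ a i, InBox d r (x i) (g a i)) ∧
    ∀ a ∈ rect d, ∀ b ∈ rect d, (∀ i, i ∉ P → a i = b i) →
      dist (fun i => labVal d (g a i)) (fun i => labVal d (g b i)) = dist a b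

lemma InBox.abs_le {m L : ℕ} {d : Fin m → ℝ} {r : ℝ} {s t u : Lab m L}
    (h1 : InBox d r s t) (h2 : InBox d r s u) : |labVal d t - labVal d u| ≤ r := by
  rw [_root_.abs_le]
  rcases hs : s.1 with _ | _
  · have := h1.1 hs; have := h2.1 hs; constructor <;> linarith
  · have := h1.2 hs; have := h2.2 hs; constructor <;> linarith

lemma good_step {m L n : ℕ} (d : Fin m → ℝ) (hd : ∀ i, 0 < d i)
    (A : Finset (Fin n → Lab m L)) (P : Finset (Fin m)) (p : Fin m)
    (hP : ∀ i ∈ P, d i ≤ d p) (r : ℝ) (hr : d p ≤ r)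
    (T : Finset (Fin n)) (x y : Fin n → Lab m L) (hxy : x ≠ y)
    (hx : ∀ i, Good d A P (d p) (insert i T) x) (hy : ∀ i, Good d A P (d p) (insert i T) y)
    (hcls : ∀ i, labCls p (x i) = labCls p (y i)) (hT : ∀ i ∈ T, x i = y i) :
    Good d A (insert p P) r T x := by
  classical
  obtain ⟨i₀, hi₀⟩ := Function.ne_iff.1 hxy
  obtain ⟨g, gA, gT, gB, gD⟩ := hx i₀
  obtain ⟨g', gA', gT', gB', gD'⟩ := hy i₀
  have hbox : ∀ a i, InBox d (d p) (x i) (g' a i) := by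
    intro a i
    have hb := gB' a i
    rcases labCls_eq d p _ _ (hcls i) with h | ⟨h1, h2, h3⟩ | ⟨h1, h2, h3⟩
    · rw [h]; exact hb
    · have := hb.2 h2
      refine ⟨fun _ => ⟨by linarith, by linarith⟩, fun h => by simp [h1] at h⟩
    · have := hb.1 h2
      refine ⟨fun h => by simp [h1] at h, fun _ => ⟨by linarith, by linarith⟩⟩
  have hcross : ∀ a b, dist (fun i => labVal d (g a i)) (fun i => labVal d (g' b i)) = d p := by
    intro a b
    apply le_antisymm
    · rw [dist_pi_le_iff (hd p).le]
      intro i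
      rw [Real.dist_eq]
      exact (gB a i).abs_le (hbox b i)
    · refine le_trans ?_ (dist_le_pi_dist _ _ i₀)
      rw [gT a i₀ (Finset.mem_insert_self _ _), gT' b i₀ (Finset.mem_insert_self _ _), Real.dist_eq]
      rcases labCls_eq d p _ _ (hcls i₀) with h | ⟨h1, h2, h3⟩ | ⟨h1, h2, h3⟩
      · exact absurd h hi₀
      · rw [h3, abs_sub_comm]; simpa using le_abs_self (d p)
      · rw [h3]; simpa using le_abs_self (d p)
  have hab : ∀ a ∈ rect d, ∀ b ∈ rect d, (∀ i, i ∉ insert p P → a i = b i) → a p ≠ b p →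
      dist a b = d p := by
    intro a ha b hb hout hne
    apply le_antisymm
    · rw [dist_pi_le_iff (hd p).le]
      intro i
      by_cases hi : i ∈ insert p P
      · have hi' : d i ≤ d p := by
          rcases Finset.mem_insert.1 hi with h | h
          · rw [h]
          · exact hP i h
        have := hd i
        rw [Real.dist_eq]
        rcases ha i with h | h <;> rcases hb i with h' | h' <;> rw [h, h', _root_.abs_le] <;>
          constructor <;> linarith
      · rw [hout i hi, dist_self]; exact (hd p).le
    · refine le_trans ?_ (dist_le_pi_dist _ _ p)
      rw [Real.dist_eq]
      rcases ha p with h | h <;> rcases hb p with h' | h'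
      · exact absurd (h.trans h'.symm) hne
      · rw [h, h', abs_sub_comm]; simpa using le_abs_self (d p)
      · rw [h, h']; simpa using le_abs_self (d p)
      · exact absurd (h.trans h'.symm) hne
  have hmono : ∀ s t : Lab m L, InBox d (d p) s t → InBox d r s t := by
    intro s t h
    refine ⟨fun hs => ?_, fun hs => ?_⟩
    · have := h.1 hs; constructor <;> linarith
    · have := h.2 hs; constructor <;> linarith
  have hin : ∀ a b : Fin m → ℝ, (∀ i, i ∉ insert p P → a i = b i) → a p = b p →
      ∀ i, i ∉ P → a i = b i := by
    intro a b hout hp i hi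
    by_cases h : i = p
    · rw [h]; exact hp
    · exact hout i (by simp [h, hi])
  refine ⟨fun a => if a p = 0 then g a else g' a, ?_, ?_, ?_, ?_⟩
  · intro a; dsimp only; split_ifs
    · exact gA a
    · exact gA' a
  · intro a i hi; dsimp only; split_ifs
    · exact gT a i (Finset.mem_insert_of_mem hi)
    · rw [gT' a i (Finset.mem_insert_of_mem hi), hT i hi]
  · intro a i; dsimp only; split_ifs
    · exact hmono _ _ (gB a i)
    · exact hmono _ _ (hbox a i)
  · intro a ha b hb hout
    by_cases h1 : a p = 0 <;> by_cases h2 : b p = 0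
    · simp only [h1, h2, if_true]
      exact gD a ha b hb (hin a b hout (h1.trans h2.symm))
    · simp only [h1, h2, if_true, if_false]
      rw [hab a ha b hb hout (fun h => h2 (h ▸ h1))]
      exact hcross a b
    · simp only [h1, h2, if_true, if_false]
      rw [hab a ha b hb hout (fun h => h1 (h.trans h2)), dist_comm]
      exact hcross b a
    · simp only [h1, h2, if_false]
      refine gD' a ha b hb (hin a b hout ?_)
      rw [(ha p).resolve_left h1, (hb p).resolve_left h2]

open Classical in
lemma bad_card {m L n : ℕ} (hL : 0 < L) (d : Fin m → ℝ) (hd : ∀ i, 0 < d i)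
    (A : Finset (Fin n → Lab m L)) (P : Finset (Fin m)) :
    ∀ r : ℝ, 0 ≤ r → (∀ i ∈ P, d i ≤ r) → ∀ T : Finset (Fin n),
      (A.filter (fun x => ¬ Good d A P r T x)).card ≤
        (n + 1) ^ P.card * ((L + 1) ^ m) ^ n * (2 * L ^ m) ^ (T.card + P.card) := by
  induction P using Finset.induction_on_max_value d with
  | empty =>
    intro r hr _ T
    have : A.filter (fun x => ¬ Good d A ∅ r T x) = ∅ := by
      rw [Finset.filter_eq_empty_iff]
      intro x hx
      rw [not_not]
      refine ⟨fun _ => x, fun _ => hx, fun _ _ _ => rfl, fun _ i => ?_, ?_⟩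
      · refine ⟨fun _ => ⟨le_rfl, by linarith⟩, fun _ => ⟨by linarith, le_rfl⟩⟩
      · intro a _ b _ h
        have : a = b := funext fun i => h i (by simp)
        rw [this]; simp
    rw [this]; simp
  | insert p P hpP hmax ih =>
    intro r hr hPr T
    have hpr : d p ≤ r := hPr p (Finset.mem_insert_self _ _)
    set σ := 2 * L ^ m with hσ
    have hσ1 : 1 ≤ σ := Nat.mul_pos (by norm_num) (pow_pos hL m)
    set κ := ((L + 1) ^ m) ^ n with hκ
    set U := (Finset.univ : Finset (Fin n)).biUnion
      (fun i => A.filter (fun x => ¬ Good d A P (d p) (insert i T) x)) with hU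
    set Bd := A.filter (fun x => ¬ Good d A (insert p P) r T x) with hBd
    have hUc : U.card ≤ n * ((n + 1) ^ P.card * κ * σ ^ (T.card + 1 + P.card)) := by
      refine (Finset.card_biUnion_le).trans ?_
      refine (Finset.sum_le_card_nsmul _ _ ((n + 1) ^ P.card * κ * σ ^ (T.card + 1 + P.card)) ?_).trans ?_
      · intro i _
        refine (ih (d p) (hd p).le hmax (insert i T)).trans ?_
        gcongr
        · exact Finset.card_insert_le _ _
      · simp
    have hB : (Bd \ U).card ≤ κ * σ ^ T.card := by
      let F : (Fin n → Lab m L) → (Fin n → (Fin m → Fin (L + 1))) × (T → Lab m L) :=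
        fun x => (fun i => labCls p (x i), fun i => x i)
      have hF : Set.InjOn F (Bd \ U : Finset _) := by
        intro x hx y hy hFxy
        by_contra hne
        have hx' := Finset.mem_sdiff.1 (Finset.mem_coe.1 hx)
        have hy' := Finset.mem_sdiff.1 (Finset.mem_coe.1 hy)
        have hxB := Finset.mem_filter.1 hx'.1
        have hyB := Finset.mem_filter.1 hy'.1
        have gx : ∀ i, Good d A P (d p) (insert i T) x := by
          intro i; by_contra h
          exact hx'.2 (Finset.mem_biUnion.2 ⟨i, Finset.mem_univ _, Finset.mem_filter.2 ⟨hxB.1, h⟩⟩)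
        have gy : ∀ i, Good d A P (d p) (insert i T) y := by
          intro i; by_contra h
          exact hy'.2 (Finset.mem_biUnion.2 ⟨i, Finset.mem_univ _, Finset.mem_filter.2 ⟨hyB.1, h⟩⟩)
        refine hxB.2 (good_step d hd A P p hmax r hpr T x y hne gx gy ?_ ?_)
        · intro i; exact congrFun (congrArg Prod.fst hFxy) i
        · intro i hi; exact congrFun (congrArg Prod.snd hFxy) ⟨i, hi⟩
      have := Finset.card_le_card_of_injOn (t := Finset.univ) F (fun _ _ => Finset.mem_coe.2 (Finset.mem_univ _)) hF
      refine this.trans (le_of_eq ?_)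
      simp [Fintype.card_prod, hκ, hσ]
    have h1 : Bd.card ≤ (Bd \ U).card + U.card := by
      have := Finset.le_card_sdiff U Bd
      omega
    have h2 : κ * σ ^ T.card ≤ (n + 1) ^ P.card * κ * σ ^ (T.card + 1 + P.card) := by
      calc κ * σ ^ T.card = 1 * κ * σ ^ T.card := by ring
        _ ≤ _ := by
          gcongr
          · exact Nat.one_le_pow _ _ (by omega)
          · omega
    rw [Finset.card_insert_of_notMem hpP]
    calc Bd.card ≤ (n + 1) ^ P.card * κ * σ ^ (T.card + 1 + P.card) +
          n * ((n + 1) ^ P.card * κ * σ ^ (T.card + 1 + P.card)) := by omega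
      _ = _ := by ring

lemma colour_bound {m L n N : ℕ} (hL : 0 < L) (d : Fin m → ℝ) (hd : ∀ i, 0 < d i)
    (c : (Fin n → ℝ) → Fin N) (hc : ∀ i : Fin N, ¬ HasCopy (rect d) {x | c x = i}) :
    (2 * L ^ m) ^ n ≤ N * ((n + 1) ^ m * ((L + 1) ^ m) ^ n * (2 * L ^ m) ^ m) := by
  classical
  let V : (Fin n → Lab m L) → (Fin n → ℝ) := fun x i => labVal d (x i)
  have h1 : ∀ q : Fin N, ((Finset.univ : Finset (Fin n → Lab m L)).filter
      (fun x => c (V x) = q)).card ≤ (n + 1) ^ m * ((L + 1) ^ m) ^ n * (2 * L ^ m) ^ m := by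
    intro q
    set A := (Finset.univ : Finset (Fin n → Lab m L)).filter (fun x => c (V x) = q) with hA
    have hb := bad_card hL d hd A Finset.univ (∑ i, d i) (Finset.sum_nonneg fun i _ => (hd i).le)
      (fun i _ => Finset.single_le_sum (f := d) (fun i _ => (hd i).le) (Finset.mem_univ i)) ∅
    rw [Finset.filter_true_of_mem] at hb
    · simpa using hb
    · rintro x - ⟨g, gA, -, -, gD⟩
      refine hc q ⟨fun a => V (g a), fun a ha b hb => gD a ha b hb (by simp), ?_⟩
      rintro _ ⟨a, -, rfl⟩
      exact (Finset.mem_filter.1 (gA a)).2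
  have h2 := Finset.card_eq_sum_card_fiberwise (f := fun x => c (V x))
    (s := (Finset.univ : Finset (Fin n → Lab m L))) (t := Finset.univ)
    (fun _ _ => Finset.mem_coe.2 (Finset.mem_univ _))
  have h3 : (Finset.univ : Finset (Fin n → Lab m L)).card = (2 * L ^ m) ^ n := by
    simp [Fintype.card_prod]
  rw [← h3, h2]
  refine (Finset.sum_le_card_nsmul _ _ _ (fun q _ => h1 q)).trans ?_
  simp

lemma upper_mem {m : ℕ} (hm : 0 < m) (d : Fin m → ℝ) (hd : ∀ i, 0 < d i) (n : ℕ) :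
    ∃ c : (Fin n → ℝ) → Fin (2 ^ n), ∀ i, ¬ HasCopy (rect d) {x | c x = i} := by
  classical
  haveI : Nonempty (Fin m) := ⟨⟨0, hm⟩⟩
  obtain ⟨p, hp⟩ := Finite.exists_max d
  let e : (Fin n → Bool) ≃ Fin (2 ^ n) := Fintype.equivFinOfCardEq (by simp)
  refine ⟨fun x => e (fun i => decide (Even ⌊x i / d p⌋)), ?_⟩
  rintro q ⟨f, hf, hq⟩
  have h0 : (0 : Fin m → ℝ) ∈ rect d := fun i => Or.inl rfl
  have h1 : d ∈ rect d := fun i => Or.inr rfl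
  have hD : dist (f 0) (f d) = d p := by
    rw [hf _ h0 _ h1]
    apply le_antisymm
    · rw [dist_pi_le_iff (hd p).le]
      intro i
      rw [Real.dist_eq]
      simp only [Pi.zero_apply, zero_sub, abs_neg, abs_of_pos (hd i)]
      exact hp i
    · refine le_trans ?_ (dist_le_pi_dist _ _ p)
      rw [Real.dist_eq]
      simp [abs_of_pos (hd p)]
  have hi : ∃ i, dist (f 0 i) (f d i) = d p := by
    by_contra! hcon
    have : dist (f 0) (f d) < d p := by
      rw [dist_pi_lt_iff (hd p)]
      intro i
      exact lt_of_le_of_ne (hD ▸ dist_le_pi_dist _ _ i) (hcon i)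
    linarith
  obtain ⟨i, hi⟩ := hi
  have e0 : e (fun i => decide (Even ⌊f 0 i / d p⌋)) = q := hq ⟨0, h0, rfl⟩
  have e1 : e (fun i => decide (Even ⌊f d i / d p⌋)) = q := hq ⟨d, h1, rfl⟩
  have hee := congrFun (e.injective (e0.trans e1.symm)) i
  simp only [decide_eq_decide] at hee
  have hne := (hd p).ne'
  have key : ∀ u v : ℝ, u - v = d p → ¬ (Even ⌊u / d p⌋ ↔ Even ⌊v / d p⌋) := by
    intro u v huv
    have : u / d p = v / d p + 1 := by field_simp; linarith
    rw [this, Int.floor_add_one, Int.even_add_one]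
    tauto
  rw [Real.dist_eq] at hi
  rcases (abs_eq (hd p).le).1 hi with h | h
  · exact key _ _ h hee
  · exact key _ _ (by linarith) hee.symm

theorem chi_hyperrectangle (m : ℕ) (hm : 0 < m) (d : Fin m → ℝ) (hd : ∀ i, 0 < d i) :
    Tendsto
      (fun n : ℕ => (chrom {x : Fin m → ℝ | ∀ i, x i = 0 ∨ x i = d i} n : ℝ) ^ (1 / (n : ℝ)))
      atTop (nhds 2) := by
  change Tendsto (fun n : ℕ => (chrom (rect d) n : ℝ) ^ (1 / (n : ℝ))) atTop (nhds 2)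
  have hup : ∀ n, chrom (rect d) n ≤ 2 ^ n := fun n => Nat.sInf_le (upper_mem hm d hd n)
  have hlow : ∀ L n : ℕ, 0 < L → (2 * L ^ m) ^ n ≤
      chrom (rect d) n * ((n + 1) ^ m * ((L + 1) ^ m) ^ n * (2 * L ^ m) ^ m) := by
    intro L n hL
    obtain ⟨c, hc⟩ := Nat.sInf_mem (s := {N : ℕ | ∃ c : (Fin n → ℝ) → Fin N, ∀ i : Fin N,
      ¬ HasCopy (rect d) {x | c x = i}}) ⟨_, upper_mem hm d hd n⟩
    exact colour_bound hL d hd c hc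
  rw [tendsto_order]
  constructor
  · intro a ha
    -- pass to a positive bound
    obtain ⟨b, hab, hb2⟩ := exists_between (max_lt ha (by norm_num : (1:ℝ) < 2))
    have hb0 : 0 < b := lt_trans (by norm_num) (lt_of_le_of_lt (le_max_right a 1) hab)
    have hab' : a < b := lt_of_le_of_lt (le_max_left a 1) hab
    have hlim : Tendsto (fun L : ℕ => 2 * ((L : ℝ) / ((L : ℝ) + 1)) ^ m) atTop (nhds 2) := by
      have h := (tendsto_natCast_div_add_atTop (1 : ℝ)).pow m
      simpa using h.const_mul 2
    obtain ⟨L, hLb, hL⟩ := ((hlim.eventually (lt_mem_nhds hb2)).and (eventually_gt_atTop 0)).exists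
    set ρ : ℝ := 2 * ((L : ℝ) / ((L : ℝ) + 1)) ^ m with hρ
    have hρ0 : 0 < ρ := hb0.trans hLb
    set C : ℝ := 2 ^ m * (2 * (L : ℝ) ^ m) ^ m with hC
    have hsmall : Tendsto (fun n : ℕ => C * ((n : ℝ) ^ m * (b / ρ) ^ n)) atTop (nhds (C * 0)) := by
      refine (tendsto_pow_const_mul_const_pow_of_abs_lt_one m ?_).const_mul C
      rw [abs_of_pos (div_pos hb0 hρ0), div_lt_one hρ0]
      exact hLb
    rw [mul_zero] at hsmall
    filter_upwards [hsmall.eventually (gt_mem_nhds zero_lt_one), eventually_ge_atTop 1] with n hn hn1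
    have hl : ((2 * (L:ℝ) ^ m) ^ n) ≤
      chrom (rect d) n * (((n:ℝ) + 1) ^ m * (((L:ℝ) + 1) ^ m) ^ n * (2 * (L:ℝ) ^ m) ^ m) := by
      exact_mod_cast hlow L n hL
    have hκ : (0:ℝ) < (((L:ℝ) + 1) ^ m) ^ n := by positivity
    have hL' : (0:ℝ) < L := by exact_mod_cast hL
    have hρn : ρ ^ n * (((L:ℝ) + 1) ^ m) ^ n = (2 * (L:ℝ) ^ m) ^ n := by
      rw [← mul_pow, hρ, div_pow]
      congr 1
      field_simp
    have hl2 : ρ ^ n ≤ chrom (rect d) n * (((n:ℝ) + 1) ^ m * (2 * (L:ℝ) ^ m) ^ m) := by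
      rw [← hρn] at hl
      refine le_of_mul_le_mul_right (hl.trans (le_of_eq (by ring))) hκ
    have hn1' : (1:ℝ) ≤ n := by exact_mod_cast hn1
    have hl3 : ρ ^ n ≤ chrom (rect d) n * (C * (n:ℝ) ^ m) := by
      refine hl2.trans ?_
      have : ((n:ℝ) + 1) ^ m ≤ (2 * n) ^ m := by gcongr; linarith
      calc _ ≤ (chrom (rect d) n : ℝ) * ((2 * n) ^ m * (2 * (L:ℝ) ^ m) ^ m) := by gcongr
        _ = _ := by rw [hC, mul_pow]; ring
    have hCn : 0 < C * (n:ℝ) ^ m := by positivity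
    have hfin : b ^ n < chrom (rect d) n := by
      have h4 : C * (n:ℝ) ^ m * b ^ n < ρ ^ n := by
        rw [div_pow] at hn
        have hρp : 0 < ρ ^ n := by positivity
        have : C * ((n:ℝ) ^ m * (b ^ n / ρ ^ n)) = (C * (n:ℝ) ^ m * b ^ n) / ρ ^ n := by ring
        rw [this, div_lt_one hρp] at hn
        exact hn
      refine lt_of_mul_lt_mul_left (a := C * (n:ℝ) ^ m) ?_ hCn.le
      linarith [h4, hl3, mul_comm (chrom (rect d) n : ℝ) (C * (n:ℝ) ^ m)]
    refine hab'.trans ?_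
    have h5 : (b ^ n) ^ (1 / (n:ℝ)) = b := by
      rw [one_div]; exact Real.pow_rpow_inv_natCast hb0.le (by omega)
    calc b = (b ^ n) ^ (1 / (n:ℝ)) := h5.symm
      _ < _ := Real.rpow_lt_rpow (by positivity) hfin (by positivity)
  · intro a ha
    filter_upwards [eventually_ge_atTop 1] with n hn1
    refine lt_of_le_of_lt ?_ ha
    have h5 : ((2:ℝ) ^ n) ^ (1 / (n:ℝ)) = 2 := by
      rw [one_div]; exact Real.pow_rpow_inv_natCast (by norm_num) (by omega)
    calc _ ≤ ((2:ℝ) ^ n) ^ (1 / (n:ℝ)) :=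
          Real.rpow_le_rpow (by positivity) (by exact_mod_cast hup n) (by positivity)
      _ = 2 := h5
end

section
/- For every n ∈ ℕ there exists q_0 > 0 such that for every 0 < q ≤ q_0 one has χ(ℝ^n_∞, G(q)) = n+1: there exists a colouring of ℝ^n with n+1 colours such that no colour class contains an isometric copy of G(q), but for every colouring of ℝ^n with n colours some colour class contains an isometric copy of G(q). -/
open Set Filter

/-- `G(q) = {0, 1, 1+q, 1+q+q², …} ⊆ ℝ`. -/
def geomSet (q : ℝ) : Set ℝ :=
  Set.range (fun m : ℕ => ∑ i ∈ Finset.range m, q ^ i)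

/-- `x` lies in the face at distance `r i` below `w` in direction `d`. -/
def InFace {n : ℕ} (η : ℝ) (r : ℕ → ℝ) (x w : Fin n → ℝ) (d : Fin n) (i : ℕ) : Prop :=
  x d = w d - r i ∧ ∀ l, l ≠ d → |x l - w l| ≤ (1 - η) * r i

lemma faces_meet {n : ℕ} (q η : ℝ) (r : ℕ → ℝ) (hq : 0 < q) (hη : 0 < η)
    (h1 : 4 * ((n : ℝ) + 1) * q ≤ η) (h2 : 8 * ((n : ℝ) + 1) * η ≤ 1)
    (hr : ∀ i, 0 < r i) (hrq : ∀ i j, j < i → r i ≤ q * r j)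
    (ι : Fin n → (Fin n → ℝ) → ℕ) :
    ∀ (k : ℕ) (S : Finset (Fin n)), S.card = k → ∀ (w0 : Fin n → ℝ) (I : ℕ),
      (∀ w : Fin n → ℝ, (∀ j, j ∉ S → w j = w0 j) → (∀ l, |w l - w0 l| ≤ 2 * k * r I) →
        ∀ d ∈ S, I ≤ ι d w) →
      ∃ x : Fin n → ℝ, (∀ j, j ∉ S → x j = w0 j) ∧
        (∀ l ∈ S, -(1 + η) * r I ≤ x l - w0 l ∧ x l - w0 l ≤ 3 * η * k * r I) ∧
        ∀ d ∈ S, ∃ w, InFace η r x w d (ι d w) := by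
  have hn : (0 : ℝ) ≤ n := Nat.cast_nonneg n
  have hη1 : 8 * η ≤ 1 := by nlinarith
  have hq1 : 2 * q ≤ 1 := by nlinarith
  have hmono : ∀ i j, j ≤ i → r i ≤ r j := by
    intro i j hij
    rcases hij.eq_or_lt with h | h
    · rw [h]
    · have := hrq i j h
      have := hr j
      nlinarith
  intro k
  induction k with
  | zero =>
    intro S hS w0 I _
    have : S = ∅ := Finset.card_eq_zero.mp hS
    subst this
    exact ⟨w0, by simp, by simp, by simp⟩
  | succ k ih =>
    intro S hS w0 I hI
    have hk0 : (0 : ℝ) ≤ k := Nat.cast_nonneg k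
    have hkn : (k : ℝ) + 1 ≤ n := by
      have : S.card ≤ n := by simpa using S.card_le_univ
      rw [hS] at this
      exact_mod_cast this
    have hAq : 2 * (2 * (k : ℝ) + 1) * q ≤ η := by nlinarith
    have hkη : (3 * (k : ℝ) + 3) * η ≤ 1 := by nlinarith
    push_cast at hI
    let P : ℕ → Prop := fun i => ∃ (w : Fin n → ℝ) (d : Fin n), d ∈ S ∧ (∀ j, j ∉ S → w j = w0 j) ∧
      (∀ l, |w l - w0 l| ≤ 2 * (2 * (k : ℝ) + 1) * q * r i) ∧
      (∀ l, |w l - w0 l| ≤ 2 * ((k : ℝ) + 1) * r I) ∧ ι d w = i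
    have hP : ∃ i, P i := by
      obtain ⟨d, hd⟩ : S.Nonempty := Finset.card_pos.mp (by omega)
      refine ⟨ι d w0, w0, d, hd, fun _ _ => rfl, fun l => ?_, fun l => ?_, rfl⟩
      · have := hr (ι d w0)
        simp only [sub_self, abs_zero]; positivity
      · have := hr I
        simp only [sub_self, abs_zero]; positivity
    classical
    obtain ⟨i, ⟨w, d, hd, hw0, hw1, hw2, hi⟩, hmin⟩ :
        ∃ i, P i ∧ ∀ j, j < i → ¬ P j :=
      ⟨Nat.find hP, Nat.find_spec hP, fun j hj => Nat.find_min hP hj⟩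
    have hIi : I ≤ i := hi ▸ hI w hw0 hw2 d hd
    have hrI : r i ≤ r I := hmono _ _ hIi
    have ri := hr i
    have rI := hr I
    have hwη : ∀ l, |w l - w0 l| ≤ η * r i := fun l =>
      (hw1 l).trans (mul_le_mul_of_nonneg_right hAq ri.le)
    have hstab : ∀ w' : Fin n → ℝ, (∀ j, j ∉ S → w' j = w0 j) →
        (∀ l, |w' l - w l| ≤ (2 * (k : ℝ) + 1) * r i) → ∀ d' ∈ S, i ≤ ι d' w' := by
      intro w' hw' hw'' d' hd'
      by_contra hlt
      push Not at hlt
      apply hmin _ hlt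
      have hri' := hrq _ _ hlt
      refine ⟨w', d', hd', hw', fun l => ?_, fun l => ?_, rfl⟩
      · have e1 : |w' l - w0 l| ≤ |w' l - w l| + |w l - w0 l| := abs_sub_le _ _ _
        have e2 := hw'' l
        have e3 := hw1 l
        have e4 : 2 * (2 * (k : ℝ) + 1) * q * r i ≤ (2 * (k : ℝ) + 1) * r i := by
          have : 0 ≤ (2 * (k : ℝ) + 1) * r i := by positivity
          nlinarith
        have e5 : (2 * (k : ℝ) + 1) * r i ≤ (2 * (k : ℝ) + 1) * (q * r (ι d' w')) :=
          mul_le_mul_of_nonneg_left hri' (by positivity)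
        linarith
      · have e1 : |w' l - w0 l| ≤ |w' l - w l| + |w l - w0 l| := abs_sub_le _ _ _
        have e2 := hw'' l
        have e3 := hwη l
        have e4 : (2 * (k : ℝ) + 1) * r i ≤ (2 * (k : ℝ) + 1) * r I :=
          mul_le_mul_of_nonneg_left hrI (by positivity)
        nlinarith
    let w1 : Fin n → ℝ := fun l => if l = d then w d - r i else
      if l ∈ S then w l + 2 * η * r i else w l
    have w1d : w1 d = w d - r i := by simp [w1]
    have w1S : ∀ l, l ≠ d → l ∈ S → w1 l = w l + 2 * η * r i := by
      intro l h1 h2; simp [w1, h1, h2]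
    have w1n : ∀ l, l ∉ S → w1 l = w l := by
      intro l h2
      have : l ≠ d := fun h => h2 (h ▸ hd)
      simp [w1, this, h2]
    have hηr : 0 < η * r i := mul_pos hη ri
    have hηr1 : 8 * (η * r i) ≤ r i := by nlinarith
    obtain ⟨x, hx1, hx2, hx3⟩ := ih (S.erase d) (by rw [Finset.card_erase_of_mem hd, hS]; rfl) w1 i
      (by
        intro w' ha hb d' hd'
        apply hstab w' _ _ d' (Finset.mem_of_mem_erase hd')
        · intro j hj
          rw [ha j (fun h => hj (Finset.mem_of_mem_erase h)), w1n j hj, hw0 j hj]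
        · intro l
          have e1 : |w' l - w l| ≤ |w' l - w1 l| + |w1 l - w l| := abs_sub_le _ _ _
          have e2 := hb l
          have e3 : |w1 l - w l| ≤ r i := by
            by_cases hld : l = d
            · subst hld
              rw [w1d, abs_le]; constructor <;> linarith
            · by_cases hlS : l ∈ S
              · rw [w1S l hld hlS, abs_le]; constructor <;> linarith
              · rw [w1n l hlS]; simp [ri.le]
          linarith)
    have hxd : x d = w d - r i := by rw [hx1 d (by simp), w1d]
    have hxS : ∀ l, l ≠ d → l ∈ S → -(1 - η) * r i ≤ x l - w l ∧
        x l - w l ≤ (3 * k + 2) * η * r i := by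
      intro l h3 h4
      have := hx2 l (Finset.mem_erase.mpr ⟨h3, h4⟩)
      rw [w1S l h3 h4] at this
      constructor <;> linarith [this.1, this.2]
    have hxn : ∀ l, l ∉ S → x l = w l := by
      intro l h
      rw [hx1 l (fun h' => h (Finset.mem_of_mem_erase h')), w1n l h]
    have hup : (3 * (k : ℝ) + 3) * η * r i ≤ (3 * (k : ℝ) + 3) * η * r I :=
      mul_le_mul_of_nonneg_left hrI (by positivity)
    have hup1 : (3 * (k : ℝ) + 3) * η * r i ≤ r i := by nlinarith
    have hηI : η * r i ≤ η * r I := mul_le_mul_of_nonneg_left hrI hη.le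
    refine ⟨x, fun j hj => by rw [hxn j hj, hw0 j hj], fun l hl => ?_, fun d' hd' => ?_⟩
    · have e1 := abs_le.mp (hwη l)
      push_cast
      by_cases hld : l = d
      · subst hld
        have : 0 ≤ 3 * η * ((k : ℝ) + 1) * r I := by positivity
        constructor <;> linarith [e1.1, e1.2]
      · have e2 := hxS l hld hl
        constructor <;> linarith [e1.1, e1.2, e2.1, e2.2]
    · by_cases hdd : d' = d
      · subst hdd
        refine ⟨w, ?_⟩
        rw [hi]
        refine ⟨hxd, fun l hl => ?_⟩
        by_cases hlS : l ∈ S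
        · have e2 := hxS l hl hlS
          rw [abs_le]
          constructor <;> linarith [e2.1, e2.2]
        · rw [hxn l hlS]
          simp only [sub_self, abs_zero]; linarith
      · exact hx3 d' (Finset.mem_erase.mpr ⟨hdd, hd'⟩)

/-- Partial sums of the geometric series. -/
noncomputable def gsum (q : ℝ) (m : ℕ) : ℝ := ∑ i ∈ Finset.range m, q ^ i

lemma gsum_succ (q : ℝ) (m : ℕ) : gsum q (m + 1) = gsum q m + q ^ m := by
  simp [gsum, Finset.sum_range_succ]

lemma gsum_strictMono (q : ℝ) (hq : 0 < q) : StrictMono (gsum q) := by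
  apply strictMono_nat_of_lt_succ
  intro m
  rw [gsum_succ]
  have : 0 < q ^ m := by positivity
  linarith

lemma gsum_eq (q : ℝ) (hq1 : q < 1) (m : ℕ) : gsum q m = (1 - q)⁻¹ - q ^ m * (1 - q)⁻¹ := by
  have : (1 - q) ≠ 0 := by linarith
  induction m with
  | zero => simp [gsum]
  | succ m ih => rw [gsum_succ, ih]; field_simp; ring

lemma lower_bound (n : ℕ) (q : ℝ) (hq : 0 < q) (hq0 : q ≤ 1 / (64 * ((n : ℝ) + 1) ^ 2))
    (c : (Fin n → ℝ) → Fin n) : ∃ i : Fin n, HasCopy (geomSet q) {x | c x = i} := by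
  have hn : (0 : ℝ) ≤ n := Nat.cast_nonneg n
  have hN : (0 : ℝ) < (n : ℝ) + 1 := by linarith
  set η : ℝ := 1 / (8 * ((n : ℝ) + 1)) with hηdef
  have hη : 0 < η := by positivity
  have h2 : 8 * ((n : ℝ) + 1) * η ≤ 1 := by
    rw [hηdef]; field_simp; norm_num
  have h1 : 4 * ((n : ℝ) + 1) * q ≤ η := by
    calc 4 * ((n : ℝ) + 1) * q ≤ 4 * ((n : ℝ) + 1) * (1 / (64 * ((n : ℝ) + 1) ^ 2)) := by gcongr
      _ = 1 / (16 * ((n : ℝ) + 1)) := by field_simp; norm_num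
      _ ≤ η := by rw [hηdef]; gcongr; norm_num
  have hη1 : 8 * η ≤ 1 := by nlinarith
  have hqη : 2 * q ≤ η := by nlinarith
  have hq1 : q < 1 := by linarith
  let R : ℝ := (1 - q)⁻¹
  have hR : 0 < R := inv_pos.mpr (by linarith)
  let r : ℕ → ℝ := fun i => q ^ i * R
  have hr : ∀ i, 0 < r i := fun i => by positivity
  have hrq : ∀ i j, j < i → r i ≤ q * r j := by
    intro i j hij
    have : q ^ i ≤ q ^ (j + 1) := pow_le_pow_of_le_one hq.le hq1.le hij
    calc r i = q ^ i * R := rfl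
      _ ≤ q ^ (j + 1) * R := by gcongr
      _ = q * r j := by simp only [r]; ring
  by_contra hno
  push Not at hno
  have key : ∀ (d : Fin n) (w : Fin n → ℝ), ∃ i, ∀ x, InFace η r x w d i → c x ≠ d := by
    intro d w
    by_contra hcon
    push Not at hcon
    choose x hx hxc using hcon
    apply hno d
    have hinj : Function.Injective (gsum q) := (gsum_strictMono q hq).injective
    refine ⟨fun y => x (Function.invFun (gsum q) y), ?_, ?_⟩
    · have main : ∀ a b : ℕ, a < b → dist (x a) (x b) = dist (gsum q a) (gsum q b) := by
        intro a b hab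
        have hd : dist (x a d) (x b d) = dist (gsum q a) (gsum q b) := by
          rw [(hx a).1, (hx b).1, gsum_eq q hq1, gsum_eq q hq1, Real.dist_eq, Real.dist_eq]
          congr 1
          simp only [r, R]; ring
        apply le_antisymm
        · rw [dist_pi_le_iff dist_nonneg]
          intro l
          by_cases hl : l = d
          · rw [hl, hd]
          · have e1 := (hx a).2 l hl
            have e2 := (hx b).2 l hl
            have e3 : dist (gsum q a) (gsum q b) = r a - r b := by
              rw [dist_comm, Real.dist_eq, abs_of_pos (sub_pos.mpr (gsum_strictMono q hq hab)),
                gsum_eq q hq1, gsum_eq q hq1]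
              simp only [r, R]; ring
            rw [e3, Real.dist_eq]
            have e4 : |x a l - x b l| ≤ |x a l - w l| + |w l - x b l| := abs_sub_le _ _ _
            rw [abs_sub_comm (w l)] at e4
            have e5 := hrq b a hab
            have := hr a
            have := hr b
            nlinarith
        · rw [← hd]; exact dist_le_pi_dist _ _ _
      rintro _ ⟨a, rfl⟩ _ ⟨b, rfl⟩
      change dist (x (Function.invFun (gsum q) (gsum q a))) (x (Function.invFun (gsum q) (gsum q b)))
        = dist (gsum q a) (gsum q b)
      rw [Function.leftInverse_invFun hinj a, Function.leftInverse_invFun hinj b]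
      rcases lt_trichotomy a b with h | h | h
      · exact main a b h
      · rw [h, dist_self, dist_self]
      · rw [dist_comm, main b a h, dist_comm]
    · rintro _ ⟨_, ⟨a, rfl⟩, rfl⟩
      change c (x (Function.invFun (gsum q) (gsum q a))) = d
      rw [Function.leftInverse_invFun hinj a]
      exact hxc a
  choose ι hι using key
  obtain ⟨x, -, -, hx⟩ := faces_meet q η r hq hη h1 h2 hr hrq ι _ Finset.univ rfl 0 0
    (fun _ _ _ _ _ => Nat.zero_le _)
  obtain ⟨w, hw⟩ := hx (c x) (Finset.mem_univ _)
  exact hι _ _ _ hw rfl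

lemma residues (N : ℕ) (h : ℕ → ℤ) (K : ℕ) (hN : 0 < N)
    (hstep : ∀ k, k < K → h (k + 1) ≤ h k + 1) (hK : h 0 + N ≤ h K) (c : ℤ) :
    ∃ k, k ≤ K ∧ h k ≡ c [ZMOD N] := by
  classical
  have hNz : (0 : ℤ) < N := by exact_mod_cast hN
  set t : ℤ := h 0 + (c - h 0) % N with ht
  have ht0 : h 0 ≤ t := by have := Int.emod_nonneg (c - h 0) hNz.ne'; omega
  have ht1 : t < h 0 + N := by have := Int.emod_lt_of_pos (c - h 0) hNz; omega
  have htc : t ≡ c [ZMOD N] := by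
    have : (c - h 0) % N ≡ c - h 0 [ZMOD N] := Int.mod_modEq _ _
    simpa using this.add_left (h 0)
  have hex : ∃ k, t ≤ h k := ⟨K, by omega⟩
  have hle : Nat.find hex ≤ K := Nat.find_min' hex (by omega)
  refine ⟨Nat.find hex, hle, ?_⟩
  have hs := Nat.find_spec hex
  have : h (Nat.find hex) = t := by
    rcases hk : Nat.find hex with _ | k
    · rw [hk] at hs; omega
    · have hm := Nat.find_min hex (m := k) (by omega)
      have := hstep k (by omega)
      rw [hk] at hs
      omega
  rw [this]; exact htc

lemma exists_scale (N : ℕ) (hN : 0 < N) (q : ℝ) (hq : 0 < q) (hqN : 2 * ((N : ℝ) + 1) * q ≤ 1)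
    (K : ℕ) : ∃ a : ℝ, ∀ t : ℝ, a ≤ t → t ≤ a + 1 / 2 → ∀ i, i < K →
      ∃ m : ℤ, 1 / 2 ≤ t * q ^ i - N * m ∧ t * q ^ i - N * m ≤ 1 := by
  have hN' : (0 : ℝ) < N := by exact_mod_cast hN
  induction K with
  | zero => exact ⟨0, fun _ _ _ i hi => absurd hi (Nat.not_lt_zero i)⟩
  | succ K ih =>
    obtain ⟨a, ha⟩ := ih
    set m : ℤ := ⌈a / q / N⌉ with hm
    have m1 : a / q ≤ N * m := by
      have := Int.le_ceil (a / q / N)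
      rw [div_le_iff₀ hN'] at this
      linarith
    have m2 : N * m ≤ a / q + N := by
      have := (Int.ceil_lt_add_one (a / q / N)).le
      have h3 : (N : ℝ) * m ≤ N * (a / q / N + 1) := mul_le_mul_of_nonneg_left this hN'.le
      have h4 : (N : ℝ) * (a / q / N + 1) = a / q + N := by field_simp
      linarith
    have haq : a / q * q = a := by field_simp
    refine ⟨N * m + 1 / 2, fun t ht1 ht2 i hi => ?_⟩
    rcases i with _ | i
    · refine ⟨m, ?_, ?_⟩ <;> simp only [pow_zero, mul_one] <;> linarith
    · have e1 : a ≤ t * q := by rw [← haq]; gcongr; linarith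
      have e2 : t * q ≤ a + 1 / 2 := by
        have : t * q ≤ (a / q + N + 1) * q := by gcongr; linarith
        nlinarith
      obtain ⟨m', hm'⟩ := ha (t * q) e1 e2 i (by omega)
      refine ⟨m', ?_⟩
      rw [pow_succ']
      rwa [← mul_assoc]

lemma polychromatic (N : ℕ) (hN : 0 < N) (q : ℝ) (hq : 0 < q)
    (hqN : 2 * ((N : ℝ) + 1) * q ≤ 1) :
    ∃ T : ℝ → ℤ, ∀ (c : ℤ) (u : ℝ), 
      (∃ k, k ≤ 2 * N ∧ T (u + gsum q k) ≡ c [ZMOD N]) ∧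
      (∃ k, k ≤ 2 * N ∧ T (u - gsum q k) ≡ c [ZMOD N]) := by
  obtain ⟨a, ha⟩ := exists_scale N hN q hq hqN (2 * N)
  have hm := ha a le_rfl (by linarith)
  have hm' : ∀ i, ∃ m : ℤ, i < 2 * N → 1 / 2 ≤ a * q ^ i - N * m ∧ a * q ^ i - N * m ≤ 1 := by
    intro i
    by_cases hi : i < 2 * N
    · obtain ⟨m, h⟩ := hm i hi
      exact ⟨m, fun _ => h⟩
    · exact ⟨0, fun h => absurd h hi⟩
  choose m hm using hm'
  let M : ℕ → ℤ := fun k => ∑ i ∈ Finset.range k, m i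
  let s : ℕ → ℝ := fun k => a * gsum q k - N * (M k : ℝ)
  have s0 : s 0 = 0 := by simp [s, M, gsum]
  have ss : ∀ k, s (k + 1) = s k + (a * q ^ k - N * m k) := by
    intro k
    simp only [s, M, gsum_succ, Finset.sum_range_succ]
    push_cast; ring
  have slow : ∀ k, k ≤ 2 * N → (k : ℝ) / 2 ≤ s k := by
    intro k
    induction k with
    | zero => intro _; simp [s0]
    | succ k ih =>
      intro hk
      have h1 := ih (by omega)
      have h2 := (hm k (by omega)).1
      rw [ss]; push_cast; linarith
  have sN : (N : ℝ) ≤ s (2 * N) := by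
    have := slow (2 * N) le_rfl
    push_cast at this; linarith
  refine ⟨fun x => ⌊a * x⌋, fun c u => ⟨?_, ?_⟩⟩
  · obtain ⟨k, hk, hc⟩ := residues N (fun k => ⌊a * u + s k⌋) (2 * N) hN
      (by
        intro k hk
        have := (hm k hk).2
        rw [← Int.floor_add_one]
        apply Int.floor_le_floor
        rw [ss]; linarith)
      (by
        rw [← Int.floor_add_natCast]
        apply Int.floor_le_floor
        rw [s0]; linarith) c
    refine ⟨k, hk, ?_⟩
    have e : a * (u + gsum q k) = a * u + s k + ((N * M k : ℤ) : ℝ) := by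
      simp only [s]; push_cast; ring
    simp only [e, Int.floor_add_intCast]
    refine Int.ModEq.trans ?_ hc
    simp [Int.ModEq]
  · obtain ⟨k, hk, hc⟩ := residues N (fun k => -⌊a * u - s k⌋) (2 * N) hN
      (by
        intro k hk
        have := (hm k hk).2
        have h : ⌊a * u - s k - 1⌋ ≤ ⌊a * u - s (k + 1)⌋ := by
          apply Int.floor_le_floor
          rw [ss]; linarith
        rw [Int.floor_sub_one] at h
        show -_ ≤ -_ + 1
        linarith)
      (by
        have h : ⌊a * u - s (2 * N)⌋ ≤ ⌊a * u - s 0 - (N : ℕ)⌋ := by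
          apply Int.floor_le_floor
          rw [s0]; linarith
        rw [Int.floor_sub_natCast] at h
        show -_ + _ ≤ -_
        linarith) (-c)
    refine ⟨k, hk, ?_⟩
    have e : a * (u - gsum q k) = a * u - s k - ((N * M k : ℤ) : ℝ) := by
      simp only [s]; push_cast; ring
    simp only [e, Int.floor_sub_intCast]
    have hc' := hc.neg
    simp only [neg_neg] at hc'
    refine Int.ModEq.trans ?_ hc'
    simp [Int.ModEq]

lemma upper_bound (n : ℕ) (q : ℝ) (hq : 0 < q) (hqN : 2 * (((n + 1 : ℕ) : ℝ) + 1) * q ≤ 1) :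
    ∃ c : (Fin n → ℝ) → Fin (n + 1), ∀ i : Fin (n + 1),
          ¬ HasCopy (geomSet q) {x | c x = i} := by
  obtain ⟨T, hT⟩ := polychromatic (n + 1) (Nat.succ_pos n) q hq hqN
  have hc : ∀ x : Fin n → ℝ, ∃ i : Fin (n + 1), ∀ d, ¬ T (x d) ≡ (i : ℕ) [ZMOD (n + 1 : ℕ)] := by
    intro x
    by_contra hcon
    push Not at hcon
    choose g hg using hcon
    have hinj : Function.Injective g := by
      intro i j hij
      have h1 := hg i
      rw [hij] at h1
      have h2 := h1.symm.trans (hg j)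
      rw [Int.natCast_modEq_iff] at h2
      exact Fin.ext (Nat.ModEq.eq_of_lt_of_lt h2 i.2 j.2)
    have := Fintype.card_le_of_injective g hinj
    simp at this
  choose c hc using hc
  refine ⟨c, fun i => ?_⟩
  rintro ⟨f, hf, hsub⟩
  have hmem : ∀ k, gsum q k ∈ geomSet q := fun k => ⟨k, rfl⟩
  have hcol : ∀ k, c (f (gsum q k)) = i := fun k => hsub ⟨_, hmem k, rfl⟩
  have hmono := gsum_strictMono q hq
  have g0 : gsum q 0 = 0 := by simp [gsum]
  set K := 2 * (n + 1) with hK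
  have hGK : 0 < gsum q K := by rw [← g0]; exact hmono (by omega)
  have hdK : dist (f (gsum q 0)) (f (gsum q K)) = gsum q K := by
    rw [hf _ (hmem 0) _ (hmem K), g0, Real.dist_eq, zero_sub, abs_neg, abs_of_pos hGK]
  obtain ⟨d, hd⟩ : ∃ d, gsum q K ≤ dist (f (gsum q 0) d) (f (gsum q K) d) := by
    by_contra hcon
    push Not at hcon
    have := (dist_pi_lt_iff hGK).mpr hcon
    linarith
  have hb1 : ∀ k, |f (gsum q 0) d - f (gsum q k) d| ≤ gsum q k := by
    intro k
    have h1 := dist_le_pi_dist (f (gsum q 0)) (f (gsum q k)) d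
    have hk : 0 ≤ gsum q k := by rw [← g0]; exact hmono.monotone (Nat.zero_le k)
    rw [hf _ (hmem 0) _ (hmem k), Real.dist_eq, dist_comm, Real.dist_eq, abs_of_nonneg (a := gsum q k - gsum q 0) (by rw [g0]; linarith)] at h1
    linarith
  have hb2 : ∀ k, k ≤ K → |f (gsum q k) d - f (gsum q K) d| ≤ gsum q K - gsum q k := by
    intro k hk
    have h1 := dist_le_pi_dist (f (gsum q k)) (f (gsum q K)) d
    rwa [hf _ (hmem k) _ (hmem K), Real.dist_eq, Real.dist_eq, abs_sub_comm (gsum q k),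
      abs_of_nonneg (sub_nonneg.mpr (hmono.monotone hk))] at h1
  rw [Real.dist_eq] at hd
  rcases le_total 0 (f (gsum q 0) d - f (gsum q K) d) with h | h
  · rw [abs_of_nonneg h] at hd
    obtain ⟨k, hk, hkc⟩ := (hT (i : ℕ) (f (gsum q 0) d)).2
    have h1 := abs_le.mp (hb1 k)
    have h2 := abs_le.mp (hb2 k hk)
    have e : f (gsum q k) d = f (gsum q 0) d - gsum q k := by linarith [h1.1, h1.2, h2.1, h2.2]
    rw [← e] at hkc
    have := hc (f (gsum q k)) d
    rw [hcol k] at this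
    exact this hkc
  · rw [abs_of_nonpos h] at hd
    obtain ⟨k, hk, hkc⟩ := (hT (i : ℕ) (f (gsum q 0) d)).1
    have h1 := abs_le.mp (hb1 k)
    have h2 := abs_le.mp (hb2 k hk)
    have e : f (gsum q k) d = f (gsum q 0) d + gsum q k := by linarith [h1.1, h1.2, h2.1, h2.2]
    rw [← e] at hkc
    have := hc (f (gsum q k)) d
    rw [hcol k] at this
    exact this hkc

/-- For every `n` there is `q₀ > 0` such that for all `0 < q ≤ q₀` one has
`χ(ℝ^n_∞, G(q)) = n+1`: some `(n+1)`-colouring of `ℝ^n` has no monochromatic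
isometric copy of `G(q)`, while every `n`-colouring has one. -/
theorem chi_geom_eq (n : ℕ) :
    ∃ q0 : ℝ, 0 < q0 ∧ ∀ q : ℝ, 0 < q → q ≤ q0 →
      (∃ c : (Fin n → ℝ) → Fin (n + 1), ∀ i : Fin (n + 1),
          ¬ HasCopy (geomSet q) {x | c x = i}) ∧
      (∀ c : (Fin n → ℝ) → Fin n, ∃ i : Fin n, HasCopy (geomSet q) {x | c x = i}) := by
  have hn : (0 : ℝ) ≤ n := Nat.cast_nonneg n
  refine ⟨1 / (64 * ((n : ℝ) + 1) ^ 2), by positivity, fun q hq hq0 =>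
    ⟨upper_bound n q hq ?_, lower_bound n q hq hq0⟩⟩
  rw [le_div_iff₀ (by positivity)] at hq0
  push_cast
  nlinarith [mul_nonneg hq.le hn, mul_nonneg hq.le (mul_nonneg hn hn)]
end
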